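/- arXiv:1210.4586 — 3 statements merged into one kernel-verified Lean document; each statement's English description precedes it below -/
import Mathlib

section
/- Let n ≥ 1, c_u ∈ (0,1), C_u ∈ (1,∞), and let U ⊊ ℝⁿ be an unbounded (c_u,C_u)-uniform domain with nonempty boundary. Let h : closure(U) → ℝ be continuous, positive and harmonic on U, and identically 0 on ∂U. Then there exists a constant P ∈ (0,∞), depending only on n, c_u and C_u, such that for every x ∈ U, every r > 0, and every continuously differentiable function f : U → ℝ with ∫_{B_U(x,r)} |∇f|² h² dλ < ∞, one has ∫_{B_U(x,r)} |f − f_B|² h² dλ ≤ P · r² · ∫_{B_U(x,r)} |∇f|² h² dλ, where B_U(x,r) = {y ∈ U : d_U(x,y) < r}, λ is Lebesgue measure, and f_B = (∫_{B_U(x,r)} f h² dλ)/(∫_{B_U(x,r)} h² dλ) is the h²λ-weighted mean of f over B_U(x,r). -/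
open Set Metric MeasureTheory ENNReal

noncomputable section

abbrev En (n : ℕ) := EuclideanSpace ℝ (Fin n)

/-- The length of the curve `γ : [0,1] → X`, defined as the supremum of sums
`∑ d(γ(t_i), γ(t_{i-1}))` over partitions `0 ≤ t₀ < … < t_k ≤ 1`. -/
def curveLength {X : Type*} [PseudoEMetricSpace X] (γ : ℝ → X) : ℝ≥0∞ :=
  eVariationOn γ (Set.Icc 0 1)

/-- `γ` is a continuous curve in `Ω` from `x` to `y`. -/
def IsCurveIn {X : Type*} [PseudoEMetricSpace X] (Ω : Set X) (x y : X) (γ : ℝ → X) : Prop :=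
  ContinuousOn γ (Set.Icc 0 1) ∧ Set.MapsTo γ (Set.Icc 0 1) Ω ∧ γ 0 = x ∧ γ 1 = y

/-- The inner (pseudo)metric of `Ω`: the infimum of lengths of continuous curves
joining `x` to `y` inside `Ω`. -/
def innerDist {X : Type*} [PseudoEMetricSpace X] (Ω : Set X) (x y : X) : ℝ≥0∞ :=
  ⨅ (γ : ℝ → X) (_ : IsCurveIn Ω x y γ), curveLength γ

/-- `U` is a `(c,C)`-uniform domain in `ℝⁿ`. -/
def IsUniformDomain {n : ℕ} (c C : ℝ) (U : Set (En n)) : Prop :=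
  IsOpen U ∧ IsConnected U ∧
    ∀ x ∈ U, ∀ y ∈ U, ∃ γ : ℝ → En n, IsCurveIn U x y γ ∧
      curveLength γ ≤ ENNReal.ofReal (C * dist x y) ∧
      ∀ t ∈ Set.Icc (0:ℝ) 1,
        c * min (dist x (γ t)) (dist (γ t) y) ≤ Metric.infDist (γ t) (frontier U)

/-- The Laplacian `∑ ∂²f/∂xᵢ²` of `f : ℝⁿ → ℝ`. -/
def lap {n : ℕ} (f : En n → ℝ) (x : En n) : ℝ :=
  ∑ i : Fin n,
    fderiv ℝ (fun y => fderiv ℝ f y (EuclideanSpace.single i 1)) x (EuclideanSpace.single i 1)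

/-- `f` is harmonic on the open set `V`: twice continuously differentiable with
vanishing Laplacian. -/
def IsHarmonicOn {n : ℕ} (f : En n → ℝ) (V : Set (En n)) : Prop :=
  ContDiffOn ℝ 2 f V ∧ ∀ x ∈ V, lap f x = 0

/-!
Let `a` be the average of `f` over a fixed corkscrew ball in `B_U(x, r)`. Every `y ∈ B_U(x, r)` is
approached by corkscrew balls whose distance to `y` is at most comparable to geometrically
decreasing scales `τ_j ≤ r`, consecutive ones being linked inside the domain by chains of boundedly
many balls. Telescoping the averages of `f` bounds `|f y - a|` by a multiple of `∑ τ_j * m_j`, where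
`m_j` is the integral of `‖∇f‖`, divided by `τ_j ^ n`, over the `z ∈ B_U(x, r)` with
`|y - z| ≤ 3 * τ_j` and `dist(z, ∂U) ≥ κ * τ_j`. For such pairs the Carleson estimate gives
`h y ≤ M * h z`, so the weight can be moved from `y` to `z`. Cauchy-Schwarz and Fubini then bound
each `m_j` in `L²(h² λ)`, and the geometric series sums to a multiple of `r`. Finally
`|f_B - a|²` is at most the weighted average of `|f - a|²`, so `a` may be replaced by `f_B`.

For the Carleson estimate, maximise `h y * (D - |y - z|) ^ γ` over a ball of radius `D` about `z`.
Near a maximum point `y` the function `h` exceeds `h y` only slightly, while Harnack chains bound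
it on a corkscrew ball next to `y` by `h z` times a power of the scale. Since `(h - K)₊ ^ 3`,
extended by zero, has the sub-mean value property, `h` cannot stay below `h y / 2` on that ball.
This bounds `h y` in terms of `h z`, and the factor `(D - |y - z|) ^ γ` absorbs the power of the
scale.
-/

section InnerMetric

/-- The open ball of radius `r` about `x` for the inner metric of `U`, the `B_U(x, r)` of the
theorem. -/
def innerBall {X : Type*} [PseudoEMetricSpace X] (U : Set X) (x : X) (r : ℝ) : Set X :=
  {y | y ∈ U ∧ innerDist U x y < ENNReal.ofReal r}

variable {X : Type*} [PseudoEMetricSpace X] {U : Set X} {x y : X} {γ : ℝ → X}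

lemma innerDist_le_curveLength (hγ : IsCurveIn U x y γ) : innerDist U x y ≤ curveLength γ :=
  iInf₂_le γ hγ

lemma innerDist_le_eVariationOn_comp (hγ : IsCurveIn U x y γ) {φ : ℝ → ℝ} (hφ : Continuous φ)
    (hmono : MonotoneOn φ (Icc 0 1) ∨ AntitoneOn φ (Icc 0 1)) {s : Set ℝ}
    (hmaps : MapsTo φ (Icc 0 1) s) (hs : s ⊆ Icc 0 1) :
    innerDist U (γ (φ 0)) (γ (φ 1)) ≤ eVariationOn γ s := by
  have hcurve : IsCurveIn U (γ (φ 0)) (γ (φ 1)) (γ ∘ φ) :=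
    ⟨(hγ.1.mono hs).comp hφ.continuousOn hmaps, fun t ht => hγ.2.1 (hs (hmaps ht)), rfl, rfl⟩
  refine (innerDist_le_curveLength hcurve).trans ?_
  rcases hmono with hmono | hanti
  · exact eVariationOn.comp_le_of_monotoneOn _ _ hmono hmaps
  · exact eVariationOn.comp_le_of_antitoneOn _ _ hanti hmaps

lemma innerDist_le_eVariationOn_Icc (hγ : IsCurveIn U x y γ) {u v : ℝ} (hu : 0 ≤ u)
    (huv : u ≤ v) (hv : v ≤ 1) : innerDist U (γ u) (γ v) ≤ eVariationOn γ (Icc u v) := by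
  have hmono : Monotone fun s : ℝ => u + s * (v - u) := fun a b hab => by
    have := mul_le_mul_of_nonneg_right hab (sub_nonneg.2 huv)
    simpa only [add_le_add_iff_left] using this
  have hmaps : MapsTo (fun s : ℝ => u + s * (v - u)) (Icc 0 1) (Icc u v) := fun s hs => by
    constructor <;> nlinarith [hs.1, hs.2]
  simpa using innerDist_le_eVariationOn_comp hγ (by fun_prop) (.inl (hmono.monotoneOn _)) hmaps
    (Icc_subset_Icc hu hv)

lemma edist_le_innerDist (U : Set X) (x y : X) : edist x y ≤ innerDist U x y := by
  refine le_iInf₂ fun γ hγ => ?_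
  have := eVariationOn.edist_le γ (s := Icc 0 1) (x := 0) (y := 1) (by simp) (by simp)
  rwa [hγ.2.2.1, hγ.2.2.2] at this

lemma innerDist_comm (U : Set X) (x y : X) : innerDist U x y = innerDist U y x := by
  suffices h : ∀ x y, innerDist U x y ≤ innerDist U y x from le_antisymm (h x y) (h y x)
  refine fun x y => le_iInf₂ fun γ hγ => ?_
  have := innerDist_le_eVariationOn_comp hγ (φ := fun t => 1 - t) (by fun_prop)
    (.inr fun a _ b _ hab => by linarith) (s := Icc 0 1)
    (fun t ht => ⟨by linarith [ht.2], by linarith [ht.1]⟩) subset_rfl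
  rwa [sub_zero, sub_self, hγ.2.2.1, hγ.2.2.2] at this

lemma innerDist_triangle (U : Set X) (x y z : X) :
    innerDist U x z ≤ innerDist U x y + innerDist U y z := by
  conv_rhs => unfold innerDist
  simp only [ENNReal.iInf_add, ENNReal.add_iInf]
  refine le_iInf₂ fun γ₂ h₂ => le_iInf₂ fun γ₁ h₁ => ?_
  let γ : ℝ → X := fun t => if t ≤ 1 / 2 then γ₁ (2 * t) else γ₂ (2 * t - 1)
  have eq₁ : EqOn γ (γ₁ ∘ fun t => 2 * t) (Icc 0 (1 / 2)) := fun t ht => by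
    simp only [γ, if_pos ht.2, Function.comp]
  have eq₂ : EqOn γ (γ₂ ∘ fun t => 2 * t - 1) (Icc (1 / 2) 1) := fun t ht => by
    rcases eq_or_lt_of_le ht.1 with rfl | h
    · simp [γ, h₁.2.2.2, h₂.2.2.1]
    · simp only [γ, if_neg (not_le.2 h), Function.comp]
  have maps₁ : MapsTo (fun t : ℝ => 2 * t) (Icc 0 (1 / 2)) (Icc 0 1) := fun t ht => by
    constructor <;> linarith [ht.1, ht.2]
  have maps₂ : MapsTo (fun t : ℝ => 2 * t - 1) (Icc (1 / 2) 1) (Icc 0 1) := fun t ht => by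
    constructor <;> linarith [ht.1, ht.2]
  have hIcc : Icc (0 : ℝ) 1 = Icc 0 (1 / 2) ∪ Icc (1 / 2) 1 := by
    rw [Icc_union_Icc_eq_Icc] <;> norm_num
  have cont₁ : ContinuousOn γ (Icc 0 (1 / 2)) := (h₁.1.comp (by fun_prop) maps₁).congr eq₁
  have cont₂ : ContinuousOn γ (Icc (1 / 2) 1) := (h₂.1.comp (by fun_prop) maps₂).congr eq₂
  have hγ : IsCurveIn U x z γ := by
    refine ⟨?_, ?_, ?_, ?_⟩
    · rw [hIcc]
      exact cont₁.union_of_isClosed cont₂ isClosed_Icc isClosed_Icc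
    · rw [hIcc]
      rintro t (ht | ht)
      · rw [eq₁ ht]; exact h₁.2.1 (maps₁ ht)
      · rw [eq₂ ht]; exact h₂.2.1 (maps₂ ht)
    · rw [eq₁ (by norm_num)]; simpa using h₁.2.2.1
    · rw [eq₂ (by norm_num)]; norm_num; exact h₂.2.2.2
  calc innerDist U x z ≤ eVariationOn γ (Icc 0 1) := innerDist_le_curveLength hγ
    _ = eVariationOn γ (Icc 0 (1 / 2)) + eVariationOn γ (Icc (1 / 2) 1) := by
        simpa using (eVariationOn.Icc_add_Icc γ (s := univ) (a := 0) (b := 1 / 2) (c := 1)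
          (by norm_num) (by norm_num) (mem_univ _)).symm
    _ ≤ curveLength γ₁ + curveLength γ₂ := by
        rw [eVariationOn.congr eq₁, eVariationOn.congr eq₂]
        exact add_le_add
          (eVariationOn.comp_le_of_monotoneOn _ _ (fun a _ b _ h => by linarith) maps₁)
          (eVariationOn.comp_le_of_monotoneOn _ _ (fun a _ b _ h => by linarith) maps₂)

lemma continuousOn_variationOnFromTo {f : ℝ → X} {s : Set ℝ} (hf : BoundedVariationOn f s)
    (hc : ContinuousOn f s) {a : ℝ} (ha : a ∈ s) :
    ContinuousOn (variationOnFromTo f s a) s := by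
  intro t ht
  have hright := hf.tendsto_eVariationOn_Icc_zero_right t ((hc t ht).mono inter_subset_left)
  have hleft := hf.tendsto_eVariationOn_Icc_zero_left ((hc t ht).mono inter_subset_left)
  have hsum := ((ENNReal.tendsto_toReal zero_ne_top).comp hright).add
    ((ENNReal.tendsto_toReal zero_ne_top).comp hleft)
  rw [toReal_zero, add_zero] at hsum
  have hvar : Filter.Tendsto (variationOnFromTo f s t) (nhdsWithin t s) (nhds 0) := by
    refine squeeze_zero_norm (fun y => ?_) hsum
    rcases le_total t y with h | h
    · rw [variationOnFromTo.eq_of_le _ _ h, Real.norm_of_nonneg toReal_nonneg]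
      exact le_add_of_nonneg_right toReal_nonneg
    · rw [variationOnFromTo.eq_of_ge _ _ h, norm_neg, Real.norm_of_nonneg toReal_nonneg]
      exact le_add_of_nonneg_left toReal_nonneg
  have hadd := hvar.const_add (variationOnFromTo f s a t)
  rw [add_zero] at hadd
  exact hadd.congr' (eventually_nhdsWithin_of_forall fun y hy =>
    variationOnFromTo.add hf.locallyBoundedVariationOn ha ht hy)

lemma IsCurveIn.innerDist_le_abs_variationOnFromTo_sub (hγ : IsCurveIn U x y γ)
    (hbv : BoundedVariationOn γ (Icc 0 1)) {u v : ℝ} (hu : u ∈ Icc (0 : ℝ) 1)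
    (hv : v ∈ Icc (0 : ℝ) 1) :
    innerDist U (γ u) (γ v) ≤ ENNReal.ofReal
      |variationOnFromTo γ (Icc 0 1) 0 u - variationOnFromTo γ (Icc 0 1) 0 v| := by
  wlog huv : u ≤ v generalizing u v
  · rw [innerDist_comm, abs_sub_comm]
    exact this hv hu (le_of_not_ge huv)
  refine (innerDist_le_eVariationOn_Icc hγ hu.1 huv hv.2).trans_eq ?_
  have hvar := variationOnFromTo.eq_of_le γ (Icc 0 1) huv
  rw [inter_eq_right.2 (Icc_subset_Icc hu.1 hv.2)] at hvar
  rw [abs_sub_comm,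
    ← variationOnFromTo.add hbv.locallyBoundedVariationOn (by simp : (0 : ℝ) ∈ Icc 0 1) hu hv,
    add_sub_cancel_left, hvar, abs_of_nonneg toReal_nonneg,
    ENNReal.ofReal_toReal (hbv.mono (Icc_subset_Icc hu.1 hv.2))]

-- The new curve visits the point at arc length `s * length γ` at time `s`.
lemma IsCurveIn.exists_constant_speed (hγ : IsCurveIn U x y γ) {L : ℝ}
    (hL : curveLength γ ≤ ENNReal.ofReal L) :
    ∃ c : ℝ → X, c 0 = x ∧ c 1 = y ∧ (∀ s, c s ∈ γ '' Icc 0 1) ∧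
      ∀ s s', innerDist U (c s) (c s') ≤ ENNReal.ofReal (L * |s - s'|) := by
  have hbv : BoundedVariationOn γ (Icc 0 1) := (hL.trans_lt ofReal_lt_top).ne
  set V : ℝ → ℝ := variationOnFromTo γ (Icc 0 1) 0 with hV
  have hV0 : V 0 = 0 := variationOnFromTo.self _ _ _
  have hV1 : V 1 = (curveLength γ).toReal := by
    rw [hV, variationOnFromTo.eq_of_le _ _ zero_le_one, inter_self, curveLength]
  have hV1_nonneg : 0 ≤ V 1 := hV1 ▸ toReal_nonneg
  let p : ℝ → ℝ := fun s => projIcc (0 : ℝ) 1 zero_le_one s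
  have hpt : ∀ s, ∃ t ∈ Icc (0 : ℝ) 1, V t = p s * V 1 ∧
      (s = 0 → t = 0) ∧ (s = 1 → t = 1) := fun s => by
    rcases eq_or_ne s 0 with rfl | hs0
    · exact ⟨0, by simp, by simp [hV0, p]⟩
    rcases eq_or_ne s 1 with rfl | hs1
    · exact ⟨1, by simp, by simp [p]⟩
    have hp : p s ∈ Icc (0 : ℝ) 1 := (projIcc (0 : ℝ) 1 zero_le_one s).2
    obtain ⟨t, ht, hVt⟩ := intermediate_value_Icc zero_le_one
      (continuousOn_variationOnFromTo hbv hγ.1 (by simp))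
      (show p s * V 1 ∈ Icc (V 0) (V 1) by
        rw [hV0]; exact ⟨mul_nonneg hp.1 hV1_nonneg, mul_le_of_le_one_left hV1_nonneg hp.2⟩)
    exact ⟨t, ht, hVt, fun h => absurd h hs0, fun h => absurd h hs1⟩
  choose τ hτ hVτ hτ0 hτ1 using hpt
  refine ⟨γ ∘ τ, by simp [hτ0, hγ.2.2.1], by simp [hτ1, hγ.2.2.2],
    fun s => mem_image_of_mem γ (hτ s), fun s s' => ?_⟩
  calc innerDist U (γ (τ s)) (γ (τ s')) ≤ ENNReal.ofReal |V (τ s) - V (τ s')| :=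
        hγ.innerDist_le_abs_variationOnFromTo_sub hbv (hτ s) (hτ s')
    _ = ENNReal.ofReal (V 1) * ENNReal.ofReal |p s - p s'| := by
        rw [hVτ, hVτ, ← sub_mul, abs_mul, mul_comm, abs_of_nonneg hV1_nonneg,
          ENNReal.ofReal_mul hV1_nonneg]
    _ ≤ ENNReal.ofReal L * ENNReal.ofReal |s - s'| :=
        mul_le_mul' (by rwa [hV1, ENNReal.ofReal_toReal (hL.trans_lt ofReal_lt_top).ne])
          (ENNReal.ofReal_le_ofReal (abs_projIcc_sub_projIcc zero_le_one))
    _ = ENNReal.ofReal (L * |s - s'|) := (ENNReal.ofReal_mul' (abs_nonneg _)).symm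

end InnerMetric

lemma dist_lt_of_innerDist_lt {X : Type*} [PseudoMetricSpace X] {U : Set X} {x y : X}
    {r : ℝ} (h : innerDist U x y < ENNReal.ofReal r) : dist x y < r := by
  have h' := (edist_le_innerDist U x y).trans_lt h
  rw [edist_dist] at h'
  exact (ENNReal.ofReal_lt_ofReal_iff_of_nonneg dist_nonneg).1 h'

lemma exists_geometric_approach {X : Type*} [PseudoMetricSpace X] {U : Set X} {x y : X} {r : ℝ}
    (hxy : innerDist U x y < ENNReal.ofReal r) {θ : ℝ} (hθ0 : 0 ≤ θ) (hθ1 : θ ≤ 1) :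
    ∃ Y : ℕ → X, Y 0 = x ∧ ∀ j, Y j ∈ U ∧ innerDist U x (Y j) ≤ ENNReal.ofReal (r - r * θ ^ j) ∧
      dist (Y j) (Y (j + 1)) ≤ (1 - θ) * (r * θ ^ j) ∧ dist (Y j) y ≤ r * θ ^ j := by
  obtain ⟨γ, hγ, hlen⟩ : ∃ γ, IsCurveIn U x y γ ∧ curveLength γ < ENNReal.ofReal r := by
    simpa only [innerDist, iInf_lt_iff, exists_prop] using hxy
  obtain ⟨c, hc0, hc1, hcγ, hc⟩ := hγ.exists_constant_speed hlen.le
  have hr : 0 ≤ r := (ENNReal.ofReal_pos.1 (zero_le.trans_lt hxy)).le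
  have hdist : ∀ s s', dist (c s) (c s') ≤ r * |s - s'| := fun s s' => by
    have := (edist_le_innerDist U _ _).trans (hc s s')
    rwa [edist_dist, ENNReal.ofReal_le_ofReal_iff (by positivity)] at this
  refine ⟨fun j => c (1 - θ ^ j), by simpa using hc0, fun j => ⟨?_, ?_, ?_, ?_⟩⟩
  · exact hγ.2.1.image_subset (hcγ _)
  · refine (hc0 ▸ hc 0 (1 - θ ^ j)).trans_eq ?_
    rw [zero_sub, abs_neg, abs_of_nonneg (sub_nonneg.2 (pow_le_one₀ hθ0 hθ1)), mul_one_sub]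
  · refine (hdist _ _).trans_eq ?_
    rw [show 1 - θ ^ j - (1 - θ ^ (j + 1)) = -((1 - θ) * θ ^ j) by ring, abs_neg,
      abs_of_nonneg (mul_nonneg (sub_nonneg.2 hθ1) (pow_nonneg hθ0 j))]
    ring
  · refine (hc1 ▸ hdist (1 - θ ^ j) 1).trans_eq ?_
    rw [sub_sub_cancel_left, abs_neg, abs_of_nonneg (pow_nonneg hθ0 j)]

lemma innerBall_subset_ball {X : Type*} [PseudoMetricSpace X] (U : Set X) (x : X) (r : ℝ) :
    innerBall U x r ⊆ ball x r :=
  fun _ hy => mem_ball'.2 (dist_lt_of_innerDist_lt hy.2)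

section NormedSpace

variable {E : Type*} [SeminormedAddCommGroup E] [NormedSpace ℝ E] {U : Set E} {x y : E}

lemma innerDist_le_edist (h : segment ℝ x y ⊆ U) : innerDist U x y ≤ edist x y := by
  have hcurve : IsCurveIn U x y (AffineMap.lineMap x y : ℝ → E) := by
    refine ⟨by fun_prop, fun t ht => h ?_, by simp, by simp⟩
    rw [segment_eq_image_lineMap]
    exact ⟨t, ht, rfl⟩
  refine (innerDist_le_curveLength hcurve).trans ?_
  have := ((lipschitzWith_lineMap x y).lipschitzOnWith (s := univ)).comp_eVariationOn_le
    (g := id) (s := Icc (0 : ℝ) 1) (mapsTo_univ _ _)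
  rwa [Function.comp_id, eVariationOn_id_Icc, sub_zero, ENNReal.ofReal_one, mul_one,
    ← edist_nndist] at this

lemma isOpen_innerBall (hU : IsOpen U) (x : E) (r : ℝ) : IsOpen (innerBall U x r) := by
  rw [Metric.isOpen_iff]
  rintro y ⟨hyU, hy⟩
  obtain ⟨ε, hε, hball⟩ := Metric.isOpen_iff.1 hU y hyU
  obtain ⟨s, hs, hys⟩ := ENNReal.lt_iff_exists_add_pos_lt.1 hy
  refine ⟨min ε s, lt_min hε (by exact_mod_cast hs), fun z hz => ⟨hball ?_, ?_⟩⟩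
  · exact ball_subset_ball (min_le_left _ _) hz
  · have hseg : segment ℝ y z ⊆ U := ((convex_ball y ε).segment_subset (mem_ball_self hε)
      (ball_subset_ball (min_le_left _ _) hz)).trans hball
    have hyz : edist y z < s := by
      rw [edist_comm, ← ENNReal.ofReal_coe_nnreal, edist_lt_ofReal]
      exact (mem_ball.1 hz).trans_le (min_le_right _ _)
    calc innerDist U x z ≤ innerDist U x y + innerDist U y z := innerDist_triangle U x y z
      _ ≤ innerDist U x y + s := add_le_add_right ((innerDist_le_edist hseg).trans hyz.le) _
      _ < ENNReal.ofReal r := hys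

end NormedSpace

section UniformDomain

lemma ball_infDist_frontier_subset {E : Type*} [SeminormedAddCommGroup E] [NormedSpace ℝ E]
    {U : Set E} (hU : IsOpen U) {x : E} (hx : x ∈ U) : ball x (infDist x (frontier U)) ⊆ U := by
  rcases le_or_gt (infDist x (frontier U)) 0 with h0 | h0
  · rw [ball_eq_empty.2 h0]
    exact empty_subset _
  refine (convex_ball x _).isPreconnected.subset_of_closure_inter_subset hU
    ⟨x, mem_ball_self h0, hx⟩ fun z ⟨hz, hzx⟩ => ?_
  by_contra hzU
  have hzfr : z ∈ frontier U := hU.frontier_eq ▸ ⟨hz, hzU⟩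
  exact (mem_ball'.1 hzx).not_ge (infDist_le_dist_of_mem hzfr)

lemma le_infDist_of_cone_condition {X : Type*} [PseudoMetricSpace X] {S : Set X} {a b p : X}
    {c s : ℝ} (hc0 : 0 ≤ c) (hc1 : c ≤ 1) (hs : 0 ≤ s) (ha : s ≤ infDist a S)
    (hb : s ≤ infDist b S) (hp : c * min (dist a p) (dist p b) ≤ infDist p S) :
    c * s / 2 ≤ infDist p S := by
  have hcs : c * s ≤ s := mul_le_of_le_one_left hs hc1
  have ha' := infDist_le_infDist_add_dist (s := S) (x := a) (y := p)
  have hb' := infDist_le_infDist_add_dist (s := S) (x := b) (y := p)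
  rw [dist_comm] at hb'
  rcases le_or_gt (s / 2) (min (dist a p) (dist p b)) with h | h
  · linarith [mul_le_mul_of_nonneg_left h hc0]
  · rcases min_lt_iff.1 h with h | h <;> linarith

variable {n : ℕ} {c C : ℝ} {U : Set (En n)}

lemma IsUniformDomain.exists_corkscrew (hU : IsUniformDomain c C U)
    (hunb : ¬ Bornology.IsBounded U) (hc : 0 ≤ c) {w : En n} (hw : w ∈ U) {R : ℝ} (hR : 0 < R) :
    ∃ z ∈ U, dist w z ≤ R / 2 ∧ c * R / 2 ≤ infDist z (frontier U) ∧
      innerDist U w z ≤ ENNReal.ofReal (C * R) := by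
  obtain ⟨-, hconn, hcurve⟩ := hU
  obtain ⟨p, hp, hpR⟩ : ∃ p ∈ U, R < dist w p := by
    by_contra! hfar
    exact hunb (isBounded_closedBall.subset fun p hp => mem_closedBall'.2 (hfar p hp))
  obtain ⟨w', hw', hww' : dist w w' = R⟩ : R ∈ (fun y => dist w y) '' U :=
    (hconn.isPreconnected.image _ (by fun_prop)).ordConnected.out
      ⟨w, hw, rfl⟩ ⟨p, hp, rfl⟩ ⟨by simpa using hR.le, hpR.le⟩
  obtain ⟨γ, hγ, hlen, hcone⟩ := hcurve w hw w' hw'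
  obtain ⟨t, ht, hdist : dist w (γ t) = R / 2⟩ := intermediate_value_Icc (zero_le_one (α := ℝ))
    ((continuous_const.dist continuous_id).comp_continuousOn hγ.1 :
      ContinuousOn (fun t => dist w (γ t)) (Icc 0 1))
    (show R / 2 ∈ Icc (dist w (γ 0)) (dist w (γ 1)) by
      rw [hγ.2.2.1, hγ.2.2.2, hww', dist_self]; constructor <;> linarith)
  refine ⟨γ t, hγ.2.1 ht, hdist.le, ?_, ?_⟩
  · have hmin : R / 2 ≤ min (dist w (γ t)) (dist (γ t) w') :=
      le_min hdist.ge (by linarith [dist_triangle w (γ t) w'])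
    linarith [mul_le_mul_of_nonneg_left hmin hc, hcone t ht]
  · have harc := innerDist_le_eVariationOn_Icc hγ le_rfl ht.1 ht.2
    rw [hγ.2.2.1] at harc
    exact harc.trans ((eVariationOn.mono _ (Icc_subset_Icc_right ht.2)).trans (hww' ▸ hlen))

lemma IsUniformDomain.exists_chain (hU : IsUniformDomain c C U) (hc0 : 0 ≤ c) (hc1 : c ≤ 1)
    (hC : 0 ≤ C) {a b : En n} (ha : a ∈ U) (hb : b ∈ U) {s : ℝ} (hs : 0 ≤ s)
    (has : s ≤ infDist a (frontier U)) (hbs : s ≤ infDist b (frontier U)) {K e : ℝ}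
    (hab : dist a b ≤ K * s) {N : ℕ} (hN0 : 0 < N) (hN : C * K ≤ N * e) :
    ∃ q : ℕ → En n, q 0 = a ∧ q N = b ∧ (∀ i, dist (q i) (q (i + 1)) ≤ e * s) ∧
      ∀ i ≤ N, q i ∈ U ∧ c * s / 2 ≤ infDist (q i) (frontier U) ∧
        innerDist U a (q i) ≤ ENNReal.ofReal (C * (K * s)) := by
  obtain ⟨γ, hγ, hlen, hcone⟩ := hU.2.2 a ha b hb
  obtain ⟨p, hp0, hp1, hpγ, hp⟩ := hγ.exists_constant_speed
    (hlen.trans (ENNReal.ofReal_le_ofReal (mul_le_mul_of_nonneg_left hab hC)))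
  have hN' : (0 : ℝ) < N := Nat.cast_pos.2 hN0
  have hL : 0 ≤ C * (K * s) := mul_nonneg hC (dist_nonneg.trans hab)
  have hLN : C * (K * s) / N ≤ e * s := by
    rw [div_le_iff₀ hN']
    nlinarith [mul_le_mul_of_nonneg_right hN hs]
  refine ⟨fun i => p (i / N), by simpa using hp0, by simpa [hN'.ne'] using hp1, fun i => ?_,
    fun i hi => ⟨?_, ?_, ?_⟩⟩
  · have hstep := (edist_le_innerDist U _ _).trans (hp (i / N) ((i + 1 : ℕ) / N))
    rw [edist_dist, ← sub_div, abs_div, Nat.cast_succ, sub_add_cancel_left, abs_neg, abs_one,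
      abs_of_pos hN', ENNReal.ofReal_le_ofReal_iff (by positivity), mul_one_div] at hstep
    exact_mod_cast hstep.trans hLN
  · exact hγ.2.1.image_subset (hpγ _)
  · obtain ⟨t, ht, heq⟩ := hpγ (i / N)
    exact le_infDist_of_cone_condition hc0 hc1 hs has hbs (by simpa only [heq] using hcone t ht)
  · refine (hp0 ▸ hp 0 (i / N)).trans (ENNReal.ofReal_le_ofReal (mul_le_of_le_one_right hL ?_))
    rw [zero_sub, abs_neg, abs_of_nonneg (by positivity), div_le_one hN']
    exact_mod_cast hi

end UniformDomain

section PositivePartPower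

lemma hasDerivAt_max_zero_pow {k : ℕ} (hk : k ≠ 0) (t : ℝ) :
    HasDerivAt (fun t : ℝ => max t 0 ^ (k + 1)) (((k + 1 : ℕ) : ℝ) * max t 0 ^ k) t := by
  rcases lt_trichotomy t 0 with ht | rfl | ht
  · rw [max_eq_right ht.le, zero_pow hk, mul_zero]
    refine (hasDerivAt_const t (0 : ℝ)).congr_of_eventuallyEq ?_
    filter_upwards [Iio_mem_nhds ht] with s hs
    rw [max_eq_right hs.le, zero_pow k.succ_ne_zero]
  · rw [max_self, zero_pow hk, mul_zero, ← hasDerivWithinAt_univ, ← Iic_union_Ici (a := (0 : ℝ))]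
    refine HasDerivWithinAt.union ?_ ?_
    · refine (hasDerivWithinAt_const (0 : ℝ) (Iic 0) (0 : ℝ)).congr (fun s hs => ?_) (by simp)
      rw [max_eq_right hs, zero_pow k.succ_ne_zero]
    · have hpow := (hasDerivAt_pow (k + 1) (0 : ℝ)).hasDerivWithinAt (s := Ici 0)
      rw [Nat.add_sub_cancel, zero_pow hk, mul_zero] at hpow
      exact hpow.congr (fun s hs => by rw [max_eq_left hs]) (by simp)
  · rw [max_eq_left ht.le]
    refine (hasDerivAt_pow (k + 1) t).congr_of_eventuallyEq ?_
    filter_upwards [Ioi_mem_nhds ht] with s hs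
    rw [max_eq_left hs.le]

lemma deriv_max_zero_pow {k : ℕ} (hk : k ≠ 0) :
    deriv (fun t : ℝ => max t 0 ^ (k + 1)) = fun t => ((k + 1 : ℕ) : ℝ) * max t 0 ^ k :=
  funext fun t => (hasDerivAt_max_zero_pow hk t).deriv

lemma contDiff_max_zero_pow (k : ℕ) : ContDiff ℝ k (fun t : ℝ => max t 0 ^ (k + 1)) := by
  induction k with
  | zero => exact contDiff_zero.2 (by fun_prop)
  | succ k ih =>
    rw [Nat.cast_succ, contDiff_succ_iff_deriv, deriv_max_zero_pow k.succ_ne_zero]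
    exact ⟨fun t => (hasDerivAt_max_zero_pow k.succ_ne_zero t).differentiableAt,
      fun h => absurd h (WithTop.coe_ne_top (a := ((k : ℕ∞)))), contDiff_const.mul ih⟩

end PositivePartPower

section Paraboloid

variable {E : Type*} [NormedAddCommGroup E]

/-- The truncated paraboloid `(1 - ‖z - x‖² / R²)₊`. It serves as an averaging kernel on the ball
of radius `R` about `x`; it is only meaningful for `0 < R`. -/
def paraboloid (x : E) (R : ℝ) (z : E) : ℝ := max (1 - (dist z x / R) ^ 2) 0

lemma paraboloid_nonneg (x : E) (R : ℝ) (z : E) : 0 ≤ paraboloid x R z := le_max_right _ _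

lemma paraboloid_le_one (x : E) (R : ℝ) (z : E) : paraboloid x R z ≤ 1 :=
  max_le (by linarith [sq_nonneg (dist z x / R)]) zero_le_one

lemma continuous_paraboloid (x : E) (R : ℝ) : Continuous (paraboloid x R) := by
  unfold paraboloid
  fun_prop

lemma paraboloid_eq_zero {x z : E} {R : ℝ} (hR : 0 < R) (hz : R ≤ dist z x) :
    paraboloid x R z = 0 :=
  max_eq_right (by linarith [one_le_pow₀ (n := 2) ((one_le_div hR).2 hz)])

lemma three_quarters_le_paraboloid {x z : E} {R : ℝ} (hR : 0 < R) (hz : dist z x ≤ R / 2) :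
    3 / 4 ≤ paraboloid x R z := by
  have hle : dist z x / R ≤ 1 / 2 := by rwa [div_le_iff₀ hR, one_div_mul_eq_div]
  have hsq := pow_le_pow_left₀ (by positivity) hle 2
  exact le_max_of_le_left (by linarith)

lemma support_paraboloid_subset (x : E) {R : ℝ} (hR : 0 < R) :
    Function.support (paraboloid x R) ⊆ ball x R := fun _ hz =>
  mem_ball.2 (not_le.1 fun h => hz (paraboloid_eq_zero hR h))

variable [NormedSpace ℝ E]

lemma paraboloid_add_smul (x v : E) {R : ℝ} (hR : 0 < R) :
    paraboloid x R (x + R • v) = paraboloid 0 1 v := by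
  simp [paraboloid, norm_smul, abs_of_pos hR, hR.ne']

variable [FiniteDimensional ℝ E]

lemma hasCompactSupport_paraboloid (x : E) {R : ℝ} (hR : 0 < R) :
    HasCompactSupport (paraboloid x R) :=
  .of_support_subset_isCompact (isCompact_closedBall x R)
    ((support_paraboloid_subset x hR).trans ball_subset_closedBall)

lemma hasCompactSupport_paraboloid_sq (x : E) {R : ℝ} (hR : 0 < R) :
    HasCompactSupport fun z => paraboloid x R z ^ 2 := by
  simp only [sq]
  exact (hasCompactSupport_paraboloid x hR).mul_left

variable [MeasurableSpace E] [BorelSpace E]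

section LocallyFinite

variable {μ : Measure E} [IsFiniteMeasureOnCompacts μ]

lemma integrable_paraboloid (x : E) {R : ℝ} (hR : 0 < R) : Integrable (paraboloid x R) μ :=
  (continuous_paraboloid x R).integrable_of_hasCompactSupport (hasCompactSupport_paraboloid x hR)

lemma integrable_mul_paraboloid {u : E → ℝ} {x : E} {R : ℝ} (hR : 0 < R)
    (hu : ContinuousOn u (closedBall x R)) : Integrable (fun z => u z * paraboloid x R z) μ := by
  refine (integrableOn_iff_integrable_of_support_subset ?_).1
    ((hu.mul (continuous_paraboloid x R).continuousOn).integrableOn_compact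
      (isCompact_closedBall x R))
  exact (Function.support_mul_subset_right _ _).trans
    ((support_paraboloid_subset x hR).trans ball_subset_closedBall)

lemma integral_paraboloid_pos [μ.IsOpenPosMeasure] (x : E) {R : ℝ} (hR : 0 < R) :
    0 < ∫ z, paraboloid x R z ∂μ := by
  refine (integral_pos_iff_support_of_nonneg (paraboloid_nonneg x R)
    (integrable_paraboloid x hR)).2 ((measure_ball_pos μ x (half_pos hR)).trans_le
      (measure_mono fun z hz => ?_))
  exact (show (0 : ℝ) < 3 / 4 by norm_num).trans_le
    (three_quarters_le_paraboloid hR (mem_ball.1 hz).le) |>.ne'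

end LocallyFinite

variable {μ : Measure E} [μ.IsAddHaarMeasure]

lemma integral_mul_paraboloid_eq (F : E → ℝ) (x : E) {R : ℝ} (hR : 0 < R) :
    ∫ z, F z * paraboloid x R z ∂μ =
      R ^ Module.finrank ℝ E * ∫ v, F (x + R • v) * paraboloid 0 1 v ∂μ := by
  have hscale := Measure.integral_comp_smul_of_nonneg μ
    (fun v => F (x + v) * paraboloid x R (x + v)) R (hR := hR.le)
  simp only [paraboloid_add_smul x _ hR, smul_eq_mul] at hscale
  rw [hscale, mul_inv_cancel_left₀ (by positivity),
    integral_add_left_eq_self (fun z => F z * paraboloid x R z) x]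

lemma integral_paraboloid_eq (x : E) {R : ℝ} (hR : 0 < R) :
    ∫ z, paraboloid x R z ∂μ = R ^ Module.finrank ℝ E * ∫ v, paraboloid (0 : E) 1 v ∂μ := by
  simpa only [one_mul] using integral_mul_paraboloid_eq (μ := μ) (fun _ => 1) x hR

end Paraboloid

section MeanValue

open InnerProductSpace Laplacian

lemma exists_contDiff_eqOn_ball {E : Type*} [NormedAddCommGroup E] [NormedSpace ℝ E]
    [FiniteDimensional ℝ E] {F : Type*} [NormedAddCommGroup F] [NormedSpace ℝ F] {u : E → F} {k : ℕ}
    {x : E} {R : ℝ} (hR : 0 < R) (hu : ∀ z ∈ closedBall x R, ContDiffAt ℝ k u z) :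
    ∃ w : E → F, ContDiff ℝ k w ∧ EqOn w u (ball x R) := by
  have hopen : IsOpen {z | ContDiffAt ℝ k u z} :=
    isOpen_iff_mem_nhds.2 fun z hz => ContDiffAt.eventually hz (by simp)
  obtain ⟨δ, hδ, hsub⟩ := (isCompact_closedBall x R).exists_cthickening_subset_open hopen hu
  rw [cthickening_closedBall hδ.le hR.le] at hsub
  let χ : ContDiffBump x := ⟨R, δ + R, hR, by linarith⟩
  refine ⟨fun z => χ z • u z, contDiff_iff_contDiffAt.2 fun z => ?_, fun z hz => ?_⟩
  · by_cases hz : z ∈ closedBall x (δ + R)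
    · exact χ.contDiffAt.smul (hsub hz)
    · refine (contDiffAt_const (c := (0 : F))).congr_of_eventuallyEq ?_
      filter_upwards [isClosed_closedBall.isOpen_compl.mem_nhds hz] with y hy
      rw [χ.zero_of_le_dist (not_le.1 fun h => hy (mem_closedBall.2 h)).le, zero_smul]
  · simp [χ.one_of_mem_closedBall (ball_subset_closedBall hz)]

variable {E : Type*} [NormedAddCommGroup E] [InnerProductSpace ℝ E]

lemma hasFDerivAt_paraboloid_sq (v : E) :
    HasFDerivAt (fun v : E => paraboloid 0 1 v ^ 2) ((-4 * paraboloid 0 1 v) • innerSL ℝ v) v := by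
  have hnorm : HasFDerivAt (fun v : E => 1 - ‖v‖ ^ 2) (-(2 • innerSL ℝ v)) v :=
    (hasStrictFDerivAt_norm_sq v).hasFDerivAt.const_sub 1
  have hsq := (hasDerivAt_max_zero_pow one_ne_zero (1 - ‖v‖ ^ 2)).comp_hasFDerivAt v hnorm
  have hfun : (fun v : E => paraboloid 0 1 v ^ 2) =
      (fun t : ℝ => max t 0 ^ (1 + 1)) ∘ fun v : E => 1 - ‖v‖ ^ 2 := by
    ext v
    simp [paraboloid]
  rw [hfun]
  refine hsq.congr_fderiv (ContinuousLinearMap.ext fun i => ?_)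
  simp only [paraboloid, dist_zero_right, div_one, smul_apply,
    neg_apply, nsmul_eq_mul, smul_eq_mul, pow_one]
  push_cast
  ring

variable [FiniteDimensional ℝ E]

lemma laplacian_eq_sum_fderiv_fderiv {w : E → ℝ} {x : E} (hw : ContDiffAt ℝ 2 w x) {ι : Type*}
    [Fintype ι] (b : OrthonormalBasis ι ℝ E) :
    Δ w x = ∑ i, fderiv ℝ (fun y => fderiv ℝ w y (b i)) x (b i) := by
  have hdiff : DifferentiableAt ℝ (fderiv ℝ w) x :=
    (hw.fderiv_right (m := 1) (by norm_num)).differentiableAt one_ne_zero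
  simp only [laplacian_eq_iteratedFDeriv_orthonormalBasis w b, iteratedFDeriv_two_apply]
  refine Finset.sum_congr rfl fun i _ => ?_
  rw [fderiv_clm_apply hdiff (differentiableAt_const _)]
  simp

variable [MeasurableSpace E] [BorelSpace E] {μ : Measure E} [μ.IsAddHaarMeasure]

lemma integral_mul_inner_mul_paraboloid {g : E → ℝ} (hg : ContDiff ℝ 1 g) (e : E) :
    ∫ v, g v * (inner ℝ v e * paraboloid 0 1 v) ∂μ =
      1 / 4 * ∫ v, fderiv ℝ g v e * paraboloid 0 1 v ^ 2 ∂μ := by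
  have hφ := continuous_paraboloid (0 : E) 1
  have hφsupp := hasCompactSupport_paraboloid (0 : E) one_pos
  have hφ2supp := hasCompactSupport_paraboloid_sq (0 : E) one_pos
  have hderiv (v : E) : fderiv ℝ (fun v : E => paraboloid 0 1 v ^ 2) v e =
      -4 * (inner ℝ v e * paraboloid 0 1 v) := by
    rw [(hasFDerivAt_paraboloid_sq v).fderiv, smul_apply, innerSL_apply_apply,
      smul_eq_mul]
    ring
  have hparts := integral_mul_fderiv_eq_neg_fderiv_mul_of_integrable (μ := μ) (𝕜 := ℝ) (f := g)
    (g := fun v => paraboloid 0 1 v ^ 2) (v := e)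
    ((((hg.continuous_fderiv one_ne_zero).clm_apply continuous_const).mul
      (hφ.pow 2)).integrable_of_hasCompactSupport hφ2supp.mul_left)
    (by
      simp only [hderiv]
      exact (hg.continuous.mul (continuous_const.mul ((continuous_id.inner continuous_const).mul
        hφ))).integrable_of_hasCompactSupport hφsupp.mul_left.mul_left.mul_left)
    ((hg.continuous.mul (hφ.pow 2)).integrable_of_hasCompactSupport hφ2supp.mul_left)
    (fun v _ => hg.differentiable one_ne_zero v)
    (fun v _ => (hasFDerivAt_paraboloid_sq v).differentiableAt)
  simp only [hderiv, mul_left_comm _ (-4 : ℝ), integral_const_mul] at hparts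
  linarith

lemma integral_fderiv_radial_mul_paraboloid {w : E → ℝ} (hw : ContDiff ℝ 2 w) (x : E) (t : ℝ) :
    ∫ v, fderiv ℝ w (x + t • v) v * paraboloid 0 1 v ∂μ =
      t / 4 * ∫ v, Δ w (x + t • v) * paraboloid 0 1 v ^ 2 ∂μ := by
  set b := stdOrthonormalBasis ℝ E
  have hφ := continuous_paraboloid (0 : E) 1
  have hφsupp := hasCompactSupport_paraboloid (0 : E) one_pos
  have hφ2supp := hasCompactSupport_paraboloid_sq (0 : E) one_pos
  have hpartial (i) : ContDiff ℝ 1 fun y => fderiv ℝ w y (b i) :=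
    (hw.fderiv_right (m := 1) (by norm_num)).clm_apply contDiff_const
  have hpartial' (i) : ContDiff ℝ 1 fun v => fderiv ℝ w (x + t • v) (b i) :=
    (hpartial i).comp (contDiff_const.add (contDiff_const.smul contDiff_id))
  have hradial (v : E) : fderiv ℝ w (x + t • v) v * paraboloid 0 1 v =
      ∑ i, fderiv ℝ w (x + t • v) (b i) * (inner ℝ v (b i) * paraboloid 0 1 v) := by
    conv_lhs => rw [← b.sum_repr' v]
    rw [map_sum, Finset.sum_mul, b.sum_repr' v]
    refine Finset.sum_congr rfl fun i _ => ?_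
    rw [map_smul, smul_eq_mul, real_inner_comm]
    ring
  have hchain (i) (v : E) : fderiv ℝ (fun v => fderiv ℝ w (x + t • v) (b i)) v (b i) =
      t * fderiv ℝ (fun y => fderiv ℝ w y (b i)) (x + t • v) (b i) := by
    rw [fderiv_comp_smul (f := fun u => fderiv ℝ w (x + u) (b i)),
      fderiv_comp_add_left (f := fun u => fderiv ℝ w u (b i)), smul_apply, smul_eq_mul]
  have hint (i) : Integrable (fun v => fderiv ℝ (fun v => fderiv ℝ w (x + t • v) (b i)) v (b i) *
      paraboloid 0 1 v ^ 2) μ :=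
    ((((hpartial' i).continuous_fderiv one_ne_zero).clm_apply continuous_const).mul
      (hφ.pow 2)).integrable_of_hasCompactSupport hφ2supp.mul_left
  simp only [hradial]
  rw [integral_finsetSum]
  · simp only [integral_mul_inner_mul_paraboloid (hpartial' _), ← Finset.mul_sum]
    rw [← integral_finsetSum _ fun i _ => hint i, div_eq_mul_one_div t,
      mul_comm t, mul_assoc (1 / 4), ← integral_const_mul t]
    simp only [hchain, laplacian_eq_sum_fderiv_fderiv hw.contDiffAt b, Finset.mul_sum,
      Finset.sum_mul, mul_assoc]
  · exact fun i _ => ((hpartial' i).continuous.mul ((continuous_id.inner continuous_const).mul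
      hφ)).integrable_of_hasCompactSupport hφsupp.mul_left.mul_left

lemma hasDerivAt_integral_comp_smul_mul_paraboloid {w : E → ℝ} (hw : ContDiff ℝ 1 w) (x : E)
    (t : ℝ) : HasDerivAt (fun t : ℝ => ∫ v, w (x + t • v) * paraboloid 0 1 v ∂μ)
      (∫ v, fderiv ℝ w (x + t • v) v * paraboloid 0 1 v ∂μ) t := by
  have hφ := continuous_paraboloid (0 : E) 1
  have hφsupp := hasCompactSupport_paraboloid (0 : E) one_pos
  have hw' : Continuous (fderiv ℝ w) := hw.continuous_fderiv one_ne_zero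
  have hline (s : ℝ) : Continuous fun v : E => x + s • v := by fun_prop
  obtain ⟨C, hC⟩ :=
    (isCompact_closedBall x (|t| + 1)).exists_bound_of_continuousOn hw'.continuousOn
  refine (hasDerivAt_integral_of_dominated_loc_of_deriv_le (𝕜 := ℝ)
    (F := fun t v => w (x + t • v) * paraboloid 0 1 v)
    (F' := fun t v => fderiv ℝ w (x + t • v) v * paraboloid 0 1 v)
    (bound := fun v => C * paraboloid 0 1 v) (ball_mem_nhds t one_pos)
    (.of_forall fun s => ((hw.continuous.comp (hline s)).mul hφ).aestronglyMeasurable)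
    (((hw.continuous.comp (hline t)).mul hφ).integrable_of_hasCompactSupport hφsupp.mul_left)
    (((hw'.comp (hline t)).clm_apply continuous_id).mul hφ).aestronglyMeasurable
    (.of_forall fun v s hs => ?_) ((integrable_paraboloid 0 one_pos).const_mul C)
    (.of_forall fun v s _ => ?_)).2
  · rcases le_or_gt 1 ‖v‖ with hv | hv
    · rw [paraboloid_eq_zero one_pos (by rwa [dist_zero_right])]
      simp
    have hs : |s| ≤ |t| + 1 := by
      linarith [abs_sub_abs_le_abs_sub s t, (Real.dist_eq s t ▸ mem_ball.1 hs :)]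
    have hbound := hC (x + s • v) (by
      rw [mem_closedBall, dist_self_add_left, norm_smul, Real.norm_eq_abs]
      nlinarith [norm_nonneg v, abs_nonneg s])
    rw [norm_mul, Real.norm_of_nonneg (paraboloid_nonneg _ _ _)]
    refine mul_le_mul_of_nonneg_right ?_ (paraboloid_nonneg _ _ _)
    exact (ContinuousLinearMap.le_opNorm _ _).trans
      ((mul_le_of_le_one_right (norm_nonneg _) hv.le).trans hbound)
  · have hs : HasDerivAt (fun s : ℝ => x + s • v) v s := by
      simpa using ((hasDerivAt_id s).smul_const v).const_add x
    exact ((hw.differentiable one_ne_zero _).hasFDerivAt.comp_hasDerivAt s hs).mul_const _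

lemma mul_integral_paraboloid_le_of_laplacian_nonneg {w : E → ℝ} (hw : ContDiff ℝ 2 w) {x : E}
    {R : ℝ} (hR : 0 < R) (hΔ : ∀ z ∈ ball x R, 0 ≤ Δ w z) :
    w x * ∫ z, paraboloid x R z ∂μ ≤ ∫ z, w z * paraboloid x R z ∂μ := by
  have hderiv := hasDerivAt_integral_comp_smul_mul_paraboloid (μ := μ) (hw.of_le one_le_two) x
  have hmono : MonotoneOn (fun t : ℝ => ∫ v, w (x + t • v) * paraboloid 0 1 v ∂μ) (Icc 0 R) := by
    refine monotoneOn_of_deriv_nonneg (convex_Icc 0 R)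
      (fun t _ => (hderiv t).continuousAt.continuousWithinAt)
      (fun t _ => (hderiv t).differentiableAt.differentiableWithinAt) fun t ht => ?_
    rw [interior_Icc] at ht
    rw [(hderiv t).deriv, integral_fderiv_radial_mul_paraboloid hw x t]
    refine mul_nonneg (by linarith [ht.1]) (integral_nonneg fun v => ?_)
    rcases le_or_gt 1 ‖v‖ with hv | hv
    · simp [paraboloid_eq_zero one_pos (show 1 ≤ dist v 0 by rwa [dist_zero_right])]
    · refine mul_nonneg (hΔ _ ?_) (sq_nonneg _)
      rw [mem_ball, dist_self_add_left, norm_smul, Real.norm_of_nonneg ht.1.le]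
      nlinarith [ht.1, ht.2]
  have hle := hmono (left_mem_Icc.2 hR.le) (right_mem_Icc.2 hR.le) hR.le
  simp only [zero_smul, add_zero, integral_const_mul] at hle
  rw [integral_paraboloid_eq x hR, integral_mul_paraboloid_eq w x hR, mul_left_comm]
  exact mul_le_mul_of_nonneg_left hle (by positivity)

lemma mul_integral_paraboloid_eq_of_harmonicOnNhd {u : E → ℝ} {x : E} {R : ℝ} (hR : 0 < R)
    (hu : HarmonicOnNhd u (closedBall x R)) :
    u x * ∫ z, paraboloid x R z ∂μ = ∫ z, u z * paraboloid x R z ∂μ := by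
  obtain ⟨w, hw, hwu⟩ := exists_contDiff_eqOn_ball (k := 2) hR fun z hz => (hu z hz).1
  have hΔ : ∀ z ∈ ball x R, Δ w z = 0 := fun z hz => by
    rw [(laplacian_congr_nhds (hwu.eventuallyEq_of_mem (isOpen_ball.mem_nhds hz))).eq_of_nhds]
    exact (hu z (ball_subset_closedBall hz)).2.eq_of_nhds
  have hint : ∫ z, w z * paraboloid x R z ∂μ = ∫ z, u z * paraboloid x R z ∂μ := by
    refine integral_congr_ae (.of_forall fun z => ?_)
    by_cases hz : z ∈ ball x R
    · simp only [hwu hz]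
    · simp only [paraboloid_eq_zero hR (not_lt.1 hz), mul_zero]
  rw [← hint, ← hwu (mem_ball_self hR)]
  refine le_antisymm (mul_integral_paraboloid_le_of_laplacian_nonneg hw hR fun z hz =>
    (hΔ z hz).ge) ?_
  have hneg := mul_integral_paraboloid_le_of_laplacian_nonneg (μ := μ) (w := -w) (x := x) hw.neg
    hR fun z hz => by simp [laplacian_neg, hΔ z hz]
  simpa only [Pi.neg_apply, neg_mul, integral_neg, neg_le_neg_iff] using hneg

lemma harnack_of_dist_le {u : E → ℝ} {x y : E} {R : ℝ} (hR : 0 < R)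
    (hu : HarmonicOnNhd u (closedBall x (4 * R))) (hu0 : ∀ z ∈ closedBall x (4 * R), 0 ≤ u z)
    (hxy : dist x y ≤ R) : u y ≤ 4 / 3 * 4 ^ Module.finrank ℝ E * u x := by
  have hsub : closedBall y R ⊆ closedBall x (4 * R) :=
    closedBall_subset_closedBall' (by rw [dist_comm]; linarith)
  have hpar : ∀ z, u z * paraboloid y R z ≤ 4 / 3 * (u z * paraboloid x (4 * R) z) := fun z => by
    by_cases hz : z ∈ closedBall x (4 * R)
    · rcases le_or_gt R (dist z y) with hzy | hzy
      · rw [paraboloid_eq_zero hR hzy, mul_zero]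
        have := mul_nonneg (hu0 z hz) (paraboloid_nonneg x (4 * R) z)
        positivity
      · have hx := three_quarters_le_paraboloid (x := x) (z := z) (R := 4 * R) (by positivity)
          (by linarith [dist_triangle_right z x y])
        nlinarith [paraboloid_le_one y R z, hu0 z hz]
    · rw [paraboloid_eq_zero (by positivity) (not_le.1 hz).le,
        paraboloid_eq_zero hR (not_le.1 fun h => hz (hsub h)).le]
      simp
  have hmono := integral_mono (μ := (volume : Measure E))
    (integrable_mul_paraboloid hR (hu.continuousOn.mono hsub))
    ((integrable_mul_paraboloid (by positivity) hu.continuousOn).const_mul (4 / 3)) hpar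
  rw [integral_const_mul, ← mul_integral_paraboloid_eq_of_harmonicOnNhd hR (hu.mono hsub),
    ← mul_integral_paraboloid_eq_of_harmonicOnNhd (by positivity) hu,
    integral_paraboloid_eq y hR, integral_paraboloid_eq x (by positivity : 0 < 4 * R),
    mul_pow] at hmono
  refine le_of_mul_le_mul_right ?_ (mul_pos (pow_pos hR (Module.finrank ℝ E))
    (integral_paraboloid_pos (μ := (volume : Measure E)) (0 : E) one_pos))
  linarith

end MeanValue

section SubMeanValue

open InnerProductSpace Laplacian

lemma integral_mul_paraboloid_le {E : Type*} [NormedAddCommGroup E] [NormedSpace ℝ E]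
    [FiniteDimensional ℝ E] [MeasurableSpace E] [BorelSpace E] {μ : Measure E}
    [IsFiniteMeasureOnCompacts μ] {u : E → ℝ} {y p : E} {R d m M : ℝ} (hR : 0 < R)
    (hu : ContinuousOn u (closedBall y R)) (hp : ball p d ⊆ closedBall y (R / 2))
    (huM : ∀ z ∈ ball y R, u z ≤ M) (hum : ∀ z ∈ ball p d, u z ≤ m) (hmM : m ≤ M) :
    ∫ z, u z * paraboloid y R z ∂μ ≤
      M * ∫ z, paraboloid y R z ∂μ - 3 / 4 * (M - m) * μ.real (ball p d) := by
  have hind : Integrable ((ball p d).indicator fun _ : E => 3 / 4 * (M - m)) μ :=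
    (integrable_indicator_iff measurableSet_ball).2 (integrableOn_const measure_ball_lt_top.ne)
  have hpar := (integrable_paraboloid (μ := μ) y hR).const_mul M
  calc ∫ z, u z * paraboloid y R z ∂μ
      ≤ ∫ z, (M * paraboloid y R z - (ball p d).indicator (fun _ => 3 / 4 * (M - m)) z) ∂μ := by
        refine integral_mono (integrable_mul_paraboloid hR hu) (hpar.sub hind) fun z => ?_
        by_cases hz : z ∈ ball p d
        · simp only [indicator_of_mem hz]
          nlinarith [three_quarters_le_paraboloid hR (mem_closedBall.1 (hp hz)), hum z hz]
        · simp only [indicator_of_notMem hz, sub_zero]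
          rcases le_or_gt R (dist z y) with hzy | hzy
          · simp [paraboloid_eq_zero hR hzy]
          · exact mul_le_mul_of_nonneg_right (huM z hzy) (paraboloid_nonneg _ _ _)
    _ = _ := by
        rw [integral_sub hpar hind, integral_const_mul, integral_indicator measurableSet_ball,
          setIntegral_const, smul_eq_mul, mul_comm (μ.real _)]

variable {E : Type*} [NormedAddCommGroup E] [InnerProductSpace ℝ E] [FiniteDimensional ℝ E]

lemma laplacian_comp {F : ℝ → ℝ} {g : E → ℝ} {x : E} (hF : ContDiffAt ℝ 2 F (g x))
    (hg : ContDiffAt ℝ 2 g x) {ι : Type*} [Fintype ι] (b : OrthonormalBasis ι ℝ E) :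
    Δ (F ∘ g) x =
      deriv (deriv F) (g x) * ∑ i, fderiv ℝ g x (b i) ^ 2 + deriv F (g x) * Δ g x := by
  have hF' : DifferentiableAt ℝ (deriv F) (g x) :=
    (hF.derivWithin (m := 1) (by norm_num)).differentiableAt one_ne_zero
  rw [laplacian_eq_sum_fderiv_fderiv (hF.comp x hg) b, laplacian_eq_sum_fderiv_fderiv hg b,
    Finset.mul_sum, Finset.mul_sum, ← Finset.sum_add_distrib]
  refine Finset.sum_congr rfl fun i _ => ?_
  have hfirst : (fun y => fderiv ℝ (F ∘ g) y (b i)) =ᶠ[nhds x]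
      fun y => deriv F (g y) * fderiv ℝ g y (b i) := by
    filter_upwards [hg.eventually (by simp),
      hg.continuousAt.eventually (hF.eventually (by simp))] with y hgy hFy
    rw [((hFy.differentiableAt two_ne_zero).hasDerivAt.comp_hasFDerivAt y
      (hgy.differentiableAt two_ne_zero).hasFDerivAt).fderiv, smul_apply, smul_eq_mul]
  have hgi : DifferentiableAt ℝ (fun y => fderiv ℝ g y (b i)) x :=
    ((hg.fderiv_right (m := 1) (by norm_num)).differentiableAt one_ne_zero).clm_apply
      (differentiableAt_const _)
  have hFg : HasFDerivAt (fun y => deriv F (g y)) (deriv (deriv F) (g x) • fderiv ℝ g x) x :=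
    hF'.hasDerivAt.comp_hasFDerivAt x (hg.differentiableAt two_ne_zero).hasFDerivAt
  rw [hfirst.fderiv_eq, (hFg.fun_mul hgi.hasFDerivAt).fderiv]
  simp only [add_apply, smul_apply, smul_eq_mul]
  ring

lemma laplacian_comp_nonneg {F : ℝ → ℝ} {g : E → ℝ} {x : E} (hF : ContDiffAt ℝ 2 F (g x))
    (hg : HarmonicAt g x) (hF'' : 0 ≤ deriv (deriv F) (g x)) : 0 ≤ Δ (F ∘ g) x := by
  rw [laplacian_comp hF hg.1 (stdOrthonormalBasis ℝ E), hg.2.eq_of_nhds, Pi.zero_apply, mul_zero,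
    add_zero]
  exact mul_nonneg hF'' (Finset.sum_nonneg fun i _ => sq_nonneg _)

/-- `h` is a harmonic profile of the open set `U`: a positive harmonic function on `U` which is
continuous up to the boundary and vanishes there. The values of `h` off `closure U` are
irrelevant. -/
structure IsHarmonicProfile (h : E → ℝ) (U : Set E) : Prop where
  continuousOn_closure : ContinuousOn h (closure U)
  pos : ∀ z ∈ U, 0 < h z
  harmonicOnNhd : HarmonicOnNhd h U
  eq_zero_of_mem_frontier : ∀ z ∈ frontier U, h z = 0

namespace IsHarmonicProfile

variable {h : E → ℝ} {U : Set E}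

lemma continuous_indicator (hh : IsHarmonicProfile h U) : Continuous (U.indicator h) :=
  _root_.continuous_indicator hh.eq_zero_of_mem_frontier hh.continuousOn_closure

lemma indicator_nonneg (hh : IsHarmonicProfile h U) (z : E) : 0 ≤ U.indicator h z :=
  Set.indicator_nonneg (fun z hz => (hh.pos z hz).le) z

variable [MeasurableSpace E] [BorelSpace E] {μ : Measure E} [μ.IsAddHaarMeasure]

-- The truncation at `K > 0` vanishes near `∂U`, and the cube makes it `C²` across `{h = K}`.
lemma truncated_pow_three_submean (hh : IsHarmonicProfile h U) (hU : IsOpen U) {K : ℝ}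
    (hK : 0 < K) (y : E) {R : ℝ} (hR : 0 < R) :
    max (U.indicator h y - K) 0 ^ 3 * ∫ z, paraboloid y R z ∂μ ≤
      ∫ z, max (U.indicator h z - K) 0 ^ 3 * paraboloid y R z ∂μ := by
  set F : ℝ → ℝ := fun t => max (t - K) 0 ^ 3
  have hF : ContDiff ℝ 2 F := (contDiff_max_zero_pow 2).comp (contDiff_id.sub contDiff_const)
  have hF'' (t : ℝ) : 0 ≤ deriv (deriv F) t := by
    have hF' : deriv F = fun t => 3 * max (t - K) 0 ^ 2 := funext fun t =>
      (deriv_comp_sub_const (fun t => max t 0 ^ 3) K t).trans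
        (congrFun (deriv_max_zero_pow two_ne_zero) _)
    rw [hF', deriv_const_mul_field, deriv_comp_sub_const (fun t => max t 0 ^ 2) K,
      deriv_max_zero_pow one_ne_zero]
    positivity
  have hin : ∀ z ∈ U, F ∘ U.indicator h =ᶠ[nhds z] F ∘ h := fun z hz => by
    filter_upwards [hU.mem_nhds hz] with p hp
    simp only [Function.comp_apply, indicator_of_mem hp]
  have hout : ∀ z ∉ U, F ∘ U.indicator h =ᶠ[nhds z] fun _ => 0 := fun z hz => by
    filter_upwards [hh.continuous_indicator.continuousAt.eventually_lt_const
      (by rwa [indicator_of_notMem hz] : U.indicator h z < K)] with p hp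
    simp only [Function.comp_apply, F, max_eq_right (sub_neg.2 hp).le, zero_pow three_ne_zero]
  refine mul_integral_paraboloid_le_of_laplacian_nonneg (w := F ∘ U.indicator h)
    (contDiff_iff_contDiffAt.2 fun z => ?_) hR fun z _ => ?_
  · by_cases hz : z ∈ U
    · exact (hF.contDiffAt.comp z (hh.harmonicOnNhd z hz).1).congr_of_eventuallyEq (hin z hz)
    · exact contDiffAt_const.congr_of_eventuallyEq (hout z hz)
  · by_cases hz : z ∈ U
    · rw [(laplacian_congr_nhds (hin z hz)).eq_of_nhds]
      exact laplacian_comp_nonneg hF.contDiffAt (hh.harmonicOnNhd z hz) (hF'' _)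
    · rw [(laplacian_congr_nhds (hout z hz)).eq_of_nhds, laplacian_const, Pi.zero_apply]

lemma indicator_pow_three_submean (hh : IsHarmonicProfile h U) (hU : IsOpen U) (y : E) {R : ℝ}
    (hR : 0 < R) :
    U.indicator h y ^ 3 * ∫ z, paraboloid y R z ∂μ ≤
      ∫ z, U.indicator h z ^ 3 * paraboloid y R z ∂μ := by
  have hcont := hh.continuous_indicator
  have hle : ∀ K ∈ Ioi (0 : ℝ), max (U.indicator h y - K) 0 ^ 3 * ∫ z, paraboloid y R z ∂μ ≤
      ∫ z, U.indicator h z ^ 3 * paraboloid y R z ∂μ := fun K hK => by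
    refine (hh.truncated_pow_three_submean hU hK y hR).trans (integral_mono
      (integrable_mul_paraboloid hR (by fun_prop)) (integrable_mul_paraboloid hR (by fun_prop))
      fun z => mul_le_mul_of_nonneg_right ?_ (paraboloid_nonneg y R z))
    exact pow_le_pow_left₀ (le_max_right _ _)
      (max_le (sub_le_self _ (mem_Ioi.1 hK).le) (hh.indicator_nonneg z)) 3
  have hlim : Filter.Tendsto (fun K : ℝ => max (U.indicator h y - K) 0 ^ 3 *
      ∫ z, paraboloid y R z ∂μ) (nhdsWithin 0 (Ioi 0))
      (nhds (max (U.indicator h y - 0) 0 ^ 3 * ∫ z, paraboloid y R z ∂μ)) :=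
    (Continuous.tendsto (by fun_prop) 0).mono_left nhdsWithin_le_nhds
  rw [sub_zero, max_eq_left (hh.indicator_nonneg y)] at hlim
  exact le_of_tendsto hlim (Filter.eventually_of_mem self_mem_nhdsWithin hle)

lemma pow_three_mul_integral_paraboloid_le (hh : IsHarmonicProfile h U) (hU : IsOpen U)
    {y p : E} {R d m M : ℝ} (hR : 0 < R) (hy : y ∈ U) (hp : ball p d ⊆ closedBall y (R / 2))
    (hm0 : 0 ≤ m) (hmM : m ≤ M) (hM : ∀ z ∈ ball y R, z ∈ U → h z ≤ M)
    (hm : ∀ z ∈ ball p d, z ∈ U → h z ≤ m) :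
    h y ^ 3 * ∫ z, paraboloid y R z ∂μ ≤
      M ^ 3 * ∫ z, paraboloid y R z ∂μ - 3 / 4 * (M ^ 3 - m ^ 3) * μ.real (ball p d) := by
  have hle : ∀ {s : Set E} {L : ℝ}, 0 ≤ L → (∀ z ∈ s, z ∈ U → h z ≤ L) →
      ∀ z ∈ s, U.indicator h z ^ 3 ≤ L ^ 3 := fun hL hs z hz =>
    pow_le_pow_left₀ (hh.indicator_nonneg z) (indicator_apply_le' (hs z hz) fun _ => hL) 3
  have hsub := hh.indicator_pow_three_submean (μ := μ) hU y hR
  rw [indicator_of_mem hy] at hsub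
  exact hsub.trans <| integral_mul_paraboloid_le hR (hh.continuous_indicator.pow 3).continuousOn hp
    (hle (hm0.trans hmM) hM) (hle hm0 hm) (pow_le_pow_left₀ hm0 hmM 3)

-- Where `h ≤ h y / 2` on a fixed proportion of a ball, the sub-mean value property of `h ^ 3`
-- forces larger values elsewhere in the ball.
lemma exists_one_add_mul_le_of_le_half_on_ball (μ : Measure E) [μ.IsAddHaarMeasure] {A : ℝ}
    (hA : 0 < A) :
    ∃ ε > 0, ∀ {U : Set E} {h : E → ℝ}, IsOpen U → IsHarmonicProfile h U →
      ∀ y ∈ U, ∀ d > 0, ∀ p, dist p y + d ≤ A * d / 2 →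
        (∀ q ∈ ball p d, q ∈ U → h q ≤ h y / 2) →
        ∃ y' ∈ U, dist y' y ≤ A * d ∧ (1 + ε) * h y ≤ h y' := by
  set I := ∫ z, paraboloid (0 : E) 1 z ∂μ
  set V := μ.real (ball (0 : E) 1)
  have hI : 0 < I := integral_paraboloid_pos 0 one_pos
  have hV : 0 < V := ENNReal.toReal_pos (measure_ball_pos μ 0 one_pos).ne' measure_ball_lt_top.ne
  set a := A ^ Module.finrank ℝ E * I with ha_def
  have ha : 0 < a := by positivity
  set ε := min 1 (V / (14 * a))
  have hε : 0 < ε := by positivity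
  have hεa : 14 * a * ε ≤ V := by
    calc 14 * a * ε ≤ 14 * a * (V / (14 * a)) := by gcongr; exact min_le_right _ _
      _ = V := by field_simp
  refine ⟨ε, hε, fun {U h} hU hh y hy d hd p hp hsmall => ?_⟩
  by_contra! hlt
  have hhy := hh.pos y hy
  have hsub := hh.pow_three_mul_integral_paraboloid_le (μ := μ) hU (mul_pos hA hd) hy
    (ball_subset_closedBall.trans (closedBall_subset_closedBall' (by linarith)))
    (by positivity) (by nlinarith)
    (fun z hz hzU => (hlt z hzU (mem_ball.1 hz).le).le) hsmall
  rw [integral_paraboloid_eq y (mul_pos hA hd), measureReal_def μ (ball p d),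
    Measure.addHaar_ball_of_pos μ p hd, ENNReal.toReal_mul, ENNReal.toReal_ofReal (by positivity),
    ← measureReal_def, mul_pow A] at hsub
  have hVle : 3 / 4 * ((1 + ε) ^ 3 - (1 / 2) ^ 3) * V ≤ ((1 + ε) ^ 3 - 1) * a := by
    have hc : 0 < h y ^ 3 * d ^ Module.finrank ℝ E := by positivity
    refine le_of_mul_le_mul_left ?_ hc
    rw [ha_def]
    linear_combination hsub
  have hε3 : (1 + ε) ^ 3 ≤ 1 + 7 * ε := by nlinarith [min_le_left 1 (V / (14 * a)), sq_nonneg ε]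
  have hε3' : 1 ≤ (1 + ε) ^ 3 := one_le_pow₀ (by linarith)
  nlinarith

end IsHarmonicProfile

lemma IsHarmonicOn.harmonicOnNhd {n : ℕ} {f : En n → ℝ} {U : Set (En n)} (hU : IsOpen U)
    (hf : IsHarmonicOn f U) : HarmonicOnNhd f U := fun z hz => by
  have hfz : ∀ y ∈ U, ContDiffAt ℝ 2 f y := fun y hy => hf.1.contDiffAt (hU.mem_nhds hy)
  refine ⟨hfz z hz, ?_⟩
  filter_upwards [hU.mem_nhds hz] with y hy
  rw [laplacian_eq_sum_fderiv_fderiv (hfz y hy) (EuclideanSpace.basisFun (Fin n) ℝ), Pi.zero_apply]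
  simpa only [EuclideanSpace.basisFun_apply, lap] using hf.2 y hy

end SubMeanValue

section Carleson

open InnerProductSpace

lemma IsUniformDomain.exists_harnack_chain (n : ℕ) {c C : ℝ} (hc0 : 0 < c) (hc1 : c ≤ 1)
    (hC : 0 ≤ C) (K : ℝ) :
    ∃ γ : ℕ, γ ≠ 0 ∧ ∀ {U : Set (En n)} {h : En n → ℝ}, IsUniformDomain c C U →
      HarmonicOnNhd h U → (∀ z ∈ U, 0 ≤ h z) → ∀ a ∈ U, ∀ b ∈ U, ∀ s > 0,
        s ≤ infDist a (frontier U) → s ≤ infDist b (frontier U) → dist a b ≤ K * s →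
        h b ≤ 2 ^ γ * h a := by
  obtain ⟨N, hN⟩ := exists_nat_gt (max 0 (C * K / (c / 32)))
  have hN0 : 0 < N := by exact_mod_cast (le_max_left _ _).trans_lt hN
  have hCK : C * K ≤ N * (c / 32) :=
    (div_le_iff₀ (by positivity)).1 ((le_max_right _ _).trans hN.le)
  set M : ℝ := 4 / 3 * 4 ^ Module.finrank ℝ (En n)
  have hM : 1 ≤ M := one_le_mul_of_one_le_of_one_le (by norm_num) (one_le_pow₀ (by norm_num))
  obtain ⟨γ, hγ⟩ := pow_unbounded_of_one_lt (M ^ N) (one_lt_two (α := ℝ))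
  refine ⟨γ, ?_, fun {U h} hU hh h0 a ha b hb s hs has hbs hab => ?_⟩
  · rintro rfl
    exact (one_le_pow₀ hM).not_gt (by simpa using hγ)
  obtain ⟨q, rfl, rfl, hstep, hq⟩ := hU.exists_chain hc0.le hc1 hC ha hb hs.le has hbs hab hN0 hCK
  have hharnack : ∀ i ≤ N, h (q i) ≤ M ^ i * h (q 0) := fun i => by
    induction i with
    | zero => simp
    | succ i ih =>
      intro hi
      have hball : closedBall (q i) (4 * (c / 32 * s)) ⊆ U :=
        (closedBall_subset_ball (by nlinarith [(hq i (by lia)).2.1, mul_pos hc0 hs])).trans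
          (ball_infDist_frontier_subset hU.1 (hq i (by lia)).1)
      calc h (q (i + 1)) ≤ M * h (q i) := harnack_of_dist_le (by positivity)
            (fun z hz => hh z (hball hz)) (fun z hz => h0 z (hball hz)) (hstep i)
        _ ≤ M * (M ^ i * h (q 0)) := by gcongr; exact ih (by lia)
        _ = M ^ (i + 1) * h (q 0) := by ring
  exact (hharnack N le_rfl).trans (by gcongr; exact h0 _ ha)

lemma IsUniformDomain.exists_growth_bound (n : ℕ) {c C : ℝ} (hc0 : 0 < c) (hc1 : c ≤ 1)
    (hC : 0 ≤ C) {K : ℝ} (hK : 0 ≤ K) :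
    ∃ γ : ℕ, γ ≠ 0 ∧ ∀ {U : Set (En n)} {h : En n → ℝ}, IsUniformDomain c C U →
      ¬ Bornology.IsBounded U → HarmonicOnNhd h U → (∀ z ∈ U, 0 ≤ h z) →
      ∀ z ∈ U, ∀ ρ > 0, ρ ≤ infDist z (frontier U) → ∀ (k : ℕ), ∀ y ∈ U,
        (1 / 2) ^ k * ρ ≤ infDist y (frontier U) → dist z y ≤ K * ρ →
        h y ≤ (2 ^ γ) ^ (k + 1) * h z := by
  obtain ⟨γ, hγ, hchain⟩ := exists_harnack_chain n hc0 hc1 hC (K + 2 / c)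
  refine ⟨γ, hγ, fun {U h} hU hunb hh h0 z hz ρ hρ hzρ => ?_⟩
  -- Each step back to a corkscrew point costs a distance that is geometrically small in `k`.
  suffices hind : ∀ (k : ℕ), ∀ y ∈ U, (1 / 2) ^ k * ρ ≤ infDist y (frontier U) →
      dist z y ≤ (K + 2 / c * (1 / 2) ^ k) * ρ → h y ≤ (2 ^ γ) ^ (k + 1) * h z from
    fun k y hy hyρ hzy => hind k y hy hyρ
      (hzy.trans (by gcongr; exact le_add_of_nonneg_right (by positivity)))
  intro k
  induction k with
  | zero =>
    intro y hy hyρ hzy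
    simpa using hchain hU hh h0 z hz y hy ρ hρ hzρ (by simpa using hyρ) (by simpa using hzy)
  | succ k ih =>
    intro y hy hyρ hzy
    set s := (1 / 2) ^ (k + 1) * ρ with hs
    have hs2 : (1 / 2) ^ k * ρ = 2 * s := by rw [hs, pow_succ]; ring
    have hs0 : 0 < s := by positivity
    obtain ⟨p, hp, hyp, hpρ, -⟩ :=
      hU.exists_corkscrew hunb hc0.le hy (R := 4 * s / c) (by positivity)
    have hyp' : dist y p ≤ 2 / c * s := hyp.trans_eq (by ring)
    have hpρ' : 2 * s ≤ infDist p (frontier U) := le_of_eq_of_le (by field_simp; ring) hpρ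
    have hzp : dist z p ≤ (K + 2 / c * (1 / 2) ^ k) * ρ := by
      have htri := dist_triangle z y p
      have : (K + 2 / c * (1 / 2) ^ (k + 1)) * ρ + 2 / c * s =
          (K + 2 / c * (1 / 2) ^ k) * ρ := by linear_combination 2 / c * (-hs2)
      linarith
    calc h y ≤ 2 ^ γ * h p := hchain hU hh h0 p hp y hy s hs0 (by linarith) hyρ
          (by rw [dist_comm]; exact hyp'.trans (by gcongr; exact le_add_of_nonneg_left hK))
      _ ≤ 2 ^ γ * ((2 ^ γ) ^ (k + 1) * h z) := by
          gcongr
          exact ih p hp (hs2.trans_le hpρ') hzp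
      _ = (2 ^ γ) ^ (k + 1 + 1) * h z := by ring

lemma exists_isMax_mul_dist_pow {X : Type*} [PseudoMetricSpace X] [ProperSpace X] {g : X → ℝ}
    (hg : Continuous g) (hg0 : ∀ x, 0 ≤ g x) {z y₀ : X} {D κ : ℝ} (hy₀ : dist y₀ z < D)
    (hgy₀ : 0 < g y₀) {γ : ℕ} (hγ : γ ≠ 0) (hκ1 : κ ≤ 1) :
    ∃ y, dist y z < D ∧ 0 < g y ∧
      g y₀ * (D - dist y₀ z) ^ γ ≤ g y * (D - dist y z) ^ γ ∧
      ∀ y', dist y' y ≤ κ * (D - dist y z) → (1 - κ) ^ γ * g y' ≤ g y := by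
  have hcont : Continuous fun y => g y * (D - dist y z) ^ γ := by fun_prop
  obtain ⟨y, hyD, hmax⟩ := (isCompact_closedBall z D).exists_isMaxOn
    ⟨y₀, hy₀.le⟩ hcont.continuousOn
  have hle : g y₀ * (D - dist y₀ z) ^ γ ≤ g y * (D - dist y z) ^ γ := hmax hy₀.le
  have hpos : 0 < g y * (D - dist y z) ^ γ :=
    (mul_pos hgy₀ (pow_pos (sub_pos.2 hy₀) γ)).trans_le hle
  have hy : dist y z < D := lt_of_le_of_ne hyD fun heq => by simp [heq, hγ] at hpos
  have ht : 0 < D - dist y z := sub_pos.2 hy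
  refine ⟨y, hy, pos_of_mul_pos_left hpos (by positivity), hle,
    fun y' hy' => le_of_mul_le_mul_right ?_ (pow_pos ht γ)⟩
  have htri := dist_triangle y' y z
  have hy'D : (1 - κ) * (D - dist y z) ≤ D - dist y' z := by linarith
  have hnn : 0 ≤ (1 - κ) * (D - dist y z) := mul_nonneg (sub_nonneg.2 hκ1) ht.le
  calc (1 - κ) ^ γ * g y' * (D - dist y z) ^ γ
      = g y' * ((1 - κ) * (D - dist y z)) ^ γ := by rw [mul_pow]; ring
    _ ≤ g y' * (D - dist y' z) ^ γ := by gcongr; exact hg0 y'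
    _ ≤ g y * (D - dist y z) ^ γ := hmax (mem_closedBall.2 (by linarith))

lemma IsHarmonicProfile.exists_bound_of_almost_max (n : ℕ) {c C : ℝ} (hc0 : 0 < c) (hc1 : c ≤ 1)
    (hC : 0 ≤ C) {K : ℝ} (hK : 0 ≤ K) :
    ∃ ε > 0, ∃ γ : ℕ, γ ≠ 0 ∧ ∀ {U : Set (En n)} {h : En n → ℝ}, IsUniformDomain c C U →
      ¬ Bornology.IsBounded U → IsHarmonicProfile h U →
      ∀ z ∈ U, ∀ ρ > 0, ρ ≤ infDist z (frontier U) → ∀ (k : ℕ), ∀ y ∈ U, dist y z ≤ K * ρ →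
        (∀ y' ∈ U, dist y' y ≤ 8 / c * ((1 / 2) ^ k * ρ) → h y' < (1 + ε) * h y) →
        h y ≤ (2 ^ γ) ^ (k + 2) * h z := by
  obtain ⟨ε, hε, hgrowth⟩ :=
    exists_one_add_mul_le_of_le_half_on_ball (volume : Measure (En n)) (A := 8 / c) (by positivity)
  obtain ⟨γ, hγ, hbound⟩ :=
    IsUniformDomain.exists_growth_bound n hc0 hc1 hC (show 0 ≤ K + 2 / c + 1 by positivity)
  refine ⟨ε, hε, γ, hγ, fun {U h} hU hunb hh z hz ρ hρ hzρ k y hy hyz hmax => ?_⟩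
  by_contra! hlt
  set d := (1 / 2) ^ k * ρ
  have hd : 0 < d := by positivity
  have hdρ : d ≤ ρ := mul_le_of_le_one_left hρ.le (pow_le_one₀ (by norm_num) (by norm_num))
  obtain ⟨p, -, hyp, hpd, -⟩ :=
    hU.exists_corkscrew hunb hc0.le hy (R := 4 * d / c) (by positivity)
  have hyp' : dist y p ≤ 2 / c * d := hyp.trans_eq (by ring)
  have hpd' : 2 * d ≤ infDist p (frontier U) := le_of_eq_of_le (by field_simp; ring) hpd
  have hc : 1 ≤ 1 / c := one_le_one_div hc0 hc1
  have hsmall : ∀ q ∈ ball p d, q ∈ U → h q ≤ h y / 2 := fun q hq hqU => by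
    have hqd : d ≤ infDist q (frontier U) := by
      linarith [infDist_le_infDist_add_dist (s := frontier U) (x := p) (y := q), mem_ball'.1 hq]
    have hzq : dist z q ≤ (K + 2 / c + 1) * ρ := by
      have hpdρ : 2 / c * d ≤ 2 / c * ρ := by gcongr
      linarith [dist_triangle4 z y p q, dist_comm z y, mem_ball'.1 hq]
    have hhq := hbound hU hunb hh.harmonicOnNhd (fun w hw => (hh.pos w hw).le) z hz ρ hρ hzρ k q
      hqU hqd hzq
    have htwo : (2 : ℝ) ≤ 2 ^ γ := le_self_pow₀ one_le_two hγ
    have : 2 * h q ≤ (2 ^ γ) ^ (k + 2) * h z :=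
      calc 2 * h q ≤ 2 ^ γ * ((2 ^ γ) ^ (k + 1) * h z) := by gcongr; exact (hh.pos q hqU).le
        _ = (2 ^ γ) ^ (k + 2) * h z := by ring
    linarith
  obtain ⟨y', hy', hyy', hgr⟩ := hgrowth hU.1 hh y hy d hd p
    (by rw [dist_comm]; nlinarith [show 8 / c * d / 2 = 2 / c * d + 2 * (1 / c * d) by ring]) hsmall
  exact (hmax y' hy' hyy').not_ge hgr

lemma exists_dyadic_scale {a b t ρ : ℝ} (ha : 0 ≤ a) (hb : 0 < b) (ht : 0 < t) (hρ : 0 ≤ ρ) :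
    ∃ k : ℕ, a * ((1 / 2) ^ k * ρ) ≤ b * t ∧ 2 ^ k * t ≤ 2 * (t + a / b * ρ) := by
  obtain ⟨k, hk, hk'⟩ := exists_nat_pow_near (y := 2)
    (le_add_of_nonneg_right (by positivity) : 1 ≤ 1 + a * ρ / (b * t)) one_lt_two
  have hak : a * ρ ≤ 2 ^ (k + 1) * (b * t) :=
    (div_le_iff₀ (by positivity)).1 ((le_add_of_nonneg_left zero_le_one).trans hk'.le)
  refine ⟨k + 1, ?_, ?_⟩
  · rw [one_div_pow, one_div_mul_eq_div, ← mul_div_assoc]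
    exact (div_le_iff₀' (by positivity)).2 hak
  · calc 2 ^ (k + 1) * t ≤ 2 * (1 + a * ρ / (b * t)) * t := by rw [pow_succ']; gcongr
      _ = 2 * (t + a / b * ρ) := by field_simp

lemma exists_one_lt_mul_one_sub_pow {a : ℝ} (ha : 1 < a) (γ : ℕ) :
    ∃ κ ∈ Ioo (0 : ℝ) 1, 1 < a * (1 - κ) ^ γ := by
  have hlim : Filter.Tendsto (fun κ : ℝ => a * (1 - κ) ^ γ) (nhdsWithin 0 (Ioi 0))
      (nhds (a * (1 - 0) ^ γ)) :=
    (Continuous.tendsto (by fun_prop) 0).mono_left nhdsWithin_le_nhds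
  exact ((Filter.eventually_of_mem (Ioo_mem_nhdsGT one_pos) fun _ => id).and
    (hlim.eventually_const_lt (by simpa using ha))).exists

theorem IsHarmonicProfile.exists_carleson (n : ℕ) {c C : ℝ} (hc0 : 0 < c) (hc1 : c ≤ 1)
    (hC : 0 ≤ C) {K : ℝ} (hK : 0 ≤ K) :
    ∃ M > 0, ∀ {U : Set (En n)} {h : En n → ℝ}, IsUniformDomain c C U →
      ¬ Bornology.IsBounded U → IsHarmonicProfile h U →
      ∀ z ∈ U, ∀ ρ > 0, ρ ≤ infDist z (frontier U) → ∀ y ∈ U, dist y z ≤ K * ρ →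
        h y ≤ M * h z := by
  obtain ⟨ε, hε, γ, hγ, hbound⟩ :=
    exists_bound_of_almost_max n hc0 hc1 hC (show 0 ≤ K + 1 by positivity)
  obtain ⟨κ, ⟨hκ0, hκ1⟩, hκ⟩ := exists_one_lt_mul_one_sub_pow (lt_add_of_pos_right 1 hε) γ
  refine ⟨(2 * (K + 1 + 8 / c / κ)) ^ γ * (2 ^ γ) ^ 2, by positivity,
    fun {U h} hU hunb hh z hz ρ hρ hzρ y₀ hy₀ hyz₀ => ?_⟩
  obtain ⟨y, hyD, hgy, hle, hmax⟩ := exists_isMax_mul_dist_pow hh.continuous_indicator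
    hh.indicator_nonneg (show dist y₀ z < (K + 1) * ρ by linarith)
    (by rw [indicator_of_mem hy₀]; exact hh.pos y₀ hy₀) hγ hκ1.le
  set t := (K + 1) * ρ - dist y z
  have ht : 0 < t := sub_pos.2 hyD
  have hy : y ∈ U := mem_of_indicator_ne_zero hgy.ne'
  rw [indicator_of_mem hy, indicator_of_mem hy₀] at hle
  obtain ⟨k, hAk, hkt⟩ := exists_dyadic_scale (a := 8 / c) (by positivity) hκ0 ht hρ.le
  have hhy : h y ≤ (2 ^ γ) ^ (k + 2) * h z := by
    refine hbound hU hunb hh z hz ρ hρ hzρ k y hy hyD.le fun y' hy' hyy' => ?_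
    have := hmax y' (hyy'.trans hAk)
    rw [indicator_of_mem hy, indicator_of_mem hy'] at this
    nlinarith [hh.pos y' hy']
  have hkt' : 2 ^ k * t ≤ 2 * (K + 1 + 8 / c / κ) * ρ := by
    have : t ≤ (K + 1) * ρ := sub_le_self _ dist_nonneg
    linarith
  have hz0 : 0 ≤ h z := (hh.pos z hz).le
  refine le_of_mul_le_mul_right ?_ (pow_pos hρ γ)
  calc h y₀ * ρ ^ γ ≤ h y * t ^ γ := by
        refine le_trans ?_ hle
        gcongr
        · exact (hh.pos y₀ hy₀).le
        · linarith
    _ ≤ (2 ^ γ) ^ (k + 2) * h z * t ^ γ := by gcongr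
    _ = (2 ^ k * t) ^ γ * (2 ^ γ) ^ 2 * h z := by
        rw [pow_add, mul_pow, ← pow_mul, ← pow_mul, mul_comm γ k]; ring
    _ ≤ (2 * (K + 1 + 8 / c / κ) * ρ) ^ γ * (2 ^ γ) ^ 2 * h z := by
        gcongr
    _ = _ := by rw [mul_pow]; ring

end Carleson

section BallAverages

open Module

variable {E : Type*} [NormedAddCommGroup E] [NormedSpace ℝ E] {F : Type*} [NormedAddCommGroup F]
  [NormedSpace ℝ F] {U : Set E} {f : E → F}

lemma enorm_sub_le_lintegral_fderiv (hU : IsOpen U) (hf : ContDiffOn ℝ 1 f U) {p q : E}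
    (hpq : segment ℝ p q ⊆ U) :
    ‖f q - f p‖ₑ ≤ ∫⁻ t in Icc (0 : ℝ) 1, ‖fderiv ℝ f (AffineMap.lineMap p q t)‖ₑ * ‖q - p‖ₑ := by
  have hmaps : MapsTo (AffineMap.lineMap (k := ℝ) p q) (Icc 0 1) U := fun t ht =>
    hpq (segment_eq_image_lineMap ℝ p q ▸ mem_image_of_mem _ ht)
  have hline : ContDiff ℝ 1 (AffineMap.lineMap (k := ℝ) p q) := by
    simpa only [AffineMap.lineMap_apply_module'] using by fun_prop
  have hftc := enorm_sub_le_lintegral_deriv_of_contDiffOn_Icc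
    (hf.comp hline.contDiffOn hmaps) zero_le_one
  simp only [Function.comp_apply, AffineMap.lineMap_apply_zero, AffineMap.lineMap_apply_one]
    at hftc
  refine hftc.trans (setLIntegral_mono' measurableSet_Icc fun t ht => ?_)
  have hd := (hf.contDiffAt (hU.mem_nhds (hmaps ht))).differentiableAt one_ne_zero
  rw [(hd.hasFDerivAt.comp_hasDerivAt t AffineMap.hasDerivAt_lineMap).deriv]
  exact ContinuousLinearMap.le_opENorm _ _

lemma add_smul_mem_closedBall {q v : E} {s : ℝ} (hs : 0 ≤ s) (hv : v ∈ closedBall (0 : E) 1) :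
    q + s • v ∈ closedBall q s := by
  rw [mem_closedBall_iff_norm, add_sub_cancel_left, norm_smul, Real.norm_of_nonneg hs]
  exact mul_le_of_le_one_right hs (mem_closedBall_zero_iff.1 hv)

variable [MeasurableSpace E] [BorelSpace E]

lemma measurableEmbedding_add_smul (q : E) {s : ℝ} (hs : s ≠ 0) :
    MeasurableEmbedding (fun v : E => q + s • v) :=
  (measurableEmbedding_addLeft q).comp (measurableEmbedding_const_smul₀ hs)

variable [FiniteDimensional ℝ E] {μ : Measure E} [μ.IsAddHaarMeasure]

lemma map_cond_ball (q : E) {s : ℝ} (hs : 0 < s) :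
    (ProbabilityTheory.cond μ (ball 0 1)).map (fun v => q + s • v) =
      ProbabilityTheory.cond μ (ball q s) := by
  let e : E ≃ᵐ E :=
    ((Homeomorph.smulOfNeZero s hs.ne').trans (Homeomorph.addLeft q)).toMeasurableEquiv
  have he : ⇑e = fun v => q + s • v := rfl
  have hpre : e ⁻¹' ball q s = ball 0 1 := by
    ext v
    simp [he, norm_smul, abs_of_pos hs, mul_lt_iff_lt_one_right hs]
  have hmap : μ.map e = ENNReal.ofReal ((s ^ finrank ℝ E)⁻¹) • μ := by
    have : ⇑e = (q + ·) ∘ (s • ·) := rfl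
    rw [this, ← Measure.map_map (by fun_prop) (by fun_prop), Measure.map_addHaar_smul μ hs.ne',
      Measure.map_smul, map_add_left_eq_self, abs_of_pos (by positivity)]
  rw [← he, ProbabilityTheory.cond, ProbabilityTheory.cond, Measure.map_smul, ← hpre,
    ← e.restrict_map, hmap, Measure.restrict_smul, smul_smul, hpre,
    Measure.addHaar_ball_of_pos μ q hs,
    ENNReal.mul_inv (.inr measure_ball_lt_top.ne) (.inl ENNReal.ofReal_ne_top),
    ENNReal.ofReal_inv_of_pos (by positivity), mul_comm]

lemma setAverage_ball_eq (f : E → F) (q : E) {s : ℝ} (hs : 0 < s) :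
    ⨍ x in ball q s, f x ∂μ = ∫ v, f (q + s • v) ∂(ProbabilityTheory.cond μ (ball 0 1)) := by
  rw [setAverage_eq', ← (measurableEmbedding_add_smul q hs.ne').integral_map, map_cond_ball q hs,
    ProbabilityTheory.cond]

lemma setLAverage_ball_eq (g : E → ℝ≥0∞) (q : E) {s : ℝ} (hs : 0 < s) :
    ⨍⁻ x in ball q s, g x ∂μ = ∫⁻ v, g (q + s • v) ∂(ProbabilityTheory.cond μ (ball 0 1)) := by
  rw [setLAverage_eq', ← (measurableEmbedding_add_smul q hs.ne').lintegral_map,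
    map_cond_ball q hs, ProbabilityTheory.cond]

lemma measure_ball_le_of_le_mul (μ : Measure E) [μ.IsAddHaarMeasure] (a b : E) {K R s : ℝ}
    (hK : 0 < K) (hRs : R ≤ K * s) :
    μ (ball b R) ≤ ENNReal.ofReal (K ^ finrank ℝ E) * μ (ball a s) := by
  rw [Measure.addHaar_ball_center μ a, ← Measure.addHaar_ball_mul_of_pos μ b hK]
  exact measure_mono (ball_subset_ball hRs)

lemma setLAverage_ball_le_of_subset (g : E → ℝ≥0∞) {a b : E} {K R s : ℝ} (hK : 0 < K)
    (hs : 0 < s) (hRs : R ≤ K * s) (hsub : ball a s ⊆ ball b R) :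
    ⨍⁻ x in ball a s, g x ∂μ ≤ ENNReal.ofReal (K ^ finrank ℝ E) * ⨍⁻ x in ball b R, g x ∂μ := by
  have hμ : μ (ball a s) ≠ 0 := (measure_ball_pos μ a hs).ne'
  have hR : μ (ball b R) ≠ 0 := ne_bot_of_le_ne_bot hμ (measure_mono hsub)
  rw [setLAverage_eq, setLAverage_eq, ← mul_div_assoc]
  refine ENNReal.div_le_of_le_mul' ?_
  rw [← mul_div_assoc, ENNReal.le_div_iff_mul_le (.inl hR) (.inl measure_ball_lt_top.ne)]
  calc (∫⁻ x in ball a s, g x ∂μ) * μ (ball b R)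
      ≤ (∫⁻ x in ball b R, g x ∂μ) * (ENNReal.ofReal (K ^ finrank ℝ E) * μ (ball a s)) :=
        mul_le_mul' (lintegral_mono_set hsub) (measure_ball_le_of_le_mul μ a b hK hRs)
    _ = _ := by ring

lemma integrable_comp_add_smul_cond_ball {G : Type*} [NormedAddCommGroup G] {f : E → G} {q : E}
    {s : ℝ} (hs : 0 < s) (hf : ContinuousOn f (closedBall q s)) :
    Integrable (fun v => f (q + s • v)) (ProbabilityTheory.cond μ (ball 0 1)) := by
  have hint : Integrable f (ProbabilityTheory.cond μ (ball q s)) :=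
    ((hf.integrableOn_compact (isCompact_closedBall q s)).mono_set
      ball_subset_closedBall).smul_measure (ENNReal.inv_ne_top.2 (measure_ball_pos μ q hs).ne')
  rwa [← map_cond_ball q hs, (measurableEmbedding_add_smul q hs.ne').integrable_map_iff] at hint

lemma enorm_setAverage_ball_sub_le_lintegral [CompleteSpace F] (hU : IsOpen U)
    (hf : ContDiffOn ℝ 1 f U) {q q' : E} {D s s' : ℝ} (hs : 0 < s) (hs' : 0 < s')
    (hD : ∀ v ∈ ball (0 : E) 1, dist (q' + s' • v) (q + s • v) ≤ D) {V : Set E}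
    (hV : Convex ℝ V) (hVU : V ⊆ U) (hq : closedBall q s ⊆ V) (hq' : closedBall q' s' ⊆ V) :
    ‖⨍ x in ball q' s', f x ∂μ - ⨍ x in ball q s, f x ∂μ‖ₑ ≤ ENNReal.ofReal D *
      ∫⁻ t in Icc (0 : ℝ) 1, ⨍⁻ x in ball (AffineMap.lineMap q q' t) (AffineMap.lineMap s s' t),
        ‖fderiv ℝ f x‖ₑ ∂μ := by
  set ν := ProbabilityTheory.cond μ (ball (0 : E) 1)
  let qt (t : ℝ) : E := AffineMap.lineMap q q' t
  let st (t : ℝ) : ℝ := AffineMap.lineMap s s' t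
  have hst : ∀ t ∈ Icc (0 : ℝ) 1, 0 < st t := fun t ht =>
    mem_Ioi.1 ((convex_Ioi (0 : ℝ)).lineMap_mem (mem_Ioi.2 hs) (mem_Ioi.2 hs') ht)
  have hline (v : E) (t : ℝ) :
      AffineMap.lineMap (q + s • v) (q' + s' • v) t = qt t + st t • v := by
    simp only [qt, st, AffineMap.lineMap_apply_module]
    module
  have hpt : ∀ v ∈ ball (0 : E) 1, ‖f (q' + s' • v) - f (q + s • v)‖ₑ ≤
      ENNReal.ofReal D * ∫⁻ t in Icc (0 : ℝ) 1, ‖fderiv ℝ f (qt t + st t • v)‖ₑ := fun v hv => by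
    have h := enorm_sub_le_lintegral_fderiv hU hf
      ((hV.segment_subset (hq (add_smul_mem_closedBall hs.le (ball_subset_closedBall hv)))
        (hq' (add_smul_mem_closedBall hs'.le (ball_subset_closedBall hv)))).trans hVU)
    simp only [hline] at h
    rw [lintegral_mul_const' _ _ enorm_ne_top, mul_comm, ← edist_eq_enorm_sub (q' + _)] at h
    refine h.trans (mul_le_mul' ?_ le_rfl)
    exact (edist_le_ofReal (dist_nonneg.trans (hD v hv))).2 (hD v hv)
  have hmeas : Measurable fun p : E × ℝ => ‖fderiv ℝ f (qt p.2 + st p.2 • p.1)‖ₑ := by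
    have : Measurable fun p : E × ℝ => qt p.2 + st p.2 • p.1 := by
      simp only [qt, st, AffineMap.lineMap_apply_module]
      fun_prop
    exact ((measurable_fderiv ℝ f).comp this).enorm
  calc ‖⨍ x in ball q' s', f x ∂μ - ⨍ x in ball q s, f x ∂μ‖ₑ
      = ‖∫ v, (f (q' + s' • v) - f (q + s • v)) ∂ν‖ₑ := by
        rw [setAverage_ball_eq f q' hs', setAverage_ball_eq f q hs, integral_sub] <;>
          exact integrable_comp_add_smul_cond_ball ‹_› (hf.continuousOn.mono (by grind))
    _ ≤ ∫⁻ v, ENNReal.ofReal D *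
          ∫⁻ t in Icc (0 : ℝ) 1, ‖fderiv ℝ f (qt t + st t • v)‖ₑ ∂volume ∂ν :=
        (enorm_integral_le_lintegral_enorm _).trans (lintegral_mono_ae
          (ProbabilityTheory.ae_cond_of_forall_mem measurableSet_ball hpt))
    _ = ENNReal.ofReal D * ∫⁻ t in Icc (0 : ℝ) 1, ∫⁻ v, ‖fderiv ℝ f (qt t + st t • v)‖ₑ ∂ν := by
        rw [lintegral_const_mul' _ _ ENNReal.ofReal_ne_top,
          lintegral_lintegral_swap hmeas.aemeasurable]
    _ = _ := by
        congr 1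
        exact setLIntegral_congr_fun measurableSet_Icc fun t ht =>
          (setLAverage_ball_eq (fun x => ‖fderiv ℝ f x‖ₑ) (qt t) (hst t ht)).symm

lemma enorm_setAverage_ball_sub_le [CompleteSpace F] (hU : IsOpen U) (hf : ContDiffOn ℝ 1 f U)
    {q q' : E} {σ s s' : ℝ} (hσ : 0 < σ) (hs : s ∈ Icc (σ / 2) σ) (hs' : s' ∈ Icc (σ / 2) σ)
    (hqq' : dist q q' ≤ σ) (hqU : closedBall q (2 * σ) ⊆ U) :
    ‖⨍ x in ball q' s', f x ∂μ - ⨍ x in ball q s, f x ∂μ‖ₑ ≤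
      ENNReal.ofReal (2 * 4 ^ finrank ℝ E * σ) *
        ⨍⁻ x in ball q (2 * σ), ‖fderiv ℝ f x‖ₑ ∂μ := by
  have hs0 : 0 < s := by linarith [hs.1]
  have hs0' : 0 < s' := by linarith [hs'.1]
  have hD : ∀ v ∈ ball (0 : E) 1, dist (q' + s' • v) (q + s • v) ≤ 2 * σ := fun v hv => by
    have hsv : dist (s' • v) (s • v) ≤ |s' - s| := by
      rw [dist_eq_norm, ← sub_smul, norm_smul]
      exact mul_le_of_le_one_right (norm_nonneg _) (mem_ball_zero_iff.1 hv).le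
    have hss : |s' - s| ≤ σ := abs_le.2 ⟨by linarith [hs.2, hs'.1], by linarith [hs.1, hs'.2]⟩
    linarith [dist_add_add_le q' (s' • v) q (s • v), dist_comm q q']
  have hqt : ∀ t ∈ Icc (0 : ℝ) 1, ⨍⁻ x in ball (AffineMap.lineMap q q' t)
      (AffineMap.lineMap s s' t), ‖fderiv ℝ f x‖ₑ ∂μ ≤ ENNReal.ofReal (4 ^ finrank ℝ E) *
        ⨍⁻ x in ball q (2 * σ), ‖fderiv ℝ f x‖ₑ ∂μ := fun t ht => by
    have hst := (convex_Icc (σ / 2) σ).lineMap_mem hs hs' ht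
    have hqt : dist (AffineMap.lineMap q q' t) q ≤ σ := by
      rw [dist_lineMap_left, Real.norm_of_nonneg ht.1]
      exact (mul_le_of_le_one_left dist_nonneg ht.2).trans hqq'
    exact setLAverage_ball_le_of_subset _ four_pos (by linarith [hst.1]) (by linarith [hst.1])
      (ball_subset_ball' (by linarith [hst.2]))
  refine (enorm_setAverage_ball_sub_le_lintegral hU hf hs0 hs0' hD (convex_closedBall q (2 * σ))
    hqU (closedBall_subset_closedBall (by linarith [hs.2]))
    (closedBall_subset_closedBall' (by linarith [hs'.2, dist_comm q q']))).trans ?_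
  calc ENNReal.ofReal (2 * σ) * ∫⁻ t in Icc (0 : ℝ) 1, _
      ≤ ENNReal.ofReal (2 * σ) * ∫⁻ _ in Icc (0 : ℝ) 1, ENNReal.ofReal (4 ^ finrank ℝ E) *
          ⨍⁻ x in ball q (2 * σ), ‖fderiv ℝ f x‖ₑ ∂μ :=
        mul_le_mul' le_rfl (setLIntegral_mono' measurableSet_Icc hqt)
    _ = _ := by
        rw [setLIntegral_const, Real.volume_Icc, sub_zero, ENNReal.ofReal_one, mul_one, ← mul_assoc,
          ← ENNReal.ofReal_mul (by positivity)]
        congr 2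
        ring

lemma edist_setAverage_ball_le_of_chain [CompleteSpace F] (hU : IsOpen U)
    (hf : ContDiffOn ℝ 1 f U) {q : ℕ → E} {N : ℕ} {σ s : ℝ} (hσ : 0 < σ) (hs : s ∈ Icc (σ / 2) σ)
    {Ω : Set E} (hΩU : Ω ⊆ U) (hq : ∀ i, dist (q i) (q (i + 1)) ≤ σ)
    (hqΩ : ∀ i ≤ N, closedBall (q i) (2 * σ) ⊆ Ω) :
    edist (⨍ x in ball (q 0) σ, f x ∂μ) (⨍ x in ball (q N) s, f x ∂μ) ≤
      (N + 1) * (ENNReal.ofReal (2 * 4 ^ finrank ℝ E * σ) *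
        ((μ (ball 0 σ))⁻¹ * ∫⁻ x in Ω, ‖fderiv ℝ f x‖ₑ ∂μ)) := by
  set M := ENNReal.ofReal (2 * 4 ^ finrank ℝ E * σ) *
    ((μ (ball 0 σ))⁻¹ * ∫⁻ x in Ω, ‖fderiv ℝ f x‖ₑ ∂μ)
  have hσσ : σ ∈ Icc (σ / 2) σ := ⟨half_le_self hσ.le, le_rfl⟩
  have hstep {p : E} {ρ : ℝ} {i : ℕ} (hi : i ≤ N) (hρ : ρ ∈ Icc (σ / 2) σ)
      (hp : dist (q i) p ≤ σ) :
      edist (⨍ x in ball (q i) σ, f x ∂μ) (⨍ x in ball p ρ, f x ∂μ) ≤ M := by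
    rw [edist_comm, edist_eq_enorm_sub]
    refine (enorm_setAverage_ball_sub_le hU hf hσ hσσ hρ hp ((hqΩ i hi).trans hΩU)).trans
      (mul_le_mul' le_rfl ?_)
    rw [setLAverage_eq, div_eq_mul_inv, mul_comm, Measure.addHaar_ball_center]
    gcongr
    · linarith
    · exact ball_subset_closedBall.trans (hqΩ i hi)
  calc edist (⨍ x in ball (q 0) σ, f x ∂μ) (⨍ x in ball (q N) s, f x ∂μ)
      ≤ edist (⨍ x in ball (q 0) σ, f x ∂μ) (⨍ x in ball (q N) σ, f x ∂μ) +
        edist (⨍ x in ball (q N) σ, f x ∂μ) (⨍ x in ball (q N) s, f x ∂μ) := edist_triangle _ _ _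
    _ ≤ ∑ _i ∈ Finset.range N, M + M := by
        gcongr
        · exact edist_le_range_sum_of_edist_le (f := fun i => ⨍ x in ball (q i) σ, f x ∂μ) N
            fun hi => hstep hi.le hσσ (hq _)
        · exact hstep le_rfl hs (by simpa using hσ.le)
    _ = (N + 1) * M := by simp [add_mul]

lemma tendsto_setAverage_ball [CompleteSpace F] (hU : IsOpen U) (hf : ContinuousOn f U) {y : E}
    (hy : y ∈ U) {ι : Type*} {l : Filter ι} {q : ι → E} {s : ι → ℝ}
    (hq : Filter.Tendsto q l (nhds y)) (hs : Filter.Tendsto s l (nhds 0)) (hs0 : ∀ i, 0 < s i) :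
    Filter.Tendsto (fun i => ⨍ x in ball (q i) (s i), f x ∂μ) l (nhds (f y)) := by
  refine Metric.nhds_basis_closedBall.tendsto_right_iff.2 fun ε hε => ?_
  obtain ⟨δ, hδ, hδε⟩ := Metric.mem_nhds_iff.1 (Filter.inter_mem (hU.mem_nhds hy)
    (hf.continuousAt (hU.mem_nhds hy) (closedBall_mem_nhds (f y) hε)))
  filter_upwards [hq.eventually_mem (ball_mem_nhds y (half_pos hδ)),
    hs.eventually_lt_const (half_pos hδ)] with i hqi hsi
  have hsub : closedBall (q i) (s i) ⊆ ball y δ :=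
    closedBall_subset_ball' (by linarith [mem_ball.1 hqi])
  have hint : IntegrableOn f (closedBall (q i) (s i)) μ :=
    (hf.mono fun p hp => (hδε (hsub hp)).1).integrableOn_compact (isCompact_closedBall _ _)
  exact (convex_closedBall (f y) ε).set_average_mem isClosed_closedBall
    (measure_ball_pos μ _ (hs0 i)).ne' measure_ball_lt_top.ne
    (ae_restrict_of_forall_mem measurableSet_ball fun p hp =>
      (hδε (hsub (ball_subset_closedBall hp))).2) (hint.mono_set ball_subset_closedBall)

end BallAverages

section PointwiseBound

/-- The pairs `(y, z)` with `z` in `B`, at distance at most `3 * τ` from `y` and at least `κ * τ`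
away from the boundary of `U`. The section over `y` is the region where the gradient of a function
controls how much its averages near `y` change at the scale `τ`. -/
def whitneyPairs {X : Type*} [PseudoMetricSpace X] (U B : Set X) (κ τ : ℝ) : Set (X × X) :=
  {p | p.2 ∈ B ∧ dist p.1 p.2 ≤ 3 * τ ∧ κ * τ ≤ infDist p.2 (frontier U)}

lemma closedBall_subset_section_whitneyPairs {E : Type*} [NormedAddCommGroup E] [NormedSpace ℝ E]
    {U : Set E} (hU : IsOpen U) {x y q : E} {r κ τ : ℝ} (hκ0 : 0 < κ) (hκ1 : κ ≤ 1 / 16)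
    (hτ : 0 < τ) (hτr : τ ≤ r) (hq : q ∈ U) (hqU : 8 * (κ * τ) ≤ infDist q (frontier U))
    (hyq : dist y q ≤ 17 / 8 * τ) (hxq : innerDist U x q ≤ ENNReal.ofReal (r - 13 / 16 * τ)) :
    closedBall q (2 * (κ * τ)) ⊆ Prod.mk y ⁻¹' whitneyPairs U (innerBall U x r) κ τ := by
  have hκτ : 0 < κ * τ := mul_pos hκ0 hτ
  have hκτ' : κ * τ ≤ 1 / 16 * τ := by gcongr
  have hball : ball q (8 * (κ * τ)) ⊆ U :=
    (ball_subset_ball hqU).trans (ball_infDist_frontier_subset hU hq)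
  intro p hp
  have hpq : dist q p ≤ 2 * (κ * τ) := mem_closedBall'.1 hp
  have hp8 : p ∈ ball q (8 * (κ * τ)) := mem_ball'.2 (by linarith)
  refine ⟨⟨hball hp8, ?_⟩, ?_, ?_⟩
  · calc innerDist U x p ≤ innerDist U x q + innerDist U q p := innerDist_triangle U x q p
      _ ≤ ENNReal.ofReal (r - 13 / 16 * τ) + ENNReal.ofReal (2 * (κ * τ)) := by
        refine add_le_add hxq ((innerDist_le_edist ?_).trans
          ((edist_le_ofReal (by positivity)).2 hpq))
        exact ((convex_ball _ _).segment_subset (mem_ball_self (by positivity)) hp8).trans hball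
      _ < ENNReal.ofReal r := by
        rw [← ENNReal.ofReal_add (by linarith) (by positivity),
          ENNReal.ofReal_lt_ofReal_iff (by linarith)]
        linarith
  · linarith [dist_triangle y q p]
  · linarith [infDist_le_infDist_add_dist (s := frontier U) (x := q) (y := p)]

namespace IsUniformDomain

variable {n : ℕ} {c C ε : ℝ} {U : Set (En n)} {x : En n} {r : ℝ}

lemma exists_corkscrew_sequence (hU : IsUniformDomain c C U) (hunb : ¬ Bornology.IsBounded U)
    (hc : 0 ≤ c) (hC : 0 ≤ C) (hε0 : 0 < ε) (hε2 : ε ≤ 1 / 2) (hCε : C * ε ≤ 1 / 16)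
    (hr : 0 < r) :
    ∃ z₀, ∀ y ∈ innerBall U x r, ∃ z : ℕ → En n, z 0 = z₀ ∧ ∀ j, z j ∈ U ∧
      c * (ε * (r * (1 - ε) ^ j)) / 4 ≤ infDist (z j) (frontier U) ∧
      c * (ε * (r * (1 - ε) ^ j)) / 4 ≤ infDist (z (j + 1)) (frontier U) ∧
      dist (z j) (z (j + 1)) ≤ 2 * (ε * (r * (1 - ε) ^ j)) ∧
      dist (z j) y ≤ 2 * (r * (1 - ε) ^ j) ∧
      innerDist U x (z j) ≤ ENNReal.ofReal (r - 15 / 16 * (r * (1 - ε) ^ j)) := by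
  have hcork : ∀ w ∈ U, ∀ R > 0, ∃ z ∈ U, dist w z ≤ R / 2 ∧
      c * R / 2 ≤ infDist z (frontier U) ∧ innerDist U w z ≤ ENNReal.ofReal (C * R) :=
    fun w hw R hR => hU.exists_corkscrew hunb hc hw hR
  choose! Z hZU hZd hZfar hZinner using hcork
  refine ⟨Z x (ε * r), fun y hy => ?_⟩
  have hε1 : ε < 1 := by linarith
  have hθ0 : 0 < 1 - ε := sub_pos.2 hε1
  obtain ⟨Y, hY0, hY⟩ := exists_geometric_approach hy.2 hθ0.le (sub_le_self 1 hε0.le)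
  refine ⟨fun j => Z (Y j) (ε * (r * (1 - ε) ^ j)), by simp [hY0], fun j => ?_⟩
  obtain ⟨hYU, hYx, hYd, hYy⟩ := hY j
  set τ := r * (1 - ε) ^ j with hτ
  have hτ0 : 0 < τ := by positivity
  have hετ : 0 < ε * τ := by positivity
  have hετ' : ε * τ ≤ τ := mul_le_of_le_one_left hτ0.le hε1.le
  have hτr : τ ≤ r := mul_le_of_le_one_right hr.le (pow_le_one₀ hθ0.le (sub_le_self 1 hε0.le))
  have hnext : ε * (r * (1 - ε) ^ (j + 1)) = (1 - ε) * (ε * τ) := by rw [hτ]; ring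
  have hcετ : 0 ≤ c * (ε * τ) := by positivity
  have hnext' : (1 - ε) * (ε * τ) ≤ ε * τ := mul_le_of_le_one_left hετ.le (sub_le_self 1 hε0.le)
  have hzd := hZd (Y j) hYU (ε * τ) hετ
  have hzd' := hZd (Y (j + 1)) (hY (j + 1)).1 (ε * (r * (1 - ε) ^ (j + 1))) (by positivity)
  have hzfar := hZfar (Y (j + 1)) (hY (j + 1)).1 (ε * (r * (1 - ε) ^ (j + 1))) (by positivity)
  rw [hnext] at hzd' hzfar
  refine ⟨hZU _ hYU _ hετ, (hZfar _ hYU _ hετ).trans' (by gcongr; norm_num), ?_, ?_, ?_, ?_⟩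
  · simp only [hnext]
    exact hzfar.trans' (by nlinarith)
  · simp only [hnext, ← hτ]
    linarith [dist_triangle4_left (Y j) (Y (j + 1)) (Z (Y j) (ε * τ))
      (Z (Y (j + 1)) ((1 - ε) * (ε * τ)))]
  · linarith [dist_triangle_left (Z (Y j) (ε * τ)) y (Y j)]
  · have hCετ : C * (ε * τ) ≤ 1 / 16 * τ := by rw [← mul_assoc]; gcongr
    calc innerDist U x (Z (Y j) (ε * τ))
        ≤ ENNReal.ofReal (r - τ) + ENNReal.ofReal (C * (ε * τ)) :=
          (innerDist_triangle U x (Y j) _).trans (add_le_add hYx (hZinner _ hYU _ hετ))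
      _ = ENNReal.ofReal (r - τ + C * (ε * τ)) :=
          (ENNReal.ofReal_add (by linarith) (by positivity)).symm
      _ ≤ ENNReal.ofReal (r - 15 / 16 * τ) := ENNReal.ofReal_le_ofReal (by linarith)

lemma exists_chain_section_whitneyPairs (hU : IsUniformDomain c C U) (hc0 : 0 < c) (hc1 : c ≤ 1)
    (hC : 0 ≤ C) (hε0 : 0 < ε) (hε1 : ε ≤ 1) (hCε : C * ε ≤ 1 / 16) {N : ℕ} (hN0 : 0 < N)
    (hN : 128 * C / c ^ 2 ≤ N) {y a b : En n} {τ : ℝ} (hτ : 0 < τ) (hτr : τ ≤ r) (ha : a ∈ U)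
    (hb : b ∈ U) (haU : c * (ε * τ) / 4 ≤ infDist a (frontier U))
    (hbU : c * (ε * τ) / 4 ≤ infDist b (frontier U)) (hab : dist a b ≤ 2 * (ε * τ))
    (hay : dist a y ≤ 2 * τ) (hxa : innerDist U x a ≤ ENNReal.ofReal (r - 15 / 16 * τ)) :
    ∃ q : ℕ → En n, q 0 = a ∧ q N = b ∧
      (∀ i, dist (q i) (q (i + 1)) ≤ c ^ 2 * ε / 64 * τ) ∧
      ∀ i ≤ N, closedBall (q i) (2 * (c ^ 2 * ε / 64 * τ)) ⊆
        Prod.mk y ⁻¹' whitneyPairs U (innerBall U x r) (c ^ 2 * ε / 64) τ := by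
  have hCετ : C * (ε * τ) ≤ 1 / 16 * τ := by rw [← mul_assoc]; gcongr
  have hκ : c ^ 2 * ε / 64 ≤ 1 / 16 := by
    linarith [mul_le_one₀ (pow_le_one₀ hc0.le hc1 : c ^ 2 ≤ 1) hε0.le hε1]
  obtain ⟨q, hq0, hqN, hqd, hq⟩ := hU.exists_chain hc0.le hc1 hC ha hb
    (s := c * (ε * τ) / 4) (by positivity) haU hbU (K := 8 / c) (e := c / 16)
    (hab.trans_eq (by field_simp; norm_num)) hN0 (by
      rw [div_le_iff₀ (by positivity)] at hN
      rw [mul_div_assoc', div_le_iff₀ hc0]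
      linarith)
  refine ⟨q, hq0, hqN, fun i => (hqd i).trans_eq (by ring), fun i hi => ?_⟩
  obtain ⟨hqU, hqfar, hqinner⟩ := hq i hi
  have hK : C * (8 / c * (c * (ε * τ) / 4)) = 2 * (C * (ε * τ)) := by field_simp; ring
  rw [hK] at hqinner
  have haq : dist a (q i) ≤ 2 * (C * (ε * τ)) :=
    (edist_le_ofReal (by positivity)).1 ((edist_le_innerDist U a (q i)).trans hqinner)
  refine closedBall_subset_section_whitneyPairs hU.1 (by positivity) hκ hτ hτr hqU
    (hqfar.trans_eq' (by ring)) ?_ ?_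
  · linarith [dist_triangle_left y (q i) a]
  · calc innerDist U x (q i)
        ≤ ENNReal.ofReal (r - 15 / 16 * τ) + ENNReal.ofReal (2 * (C * (ε * τ))) :=
          (innerDist_triangle U x a (q i)).trans (add_le_add hxa hqinner)
      _ = ENNReal.ofReal (r - 15 / 16 * τ + 2 * (C * (ε * τ))) :=
          (ENNReal.ofReal_add (by linarith) (by positivity)).symm
      _ ≤ ENNReal.ofReal (r - 13 / 16 * τ) := ENNReal.ofReal_le_ofReal (by linarith)

lemma edist_setAverage_ball_le_lintegral_section_whitneyPairs (hU : IsUniformDomain c C U)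
    (hc0 : 0 < c) (hc1 : c ≤ 1) (hC : 0 ≤ C) (hε0 : 0 < ε) (hε1 : ε ≤ 1) (hCε : C * ε ≤ 1 / 16)
    {N : ℕ} (hN0 : 0 < N) (hN : 128 * C / c ^ 2 ≤ N) {y a b : En n} {τ s κ : ℝ} (hτ : 0 < τ)
    (hτr : τ ≤ r) (hκ : κ = c ^ 2 * ε / 64) (hs : s ∈ Icc (κ * τ / 2) (κ * τ)) (ha : a ∈ U)
    (hb : b ∈ U) (haU : c * (ε * τ) / 4 ≤ infDist a (frontier U))
    (hbU : c * (ε * τ) / 4 ≤ infDist b (frontier U)) (hab : dist a b ≤ 2 * (ε * τ))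
    (hay : dist a y ≤ 2 * τ) (hxa : innerDist U x a ≤ ENNReal.ofReal (r - 15 / 16 * τ))
    {F : Type*} [NormedAddCommGroup F] [NormedSpace ℝ F] [CompleteSpace F] {f : En n → F}
    (hf : ContDiffOn ℝ 1 f U) :
    edist (⨍ z in ball a (κ * τ), f z) (⨍ z in ball b s, f z) ≤
      ENNReal.ofReal ((N + 1) * (2 * 4 ^ n * κ)) * (ENNReal.ofReal τ *
        ((volume (ball (0 : En n) (κ * τ)))⁻¹ *
          ∫⁻ z in Prod.mk y ⁻¹' whitneyPairs U (innerBall U x r) κ τ, ‖fderiv ℝ f z‖ₑ)) := by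
  obtain ⟨q, rfl, rfl, hqd, hq⟩ := hU.exists_chain_section_whitneyPairs hc0 hc1 hC hε0 hε1 hCε
    hN0 hN hτ hτr ha hb haU hbU hab hay hxa
  rw [← hκ] at hqd hq
  have hκ0 : 0 < κ := hκ ▸ by positivity
  refine (edist_setAverage_ball_le_of_chain hU.1 hf (mul_pos hκ0 hτ) hs
    (fun p hp => hp.1.1) hqd hq).trans_eq ?_
  rw [finrank_euclideanSpace_fin, ← mul_assoc (2 * 4 ^ n : ℝ),
    ENNReal.ofReal_mul (by positivity : (0 : ℝ) ≤ 2 * 4 ^ n * κ),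
    ENNReal.ofReal_mul (by positivity : (0 : ℝ) ≤ N + 1),
    ENNReal.ofReal_add (by positivity) zero_le_one, ENNReal.ofReal_natCast, ENNReal.ofReal_one]
  ring

theorem exists_edist_le_tsum_lintegral_fderiv (n : ℕ) (hc0 : 0 < c) (hc1 : c ≤ 1) (hC : 0 ≤ C)
    (F : Type*) [NormedAddCommGroup F] [NormedSpace ℝ F] [CompleteSpace F] :
    ∃ κ > 0, ∃ θ ∈ Ioo (0 : ℝ) 1, ∃ D > 0, ∀ {U : Set (En n)}, IsUniformDomain c C U →
      ¬ Bornology.IsBounded U → ∀ x, ∀ r > 0, ∀ {f : En n → F}, ContDiffOn ℝ 1 f U →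
      ∃ a, ∀ y ∈ innerBall U x r, edist a (f y) ≤ ENNReal.ofReal D * ∑' j : ℕ,
        ENNReal.ofReal (r * θ ^ j) * ((volume (ball (0 : En n) (κ * (r * θ ^ j))))⁻¹ *
          ∫⁻ z in Prod.mk y ⁻¹' whitneyPairs U (innerBall U x r) κ (r * θ ^ j),
            ‖fderiv ℝ f z‖ₑ) := by
  obtain ⟨ε, hε0, hε2, hCε⟩ : ∃ ε > 0, ε ≤ 1 / 2 ∧ C * ε ≤ 1 / 16 := by
    refine ⟨1 / (16 * (C + 1)), by positivity, ?_, ?_⟩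
    · rw [div_le_div_iff₀ (by positivity) (by norm_num)]; linarith
    · rw [mul_one_div, div_le_div_iff₀ (by positivity) (by norm_num)]; linarith
  obtain ⟨κ, hκ⟩ : ∃ κ, κ = c ^ 2 * ε / 64 := ⟨_, rfl⟩
  have hκ0 : 0 < κ := hκ ▸ by positivity
  obtain ⟨N, hN⟩ := exists_nat_ge (128 * C / c ^ 2)
  have hN' : 128 * C / c ^ 2 ≤ (N + 1 : ℕ) := hN.trans (by simp)
  have hθ0 : 0 < 1 - ε := by linarith
  refine ⟨κ, hκ0, 1 - ε, ⟨hθ0, by linarith⟩, ((N + 1 : ℕ) + 1) * (2 * 4 ^ n * κ), by positivity,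
    fun {U} hU hunb x r hr f hf => ?_⟩
  obtain ⟨z₀, hz₀⟩ := hU.exists_corkscrew_sequence hunb hc0.le hC hε0 hε2 hCε hr
  refine ⟨⨍ p in ball z₀ (κ * r), f p, fun y hy => ?_⟩
  obtain ⟨z, rfl, hz⟩ := hz₀ y hy
  choose hzU hzfar hzfar' hzd hzy hzx using hz
  set τ : ℕ → ℝ := fun j => r * (1 - ε) ^ j with hτ
  have hτ0 (j : ℕ) : 0 < τ j := by positivity
  have hτr (j : ℕ) : τ j ≤ r :=
    mul_le_of_le_one_right hr.le (pow_le_one₀ hθ0.le (by linarith))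
  have hτs (j : ℕ) : τ (j + 1) = (1 - ε) * τ j := by simp only [hτ]; ring
  have hτlim : Filter.Tendsto τ Filter.atTop (nhds 0) := by
    simpa using (tendsto_pow_atTop_nhds_zero_of_lt_one hθ0.le (by linarith)).const_mul r
  have hlink (j : ℕ) := hU.edist_setAverage_ball_le_lintegral_section_whitneyPairs hc0 hc1 hC hε0
    (by linarith) hCε N.succ_pos hN' (hτ0 j) (hτr j) hκ (s := κ * τ (j + 1))
    (by rw [hτs]; constructor <;> nlinarith [mul_pos hκ0 (hτ0 j)]) (hzU j) (hzU (j + 1))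
    (hzfar j) (hzfar' j) (hzd j) (hzy j) (hzx j) hf
  have hzlim : Filter.Tendsto z Filter.atTop (nhds y) :=
    tendsto_iff_dist_tendsto_zero.2 (squeeze_zero (fun _ => dist_nonneg) hzy
      (by simpa using hτlim.const_mul 2))
  have hlim := tendsto_setAverage_ball (μ := volume) hU.1 hf.continuousOn hy.1 hzlim
    (by simpa using hτlim.const_mul κ) (fun j => mul_pos hκ0 (hτ0 j))
  simpa [hτ, ENNReal.tsum_mul_left] using edist_le_tsum_of_edist_le_of_tendsto₀ _ hlink hlim

end IsUniformDomain

end PointwiseBound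

section Schur

variable {X : Type*} [MeasurableSpace X] {μ : Measure X}

lemma sq_lintegral_le {g : X → ℝ≥0∞} (hg : AEMeasurable g μ) :
    (∫⁻ x, g x ∂μ) ^ 2 ≤ μ univ * ∫⁻ x, g x ^ 2 ∂μ := by
  have hroot (t : ℝ≥0∞) : (t ^ (1 / 2 : ℝ)) ^ 2 = t := by
    rw [← ENNReal.rpow_natCast, ← ENNReal.rpow_mul]; norm_num
  have hCS := ENNReal.lintegral_mul_le_Lp_mul_Lq μ Real.HolderConjugate.two_two
    (aemeasurable_const (b := (1 : ℝ≥0∞))) hg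
  simp only [Pi.mul_apply, one_mul, lintegral_const, ENNReal.rpow_two] at hCS
  simpa only [mul_pow, hroot, one_pow, one_mul] using pow_le_pow_left' hCS 2

lemma sq_tsum_mul_le {ι : Type*} (t a : ι → ℝ≥0∞) :
    (∑' i, t i * a i) ^ 2 ≤ (∑' i, t i) * ∑' i, t i * a i ^ 2 := by
  let : MeasurableSpace ι := ⊤
  simpa [lintegral_sum_measure, lintegral_smul_measure, lintegral_dirac] using
    sq_lintegral_le (μ := Measure.sum fun i => t i • Measure.dirac i) (g := a)
      measurable_from_top.aemeasurable

variable [SFinite μ] {w g : X → ℝ≥0∞}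

lemma measurable_lintegral_section {S : Set (X × X)} (hS : MeasurableSet S) (hg : Measurable g) :
    Measurable fun y => ∫⁻ z in Prod.mk y ⁻¹' S, g z ∂μ := by
  simp only [← lintegral_indicator (measurable_prodMk_left hS)]
  exact ((hg.comp measurable_snd).indicator hS).lintegral_prod_right'

lemma lintegral_mul_lintegral_section_le {S : Set (X × X)} (hS : MeasurableSet S)
    (hw : Measurable w) (hg : Measurable g) {K m : ℝ≥0∞} (hwS : ∀ p ∈ S, w p.1 ≤ K * w p.2)
    (hSm : ∀ z, μ ((fun y => (y, z)) ⁻¹' S) ≤ m) :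
    ∫⁻ y, w y * ∫⁻ z in Prod.mk y ⁻¹' S, g z ∂μ ∂μ ≤ K * m * ∫⁻ z, w z * g z ∂μ := by
  have hwg : Measurable fun p : X × X => S.indicator (fun p => w p.1 * g p.2) p :=
    ((hw.comp measurable_fst).mul (hg.comp measurable_snd)).indicator hS
  calc ∫⁻ y, w y * ∫⁻ z in Prod.mk y ⁻¹' S, g z ∂μ ∂μ
      = ∫⁻ y, ∫⁻ z, S.indicator (fun p => w p.1 * g p.2) (y, z) ∂μ ∂μ := by
        refine lintegral_congr fun y => ?_
        rw [← lintegral_const_mul _ hg, ← lintegral_indicator (measurable_prodMk_left hS)]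
        rfl
    _ = ∫⁻ z, ∫⁻ y, S.indicator (fun p => w p.1 * g p.2) (y, z) ∂μ ∂μ :=
        lintegral_lintegral_swap hwg.aemeasurable
    _ ≤ ∫⁻ z, K * m * (w z * g z) ∂μ := by
        refine lintegral_mono fun z => ?_
        calc ∫⁻ y, S.indicator (fun p => w p.1 * g p.2) (y, z) ∂μ
            ≤ ∫⁻ y, ((fun y => (y, z)) ⁻¹' S).indicator (fun _ => K * (w z * g z)) y ∂μ := by
              refine lintegral_mono fun y => indicator_le_indicator'
                (s := (fun y => (y, z)) ⁻¹' S) (f := fun y => w y * g z) fun hy => ?_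
              exact (mul_le_mul_left (hwS _ hy) _).trans_eq (mul_assoc _ _ _)
          _ = K * (w z * g z) * μ ((fun y => (y, z)) ⁻¹' S) :=
              lintegral_indicator_const (measurable_prodMk_right hS) _
          _ ≤ K * (w z * g z) * m := by gcongr; exact hSm z
          _ = K * m * (w z * g z) := by ring
    _ = K * m * ∫⁻ z, w z * g z ∂μ := lintegral_const_mul _ (hw.mul hg)

lemma lintegral_mul_sq_lintegral_section_le {S : Set (X × X)} (hS : MeasurableSet S)
    (hw : Measurable w) (hg : Measurable g) {K D V : ℝ≥0∞} (hV0 : V ≠ 0) (hV : V ≠ ∞)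
    (hwS : ∀ p ∈ S, w p.1 ≤ K * w p.2) (hSl : ∀ y, μ (Prod.mk y ⁻¹' S) ≤ D * V)
    (hSr : ∀ z, μ ((fun y => (y, z)) ⁻¹' S) ≤ D * V) :
    ∫⁻ y, w y * (V⁻¹ * ∫⁻ z in Prod.mk y ⁻¹' S, g z ∂μ) ^ 2 ∂μ ≤
      K * D ^ 2 * ∫⁻ z, w z * g z ^ 2 ∂μ := by
  calc ∫⁻ y, w y * (V⁻¹ * ∫⁻ z in Prod.mk y ⁻¹' S, g z ∂μ) ^ 2 ∂μ
      ≤ ∫⁻ y, V⁻¹ ^ 2 * (D * V) * (w y * ∫⁻ z in Prod.mk y ⁻¹' S, g z ^ 2 ∂μ) ∂μ := by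
        refine lintegral_mono fun y => ?_
        have hCS : (∫⁻ z in Prod.mk y ⁻¹' S, g z ∂μ) ^ 2 ≤
            D * V * ∫⁻ z in Prod.mk y ⁻¹' S, g z ^ 2 ∂μ := by
          refine (sq_lintegral_le hg.aemeasurable).trans ?_
          rw [Measure.restrict_apply_univ]
          exact mul_le_mul_left (hSl y) _
        calc w y * (V⁻¹ * ∫⁻ z in Prod.mk y ⁻¹' S, g z ∂μ) ^ 2
            ≤ w y * (V⁻¹ ^ 2 * (D * V * ∫⁻ z in Prod.mk y ⁻¹' S, g z ^ 2 ∂μ)) := by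
              rw [mul_pow]; gcongr
          _ = _ := by ring
    _ = V⁻¹ ^ 2 * (D * V) * ∫⁻ y, w y * ∫⁻ z in Prod.mk y ⁻¹' S, g z ^ 2 ∂μ ∂μ :=
        lintegral_const_mul _ (hw.mul (measurable_lintegral_section hS (hg.pow_const 2)))
    _ ≤ V⁻¹ ^ 2 * (D * V) * (K * (D * V) * ∫⁻ z, w z * g z ^ 2 ∂μ) := by
        gcongr; exact lintegral_mul_lintegral_section_le hS hw (hg.pow_const 2) hwS hSr
    _ = (V⁻¹ * V) ^ 2 * (K * D ^ 2 * ∫⁻ z, w z * g z ^ 2 ∂μ) := by ring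
    _ = K * D ^ 2 * ∫⁻ z, w z * g z ^ 2 ∂μ := by
        rw [ENNReal.inv_mul_cancel hV0 hV, one_pow, one_mul]

lemma lintegral_mul_sq_le_of_le_tsum {ι : Type*} [Countable ι] {S : ι → Set (X × X)}
    (hS : ∀ i, MeasurableSet (S i)) (hw : Measurable w) (hg : Measurable g) {K D D₀ : ℝ≥0∞}
    {t V : ι → ℝ≥0∞} (hV0 : ∀ i, V i ≠ 0) (hV : ∀ i, V i ≠ ∞)
    (hwS : ∀ i, ∀ p ∈ S i, w p.1 ≤ K * w p.2) (hSl : ∀ i y, μ (Prod.mk y ⁻¹' S i) ≤ D * V i)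
    (hSr : ∀ i z, μ ((fun y => (y, z)) ⁻¹' S i) ≤ D * V i) {u : X → ℝ≥0∞}
    (hu : ∀ y, w y ≠ 0 →
      u y ≤ D₀ * ∑' i, t i * ((V i)⁻¹ * ∫⁻ z in Prod.mk y ⁻¹' S i, g z ∂μ)) :
    ∫⁻ y, w y * u y ^ 2 ∂μ ≤
      D₀ ^ 2 * (∑' i, t i) ^ 2 * (K * D ^ 2) * ∫⁻ z, w z * g z ^ 2 ∂μ := by
  set A : ι → X → ℝ≥0∞ := fun i y => (V i)⁻¹ * ∫⁻ z in Prod.mk y ⁻¹' S i, g z ∂μ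
  have hA (i : ι) : Measurable (A i) := (measurable_lintegral_section (hS i) hg).const_mul _
  have hwA (i : ι) : Measurable fun y => w y * A i y ^ 2 := hw.mul ((hA i).pow_const 2)
  calc ∫⁻ y, w y * u y ^ 2 ∂μ
      ≤ ∫⁻ y, D₀ ^ 2 * (∑' i, t i) * ∑' i, t i * (w y * A i y ^ 2) ∂μ := by
        refine lintegral_mono fun y => ?_
        by_cases hy : w y = 0
        · simp [hy]
        calc w y * u y ^ 2 ≤ w y * (D₀ ^ 2 * ((∑' i, t i) * ∑' i, t i * A i y ^ 2)) := by
              gcongr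
              exact (pow_le_pow_left' (hu y hy) 2).trans
                ((mul_pow _ _ _).trans_le (mul_le_mul_right (sq_tsum_mul_le _ _) _))
          _ = D₀ ^ 2 * (∑' i, t i) * (w y * ∑' i, t i * A i y ^ 2) := by ring
          _ = D₀ ^ 2 * (∑' i, t i) * ∑' i, t i * (w y * A i y ^ 2) := by
              rw [← ENNReal.tsum_mul_left (a := w y)]; simp only [mul_left_comm]
    _ = D₀ ^ 2 * (∑' i, t i) * ∑' i, t i * ∫⁻ y, w y * A i y ^ 2 ∂μ := by
        rw [lintegral_const_mul _ (.tsum fun i => (hwA i).const_mul _),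
          lintegral_tsum fun i => ((hwA i).const_mul _).aemeasurable]
        simp only [lintegral_const_mul _ (hwA _)]
    _ ≤ D₀ ^ 2 * (∑' i, t i) * ∑' i, t i * (K * D ^ 2 * ∫⁻ z, w z * g z ^ 2 ∂μ) := by
        gcongr with i
        exact lintegral_mul_sq_lintegral_section_le (hS i) hw hg (hV0 i) (hV i) (hwS i) (hSl i)
          (hSr i)
    _ = D₀ ^ 2 * (∑' i, t i) ^ 2 * (K * D ^ 2) * ∫⁻ z, w z * g z ^ 2 ∂μ := by
        rw [ENNReal.tsum_mul_right]; ring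

end Schur

section WeightedPoincare

open Module

lemma measurableSet_whitneyPairs {X : Type*} [PseudoMetricSpace X] [SecondCountableTopology X]
    [MeasurableSpace X] [OpensMeasurableSpace X] {U B : Set X} (hB : MeasurableSet B) (κ τ : ℝ) :
    MeasurableSet (whitneyPairs U B κ τ) :=
  (measurable_snd hB).inter <|
    (measurableSet_le continuous_dist.measurable measurable_const).inter <|
      measurableSet_le measurable_const
        ((continuous_infDist_pt (frontier U)).measurable.comp measurable_snd)

section Sections

variable {E : Type*} [NormedAddCommGroup E] [NormedSpace ℝ E] [FiniteDimensional ℝ E]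
  [MeasurableSpace E] [BorelSpace E] (μ : Measure E) [μ.IsAddHaarMeasure] (U B : Set E) {κ τ : ℝ}

lemma measure_section_whitneyPairs_left_le (hκ : 0 < κ) (hτ : 0 < τ) (y : E) :
    μ (Prod.mk y ⁻¹' whitneyPairs U B κ τ) ≤
      ENNReal.ofReal ((4 / κ) ^ finrank ℝ E) * μ (ball 0 (κ * τ)) := by
  have hsub : Prod.mk y ⁻¹' whitneyPairs U B κ τ ⊆ ball y (4 * τ) := fun z hz =>
    mem_ball'.2 (hz.2.1.trans_lt (by linarith))
  exact (measure_mono hsub).trans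
    (measure_ball_le_of_le_mul μ 0 y (by positivity) (by field_simp; rfl))

lemma measure_section_whitneyPairs_right_le (hκ : 0 < κ) (hτ : 0 < τ) (z : E) :
    μ ((fun y => (y, z)) ⁻¹' whitneyPairs U B κ τ) ≤
      ENNReal.ofReal ((4 / κ) ^ finrank ℝ E) * μ (ball 0 (κ * τ)) := by
  have hsub : (fun y => (y, z)) ⁻¹' whitneyPairs U B κ τ ⊆ ball z (4 * τ) := fun y hy =>
    mem_ball.2 (hy.2.1.trans_lt (by linarith))
  exact (measure_mono hsub).trans
    (measure_ball_le_of_le_mul μ 0 z (by positivity) (by field_simp; rfl))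

end Sections

lemma tsum_ofReal_mul_pow {r θ : ℝ} (hr : 0 ≤ r) (hθ0 : 0 ≤ θ) (hθ1 : θ < 1) :
    ∑' j : ℕ, ENNReal.ofReal (r * θ ^ j) = ENNReal.ofReal (r * (1 - θ)⁻¹) := by
  rw [← ENNReal.ofReal_tsum_of_nonneg (fun j => by positivity)
    ((summable_geometric_of_lt_one hθ0 hθ1).mul_left r), tsum_mul_left,
    tsum_geometric_of_lt_one hθ0 hθ1]

namespace IsHarmonicProfile

variable {n : ℕ} {U B : Set (En n)} {h : En n → ℝ}

lemma measurable_indicator_enorm_sq (hh : IsHarmonicProfile h U) (hB : MeasurableSet B)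
    (hBU : B ⊆ U) : Measurable (B.indicator fun y => ‖h y‖ₑ ^ 2) := by
  have heq : (B.indicator fun y => ‖h y‖ₑ ^ 2) = B.indicator fun y => ‖U.indicator h y‖ₑ ^ 2 :=
    indicator_congr fun y hy => by rw [indicator_of_mem (hBU hy)]
  rw [heq]
  exact (hh.continuous_indicator.measurable.enorm.pow_const 2).indicator hB

lemma indicator_enorm_sq_le_of_mem_whitneyPairs (hh : IsHarmonicProfile h U) (hBU : B ⊆ U)
    {κ τ M : ℝ}
    (hM : ∀ z ∈ U, κ * τ ≤ infDist z (frontier U) → ∀ y ∈ U, dist y z ≤ 3 * τ → h y ≤ M * h z)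
    {p : En n × En n} (hp : p ∈ whitneyPairs U B κ τ) :
    B.indicator (fun y => ‖h y‖ₑ ^ 2) p.1 ≤
      ENNReal.ofReal M ^ 2 * B.indicator (fun y => ‖h y‖ₑ ^ 2) p.2 := by
  obtain ⟨hp2, hdist, hfar⟩ := hp
  by_cases hp1 : p.1 ∈ B
  · have hle := hM p.2 (hBU hp2) hfar p.1 (hBU hp1) hdist
    rw [indicator_of_mem hp1, indicator_of_mem hp2, ← mul_pow,
      Real.enorm_of_nonneg (hh.pos _ (hBU hp1)).le, Real.enorm_of_nonneg (hh.pos _ (hBU hp2)).le,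
      ← ENNReal.ofReal_mul' (hh.pos _ (hBU hp2)).le]
    gcongr
  · rw [indicator_of_notMem hp1]
    exact zero_le

theorem exists_lintegral_enorm_sub_sq_mul_le (n : ℕ) {c C : ℝ} (hc0 : 0 < c) (hc1 : c ≤ 1)
    (hC : 0 ≤ C) (F : Type*) [NormedAddCommGroup F] [NormedSpace ℝ F] [CompleteSpace F] :
    ∃ P > 0, ∀ {U : Set (En n)} {h : En n → ℝ}, IsUniformDomain c C U →
      ¬ Bornology.IsBounded U → IsHarmonicProfile h U → ∀ x, ∀ r > 0, ∀ {f : En n → F},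
      ContDiffOn ℝ 1 f U → ∃ a, ∫⁻ y in innerBall U x r, ‖f y - a‖ₑ ^ 2 * ‖h y‖ₑ ^ 2 ≤
        ENNReal.ofReal (P * r ^ 2) *
          ∫⁻ y in innerBall U x r, ‖fderiv ℝ f y‖ₑ ^ 2 * ‖h y‖ₑ ^ 2 := by
  obtain ⟨κ, hκ, θ, ⟨hθ0, hθ1⟩, D, hD, hpointwise⟩ :=
    IsUniformDomain.exists_edist_le_tsum_lintegral_fderiv n hc0 hc1 hC F
  obtain ⟨M, hM, hCarleson⟩ :=
    exists_carleson n hc0 hc1 hC (K := 3 / κ) (by positivity)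
  have : 0 < 1 - θ := sub_pos.2 hθ1
  refine ⟨D ^ 2 * ((1 - θ)⁻¹) ^ 2 * (M ^ 2 * ((4 / κ) ^ n) ^ 2), by positivity,
    fun {U h} hU hunb hh x r hr f hf => ?_⟩
  obtain ⟨a, ha⟩ := hpointwise hU hunb x r hr hf
  have hBU : innerBall U x r ⊆ U := fun y hy => hy.1
  have hB : MeasurableSet (innerBall U x r) := (isOpen_innerBall hU.1 x r).measurableSet
  have hτ0 (j : ℕ) : 0 < r * θ ^ j := by positivity
  have hκτ (j : ℕ) : 0 < κ * (r * θ ^ j) := mul_pos hκ (hτ0 j)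
  have hweight (v : En n → ℝ≥0∞) :
      ∫⁻ y, (innerBall U x r).indicator (fun y => ‖h y‖ₑ ^ 2) y * v y =
        ∫⁻ y in innerBall U x r, v y * ‖h y‖ₑ ^ 2 := by
    simp only [← lintegral_indicator hB, mul_comm (v _), indicator_mul_left]
  refine ⟨a, ?_⟩
  have hSchur := lintegral_mul_sq_le_of_le_tsum (μ := volume) (D := ENNReal.ofReal ((4 / κ) ^ n))
    (fun j => measurableSet_whitneyPairs hB κ (r * θ ^ j))
    (hh.measurable_indicator_enorm_sq hB hBU) (measurable_fderiv ℝ f).enorm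
    (fun j => (measure_ball_pos volume 0 (hκτ j)).ne') (fun j => measure_ball_lt_top.ne)
    (fun j p hp => hh.indicator_enorm_sq_le_of_mem_whitneyPairs hBU
      (fun z hz hfar y hy hyz => hCarleson hU hunb hh z hz _ (hκτ j) hfar y hy
        (hyz.trans_eq (by field_simp))) hp)
    (fun j y => by simpa using measure_section_whitneyPairs_left_le volume U _ hκ (hτ0 j) y)
    (fun j z => by simpa using measure_section_whitneyPairs_right_le volume U _ hκ (hτ0 j) z)
    (fun y hy => ha y (mem_of_indicator_ne_zero hy))
  rw [hweight, hweight, tsum_ofReal_mul_pow hr.le hθ0.le hθ1] at hSchur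
  simp only [← edist_eq_enorm_sub, edist_comm _ a]
  refine hSchur.trans_eq ?_
  congr 1
  rw [← ENNReal.ofReal_pow (by positivity), ← ENNReal.ofReal_pow (by positivity),
    ← ENNReal.ofReal_pow (by positivity), ← ENNReal.ofReal_pow (by positivity),
    ← ENNReal.ofReal_mul (by positivity), ← ENNReal.ofReal_mul (by positivity),
    ← ENNReal.ofReal_mul (by positivity)]
  congr 1
  ring

end IsHarmonicProfile

section WeightedMean

variable {X F : Type*} [MeasurableSpace X] {μ : Measure X} [NormedAddCommGroup F]
  [NormedSpace ℝ F] [CompleteSpace F] {f : X → F} {w : X → ℝ}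

lemma norm_weighted_mean_sub_mul_integral_le (hw0 : 0 ≤ w) (hw : Integrable w μ) {a : F}
    (hfa : Integrable (fun y => w y • (f y - a)) μ) :
    ‖(∫ z, w z ∂μ)⁻¹ • ∫ z, w z • f z ∂μ - a‖ * ∫ z, w z ∂μ ≤ ∫ y, ‖f y - a‖ * w y ∂μ := by
  rcases (integral_nonneg hw0 : 0 ≤ ∫ z, w z ∂μ).eq_or_lt with hW | hW
  · rw [← hW, mul_zero]
    exact integral_nonneg fun y => mul_nonneg (norm_nonneg _) (hw0 y)
  have hsplit : ∫ z, w z • f z ∂μ = ∫ z, w z • (f z - a) ∂μ + (∫ z, w z ∂μ) • a := by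
    rw [← integral_smul_const, ← integral_add hfa (hw.smul_const a)]
    simp only [← smul_add, sub_add_cancel]
  rw [hsplit, smul_add, inv_smul_smul₀ hW.ne', add_sub_cancel_right, norm_smul, norm_inv,
    Real.norm_of_nonneg hW.le, mul_comm, mul_inv_cancel_left₀ hW.ne']
  refine (norm_integral_le_integral_norm _).trans_eq (integral_congr_ae (.of_forall fun y => ?_))
  simp only [norm_smul, Real.norm_of_nonneg (hw0 y), mul_comm]

lemma integral_norm_sub_weighted_mean_sq_mul_le (hw0 : 0 ≤ w) (hw : Integrable w μ)
    (hf : AEStronglyMeasurable f μ) {a : F} (hfa : Integrable (fun y => ‖f y - a‖ ^ 2 * w y) μ) :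
    ∫ y, ‖f y - (∫ z, w z ∂μ)⁻¹ • ∫ z, w z • f z ∂μ‖ ^ 2 * w y ∂μ ≤
      4 * ∫ y, ‖f y - a‖ ^ 2 * w y ∂μ := by
  set m := (∫ z, w z ∂μ)⁻¹ • ∫ z, w z • f z ∂μ
  have hamgm (t : ℝ) (y : X) : 2 * t * (‖f y - a‖ * w y) ≤ ‖f y - a‖ ^ 2 * w y + t ^ 2 * w y := by
    nlinarith [mul_nonneg (sq_nonneg (‖f y - a‖ - t)) (hw0 y)]
  have hfirst : Integrable (fun y => w y • (f y - a)) μ := by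
    refine (hfa.add hw).mono' (hw.1.smul (hf.sub aestronglyMeasurable_const))
      (.of_forall fun y => ?_)
    rw [norm_smul, Real.norm_of_nonneg (hw0 y), Pi.add_apply]
    linarith [hamgm 1 y, mul_nonneg (norm_nonneg (f y - a)) (hw0 y)]
  have hmean := norm_weighted_mean_sub_mul_integral_le hw0 hw hfirst
  have hcauchy : 2 * ‖m - a‖ * ∫ y, ‖f y - a‖ * w y ∂μ ≤
      ∫ y, ‖f y - a‖ ^ 2 * w y ∂μ + ‖m - a‖ ^ 2 * ∫ y, w y ∂μ := by
    rw [← integral_const_mul, ← integral_const_mul, ← integral_add hfa (hw.const_mul _)]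
    exact integral_mono_of_nonneg
      (.of_forall fun y => by have := hw0 y; dsimp at this ⊢; positivity)
      (hfa.add (hw.const_mul _)) (.of_forall (hamgm _))
  have hdist : ‖m - a‖ ^ 2 * ∫ y, w y ∂μ ≤ ∫ y, ‖f y - a‖ ^ 2 * w y ∂μ := by
    nlinarith [mul_le_mul_of_nonneg_left hmean (norm_nonneg (m - a))]
  have hpt (y : X) :
      ‖f y - m‖ ^ 2 * w y ≤ 2 * (‖f y - a‖ ^ 2 * w y) + 2 * ‖m - a‖ ^ 2 * w y := by
    have hsq : ‖f y - m‖ ^ 2 ≤ 2 * (‖f y - a‖ ^ 2 + ‖m - a‖ ^ 2) := by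
      refine (pow_le_pow_left₀ (norm_nonneg _) ?_ 2).trans add_sq_le
      simpa only [norm_sub_rev a m] using norm_sub_le_norm_sub_add_norm_sub (f y) a m
    linarith [mul_le_mul_of_nonneg_right hsq (hw0 y)]
  calc ∫ y, ‖f y - m‖ ^ 2 * w y ∂μ
      ≤ ∫ y, (2 * (‖f y - a‖ ^ 2 * w y) + 2 * ‖m - a‖ ^ 2 * w y) ∂μ :=
        integral_mono_of_nonneg (.of_forall fun y => mul_nonneg (sq_nonneg _) (hw0 y))
          ((hfa.const_mul 2).add (hw.const_mul _)) (.of_forall hpt)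
    _ = 2 * ∫ y, ‖f y - a‖ ^ 2 * w y ∂μ + 2 * ‖m - a‖ ^ 2 * ∫ y, w y ∂μ := by
        rw [integral_add (hfa.const_mul 2) (hw.const_mul _), integral_const_mul,
          integral_const_mul]
    _ ≤ 4 * ∫ y, ‖f y - a‖ ^ 2 * w y ∂μ := by linarith

end WeightedMean

lemma integrable_and_integral_le_of_lintegral_ofReal_le {X : Type*} [MeasurableSpace X]
    {μ : Measure X} {p q : X → ℝ} (hp0 : ∀ y, 0 ≤ p y) (hq0 : ∀ y, 0 ≤ q y)
    (hp : AEStronglyMeasurable p μ) (hq : Integrable q μ) {K : ℝ} (hK : 0 ≤ K)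
    (h : ∫⁻ y, ENNReal.ofReal (p y) ∂μ ≤ ENNReal.ofReal K * ∫⁻ y, ENNReal.ofReal (q y) ∂μ) :
    Integrable p μ ∧ ∫ y, p y ∂μ ≤ K * ∫ y, q y ∂μ := by
  rw [← ofReal_integral_eq_lintegral_ofReal hq (.of_forall hq0), ← ENNReal.ofReal_mul hK] at h
  have hpi : Integrable p μ :=
    ⟨hp, (hasFiniteIntegral_iff_ofReal (.of_forall hp0)).2 (h.trans_lt ENNReal.ofReal_lt_top)⟩
  rw [← ofReal_integral_eq_lintegral_ofReal hpi (.of_forall hp0)] at h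
  exact ⟨hpi, (ENNReal.ofReal_le_ofReal_iff (mul_nonneg hK (integral_nonneg hq0))).1 h⟩

lemma enorm_sq_mul_enorm_sq {F : Type*} [SeminormedAddCommGroup F] (v : F) (t : ℝ) :
    ‖v‖ₑ ^ 2 * ‖t‖ₑ ^ 2 = ENNReal.ofReal (‖v‖ ^ 2 * t ^ 2) := by
  rw [ENNReal.ofReal_mul (by positivity), ENNReal.ofReal_pow (norm_nonneg v), ofReal_norm,
    ← sq_abs t, ENNReal.ofReal_pow (abs_nonneg t), ← Real.norm_eq_abs, ofReal_norm]

namespace IsHarmonicProfile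

lemma integrableOn_sq {E : Type*} [NormedAddCommGroup E] [InnerProductSpace ℝ E]
    [FiniteDimensional ℝ E] [MeasurableSpace E] [OpensMeasurableSpace E] {μ : Measure E}
    [IsFiniteMeasureOnCompacts μ] {U B : Set E} {h : E → ℝ} (hh : IsHarmonicProfile h U)
    (hB : MeasurableSet B) (hBU : B ⊆ U) (hbdd : Bornology.IsBounded B) :
    IntegrableOn (fun y => h y ^ 2) B μ := by
  obtain ⟨R, hR⟩ := hbdd.subset_closedBall 0
  have hint : IntegrableOn (fun y => U.indicator h y ^ 2) (closedBall 0 R) μ :=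
    (hh.continuous_indicator.pow 2).continuousOn.integrableOn_compact (isCompact_closedBall 0 R)
  refine (hint.mono_set hR).congr_fun (fun y hy => ?_) hB
  simp only [indicator_of_mem (hBU hy)]

end IsHarmonicProfile

theorem statement5_general (n : ℕ) {c C : ℝ} (hc0 : 0 < c) (hc1 : c ≤ 1) (hC : 0 ≤ C)
    (F : Type*) [NormedAddCommGroup F] [NormedSpace ℝ F] [CompleteSpace F] :
    ∃ P > 0, ∀ {U : Set (En n)} {h : En n → ℝ}, IsUniformDomain c C U →
      ¬ Bornology.IsBounded U → IsHarmonicProfile h U → ∀ x, ∀ r > 0, ∀ {f : En n → F},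
      ContDiffOn ℝ 1 f U →
      IntegrableOn (fun y => ‖fderiv ℝ f y‖ ^ 2 * h y ^ 2) (innerBall U x r) →
      ∫ y in innerBall U x r, ‖f y - (∫ z in innerBall U x r, h z ^ 2)⁻¹ •
          ∫ z in innerBall U x r, h z ^ 2 • f z‖ ^ 2 * h y ^ 2 ≤
        P * r ^ 2 * ∫ y in innerBall U x r, ‖fderiv ℝ f y‖ ^ 2 * h y ^ 2 := by
  obtain ⟨P, hP, hbound⟩ :=
    IsHarmonicProfile.exists_lintegral_enorm_sub_sq_mul_le n hc0 hc1 hC F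
  refine ⟨4 * P, by positivity, fun {U h} hU hunb hh x r hr f hf hgrad => ?_⟩
  obtain ⟨a, ha⟩ := hbound hU hunb hh x r hr hf
  have hBU : innerBall U x r ⊆ U := fun y hy => hy.1
  have hB : MeasurableSet (innerBall U x r) := (isOpen_innerBall hU.1 x r).measurableSet
  have hfm : AEStronglyMeasurable f (volume.restrict (innerBall U x r)) :=
    (hf.continuousOn.mono hBU).aestronglyMeasurable hB
  have hh2 : IntegrableOn (fun y => h y ^ 2) (innerBall U x r) :=
    hh.integrableOn_sq hB hBU (isBounded_ball.subset (innerBall_subset_ball U x r))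
  simp only [enorm_sq_mul_enorm_sq] at ha
  obtain ⟨hint, hle⟩ := integrable_and_integral_le_of_lintegral_ofReal_le
    (p := fun y => ‖f y - a‖ ^ 2 * h y ^ 2) (fun y => by positivity) (fun y => by positivity)
    (((hfm.sub aestronglyMeasurable_const).norm.pow 2).mul hh2.1) hgrad
    (mul_nonneg hP.le (sq_nonneg r)) ha
  exact (integral_norm_sub_weighted_mean_sq_mul_le (fun y => sq_nonneg (h y)) hh2 hfm hint).trans
    (by linarith)

end WeightedPoincare

/-- Weighted Poincaré inequality, with weight `h²` for a harmonic profile `h`,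
on inner balls of an unbounded uniform domain in `ℝⁿ`. -/
theorem statement5 (n : ℕ) (hn : 1 ≤ n) (cu Cu : ℝ)
    (hcu : cu ∈ Set.Ioo (0:ℝ) 1) (hCu : 1 < Cu) :
    ∃ P : ℝ, 0 < P ∧
      ∀ U : Set (En n), U ≠ Set.univ → (frontier U).Nonempty →
        ¬ Bornology.IsBounded U → IsUniformDomain cu Cu U →
        ∀ h : En n → ℝ, ContinuousOn h (closure U) → (∀ z ∈ U, 0 < h z) →
          IsHarmonicOn h U → (∀ z ∈ frontier U, h z = 0) →
          ∀ x ∈ U, ∀ r : ℝ, 0 < r →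
            ∀ f : En n → ℝ, ContDiffOn ℝ 1 f U →
              ∀ B : Set (En n), B = {y | y ∈ U ∧ innerDist U x y < ENNReal.ofReal r} →
                MeasureTheory.IntegrableOn (fun y => ‖fderiv ℝ f y‖^2 * (h y)^2) B →
                ∀ fB : ℝ, fB = (∫ z in B, f z * (h z)^2) / (∫ z in B, (h z)^2) →
                  ∫ y in B, (f y - fB)^2 * (h y)^2 ≤
                    P * r^2 * ∫ y in B, ‖fderiv ℝ f y‖^2 * (h y)^2 := by
  obtain ⟨P, hP, hbound⟩ := statement5_general n hcu.1 hcu.2.le (zero_le_one.trans hCu.le) ℝ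
  refine ⟨P, hP, ?_⟩
  rintro U - - hunb hU h hcont hpos hharm hzero x - r hr f hf B rfl hgrad fB rfl
  simpa only [innerBall, Real.norm_eq_abs, sq_abs, smul_eq_mul, mul_comm (f _), div_eq_inv_mul]
    using hbound hU hunb ⟨hcont, hpos, hharm.harmonicOnNhd hU.1, hzero⟩ x r hr hf hgrad
end
end

section
/- Let n ≥ 1, x₀ ∈ ℝⁿ, 0 < a < A, R > 0, and let Ω ⊆ ℝⁿ be an open convex set with B(x₀, aR) ⊆ Ω ⊆ B(x₀, AR). Then there exist c ∈ (0,1) and C ∈ (1,∞), depending only on a and A (in particular, not on n, R, or Ω), such that Ω is a (c,C)-uniform domain. -/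
open Set Metric MeasureTheory ENNReal

noncomputable section

/-!
Join `x` to `y` by the segment, pushed towards the center `p` of the inner ball: at time `t`, move
the point of the segment a fraction `σ = s t (1 - t)` of its way to `p`. Convexity puts a ball of
radius `σ r` around the new point inside the set, namely the image of the inner ball of radius `r`
under a homothety of ratio `σ`. If the set lies in the ball of radius `ρ` about `p`, then
`s = dist x y / ρ` makes the curve `2 dist x y`-Lipschitz, so its length is at most twice the
distance, while `σ r` dominates `min t (1 - t) * dist x y`, hence the distance to the nearer
endpoint, up to the factor `r / ρ`.
-/

section Curves

lemma curveLength_le_of_lipschitzOnWith {X : Type*} [PseudoEMetricSpace X] {γ : ℝ → X} {K : NNReal}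
    (hγ : LipschitzOnWith K γ (Icc 0 1)) : curveLength γ ≤ K := by
  simpa only [curveLength, Function.comp_id, eVariationOn_id_Icc, sub_zero, ofReal_one, mul_one]
    using hγ.comp_eVariationOn_le (mapsTo_id (Icc (0 : ℝ) 1))

lemma min_dist_endpoints_le_of_lipschitzOnWith {X : Type*} [PseudoMetricSpace X] {γ : ℝ → X}
    {K : NNReal} (hγ : LipschitzOnWith K γ (Icc 0 1)) {t : ℝ} (ht : t ∈ Icc (0 : ℝ) 1) :
    min (dist (γ 0) (γ t)) (dist (γ t) (γ 1)) ≤ 2 * K * (t * (1 - t)) := by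
  have hzero : dist (γ 0) (γ t) ≤ K * t := by
    simpa [Real.dist_eq, abs_of_nonneg ht.1] using hγ.dist_le_mul 0 (by simp) t ht
  have hone : dist (γ t) (γ 1) ≤ K * (1 - t) := by
    simpa [Real.dist_eq, abs_sub_comm t, abs_of_nonneg (sub_nonneg.2 ht.2)]
      using hγ.dist_le_mul t ht 1 (by simp)
  have hmin : min t (1 - t) ≤ 2 * (t * (1 - t)) := by
    obtain ⟨ht0, ht1⟩ := ht
    rcases le_total t (1 / 2) with h | h
    · exact (min_le_left _ _).trans (by nlinarith)
    · exact (min_le_right _ _).trans (by nlinarith)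
  calc min (dist (γ 0) (γ t)) (dist (γ t) (γ 1))
      ≤ min (K * t) (K * (1 - t)) := min_le_min hzero hone
    _ = K * min t (1 - t) := (mul_min_of_nonneg _ _ K.coe_nonneg).symm
    _ ≤ K * (2 * (t * (1 - t))) := by gcongr
    _ = 2 * K * (t * (1 - t)) := by ring

end Curves

section Frontier

lemma le_infDist_frontier_of_ball_subset {X : Type*} [PseudoMetricSpace X] {U : Set X} {p : X}
    {δ : ℝ} (hU : (frontier U).Nonempty) (hball : ball p δ ⊆ U) : δ ≤ infDist p (frontier U) := by
  refine (le_infDist hU).2 fun q hq => not_lt.1 fun hlt => ?_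
  have hq_int : q ∈ interior U := interior_maximal hball isOpen_ball (mem_ball'.2 hlt)
  exact disjoint_left.1 disjoint_interior_frontier hq_int hq

lemma frontier_nonempty_of_isBounded {E : Type*} [NormedAddCommGroup E] [NormedSpace ℝ E]
    [Nontrivial E] {U : Set E} (hU : U.Nonempty) (hbdd : Bornology.IsBounded U) :
    (frontier U).Nonempty := by
  refine nonempty_frontier_iff.2 ⟨hU, ?_⟩
  rintro rfl
  exact NormedSpace.unbounded_univ ℝ E hbdd

end Frontier

section BentSegment

open AffineMap
open scoped Pointwise

variable {E : Type*} [SeminormedAddCommGroup E] [NormedSpace ℝ E]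

lemma ball_lineMap_subset_of_convex {U : Set E} (hU : Convex ℝ U) {p z : E} {r σ : ℝ}
    (hball : ball p r ⊆ U) (hz : z ∈ U) (hσ : σ ∈ Icc (0 : ℝ) 1) :
    ball (lineMap z p σ) (σ * r) ⊆ U := by
  rcases hσ.1.eq_or_lt with rfl | hpos
  · simp
  calc ball (lineMap z p σ) (σ * r) = {(1 - σ) • z} + σ • ball p r := by
        rw [_root_.smul_ball hpos.ne', singleton_add_ball, lineMap_apply_module,
          Real.norm_of_nonneg hσ.1]
    _ ⊆ (1 - σ) • U + σ • U :=
        add_subset_add (singleton_subset_iff.2 (smul_mem_smul_set hz)) (smul_set_mono hball)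
    _ ⊆ U := hU.set_combo_subset (sub_nonneg.2 hσ.2) hσ.1 (sub_add_cancel 1 σ)

lemma dist_lineMap_lineMap_le_add (z w p : E) (σ τ : ℝ) :
    dist (lineMap z p σ) (lineMap w p τ) ≤ |1 - σ| * dist z w + |σ - τ| * dist w p := by
  have hleft : dist (lineMap z p σ) (lineMap w p σ) = |1 - σ| * dist z w := by
    rw [lineMap_apply_module, lineMap_apply_module, dist_add_right, dist_smul₀, Real.norm_eq_abs]
  have hright : dist (lineMap w p σ) (lineMap w p τ) = |σ - τ| * dist w p := by
    rw [dist_lineMap_lineMap, Real.dist_eq]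
  exact (dist_triangle _ (lineMap w p σ) _).trans_eq (by rw [hleft, hright])

lemma mul_mul_one_sub_mem_Icc {s t : ℝ} (hs : s ∈ Icc (0 : ℝ) 4) (ht : t ∈ Icc (0 : ℝ) 1) :
    s * (t * (1 - t)) ∈ Icc (0 : ℝ) 1 := by
  have hnonneg : 0 ≤ t * (1 - t) := mul_nonneg ht.1 (sub_nonneg.2 ht.2)
  have hle : t * (1 - t) ≤ 1 / 4 := by nlinarith [sq_nonneg (t - 1 / 2)]
  exact ⟨mul_nonneg hs.1 hnonneg, by nlinarith [hs.2]⟩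

/-- The segment from `x` to `y` bent towards `p`: at time `t`, the point of the segment is moved a
fraction `s * t * (1 - t)` of its way to `p`. The parameter `s` is the strength of the bending. -/
def bentSegment (p x y : E) (s t : ℝ) : E :=
  lineMap (lineMap x y t) p (s * (t * (1 - t)))

@[simp]
lemma bentSegment_zero (p x y : E) (s : ℝ) : bentSegment p x y s 0 = x := by
  simp [bentSegment]

@[simp]
lemma bentSegment_one (p x y : E) (s : ℝ) : bentSegment p x y s 1 = y := by
  simp [bentSegment]

variable {p x y : E} {s t : ℝ}

lemma bentSegment_mem {U : Set E} (hU : Convex ℝ U) (hp : p ∈ U) (hx : x ∈ U) (hy : y ∈ U)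
    (hs : s ∈ Icc (0 : ℝ) 4) (ht : t ∈ Icc (0 : ℝ) 1) : bentSegment p x y s t ∈ U :=
  hU.lineMap_mem (hU.lineMap_mem hx hy ht) hp (mul_mul_one_sub_mem_Icc hs ht)

lemma ball_bentSegment_subset {U : Set E} (hU : Convex ℝ U) {r : ℝ} (hball : ball p r ⊆ U)
    (hx : x ∈ U) (hy : y ∈ U) (hs : s ∈ Icc (0 : ℝ) 4) (ht : t ∈ Icc (0 : ℝ) 1) :
    ball (bentSegment p x y s t) (s * (t * (1 - t)) * r) ⊆ U :=
  ball_lineMap_subset_of_convex hU hball (hU.lineMap_mem hx hy ht) (mul_mul_one_sub_mem_Icc hs ht)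

lemma dist_bentSegment_le {ρ u : ℝ} (hx : x ∈ closedBall p ρ) (hy : y ∈ closedBall p ρ)
    (hs : s ∈ Icc (0 : ℝ) 4) (ht : t ∈ Icc (0 : ℝ) 1) (hu : u ∈ Icc (0 : ℝ) 1) :
    dist (bentSegment p x y s t) (bentSegment p x y s u) ≤ (dist x y + s * ρ) * |t - u| := by
  let σ : ℝ → ℝ := fun v => s * (v * (1 - v))
  have hfactor : |1 - σ t| ≤ 1 := by
    obtain ⟨hσ0, hσ1⟩ := mul_mul_one_sub_mem_Icc hs ht
    exact abs_le.2 ⟨by linarith, by linarith⟩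
  have hfraction : |σ t - σ u| ≤ s * |t - u| := by
    have hdiff : σ t - σ u = s * (t - u) * (1 - t - u) := by ring
    have hsum : |1 - t - u| ≤ 1 := abs_le.2 ⟨by linarith [ht.2, hu.2], by linarith [ht.1, hu.1]⟩
    calc |σ t - σ u| = s * |t - u| * |1 - t - u| := by
          rw [hdiff, abs_mul, abs_mul, abs_of_nonneg hs.1]
      _ ≤ s * |t - u| := mul_le_of_le_one_right (mul_nonneg hs.1 (abs_nonneg _)) hsum
  have hcenter : dist (lineMap x y u) p ≤ ρ := (convex_closedBall p ρ).lineMap_mem hx hy hu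
  calc dist (bentSegment p x y s t) (bentSegment p x y s u)
      ≤ |1 - σ t| * dist (lineMap x y t) (lineMap x y u)
          + |σ t - σ u| * dist (lineMap x y u) p := dist_lineMap_lineMap_le_add _ _ _ _ _
    _ ≤ 1 * (|t - u| * dist x y) + s * |t - u| * ρ := by
        rw [dist_lineMap_lineMap, Real.dist_eq]
        have := hs.1
        gcongr
    _ = (dist x y + s * ρ) * |t - u| := by ring

lemma lipschitzOnWith_bentSegment {ρ : ℝ} (hx : x ∈ closedBall p ρ) (hy : y ∈ closedBall p ρ)
    (hs : s ∈ Icc (0 : ℝ) 4) (hsρ : s * ρ ≤ dist x y) :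
    LipschitzOnWith (2 * nndist x y) (bentSegment p x y s) (Icc 0 1) := by
  refine LipschitzOnWith.of_dist_le_mul fun t ht u hu => ?_
  calc dist (bentSegment p x y s t) (bentSegment p x y s u)
      ≤ (dist x y + s * ρ) * |t - u| := dist_bentSegment_le hx hy hs ht hu
    _ ≤ (dist x y + dist x y) * |t - u| := by gcongr
    _ = (2 * nndist x y : NNReal) * dist t u := by
        rw [Real.dist_eq, NNReal.coe_mul, coe_nndist, NNReal.coe_ofNat, two_mul]

end BentSegment

section UniformDomain

/-- A `(c, C)`-uniform domain in an arbitrary pseudometric space. For subsets of `En n` this unfolds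
to `IsUniformDomain`. -/
def IsMetricUniformDomain {X : Type*} [PseudoMetricSpace X] (c C : ℝ) (U : Set X) : Prop :=
  IsOpen U ∧ IsConnected U ∧
    ∀ x ∈ U, ∀ y ∈ U, ∃ γ : ℝ → X, IsCurveIn U x y γ ∧
      curveLength γ ≤ ENNReal.ofReal (C * dist x y) ∧
      ∀ t ∈ Icc (0 : ℝ) 1,
        c * min (dist x (γ t)) (dist (γ t) y) ≤ infDist (γ t) (frontier U)

lemma isMetricUniformDomain_of_ball_subset_of_subset_ball {E : Type*} [SeminormedAddCommGroup E]
    [NormedSpace ℝ E] {U : Set E} {p : E} {r ρ : ℝ} (hr : 0 < r) (hopen : IsOpen U)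
    (hconv : Convex ℝ U) (hfrontier : (frontier U).Nonempty) (hin : ball p r ⊆ U)
    (hout : U ⊆ ball p ρ) : IsMetricUniformDomain (r / (4 * ρ)) 2 U := by
  have hp : p ∈ U := hin (mem_ball_self hr)
  have hρ : 0 < ρ := pos_of_mem_ball (hout hp)
  refine ⟨hopen, ⟨⟨p, hp⟩, hconv.isPreconnected⟩, fun x hx y hy => ?_⟩
  set s := dist x y / ρ with hs_def
  have hs : s ∈ Icc (0 : ℝ) 4 := by
    refine ⟨by positivity, (div_le_iff₀ hρ).2 ?_⟩
    linarith [dist_triangle_right x y p, mem_ball.1 (hout hx), mem_ball.1 (hout hy)]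
  have hLip : LipschitzOnWith (2 * nndist x y) (bentSegment p x y s) (Icc 0 1) :=
    lipschitzOnWith_bentSegment (ball_subset_closedBall (hout hx))
      (ball_subset_closedBall (hout hy)) hs (div_mul_cancel₀ _ hρ.ne').le
  refine ⟨bentSegment p x y s, ⟨hLip.continuousOn, fun t => bentSegment_mem hconv hp hx hy hs,
    bentSegment_zero p x y s, bentSegment_one p x y s⟩, ?_, fun t ht => ?_⟩
  · refine (curveLength_le_of_lipschitzOnWith hLip).trans_eq ?_
    rw [ENNReal.ofReal_mul zero_le_two, ← edist_dist, edist_nndist]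
    simp
  · have hmin := min_dist_endpoints_le_of_lipschitzOnWith hLip ht
    rw [bentSegment_zero, bentSegment_one, NNReal.coe_mul, NNReal.coe_ofNat, coe_nndist] at hmin
    calc r / (4 * ρ) * min (dist x (bentSegment p x y s t)) (dist (bentSegment p x y s t) y)
        ≤ r / (4 * ρ) * (2 * (2 * dist x y) * (t * (1 - t))) := by gcongr
      _ = s * (t * (1 - t)) * r := by rw [hs_def]; ring
      _ ≤ infDist (bentSegment p x y s t) (frontier U) :=
        le_infDist_frontier_of_ball_subset hfrontier
          (ball_bentSegment_subset hconv hin hx hy hs ht)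

theorem statement10_general.{u} (a A : ℝ) (ha : 0 < a) (haA : a < A) :
    ∃ c ∈ Ioo (0 : ℝ) 1, ∃ C : ℝ, 1 < C ∧
      ∀ (E : Type u) [NormedAddCommGroup E] [NormedSpace ℝ E] [Nontrivial E] (x₀ : E) (R : ℝ),
        0 < R → ∀ Ω : Set E, IsOpen Ω → Convex ℝ Ω →
          ball x₀ (a * R) ⊆ Ω → Ω ⊆ ball x₀ (A * R) → IsMetricUniformDomain c C Ω := by
  have hA : 0 < A := ha.trans haA
  have hc : a / (4 * A) < 1 := (div_lt_one (by positivity)).2 (by linarith)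
  refine ⟨a / (4 * A), ⟨by positivity, hc⟩, 2, one_lt_two, ?_⟩
  intro E _ _ _ x₀ R hR Ω hopen hconv hin hout
  have haR : 0 < a * R := mul_pos ha hR
  have hfrontier : (frontier Ω).Nonempty :=
    frontier_nonempty_of_isBounded ⟨x₀, hin (mem_ball_self haR)⟩ (isBounded_ball.subset hout)
  rw [← mul_div_mul_right a (4 * A) hR.ne', mul_assoc 4]
  exact isMetricUniformDomain_of_ball_subset_of_subset_ball haR hopen hconv hfrontier hin hout

end UniformDomain

/-- Any open convex set sandwiched between balls `B(x₀,aR) ⊆ Ω ⊆ B(x₀,AR)` is a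
`(c,C)`-uniform domain with constants depending only on `a` and `A`. -/
theorem statement10 (a A : ℝ) (ha : 0 < a) (haA : a < A) :
    ∃ c ∈ Set.Ioo (0:ℝ) 1, ∃ C : ℝ, 1 < C ∧
      ∀ n : ℕ, 1 ≤ n → ∀ (x₀ : En n) (R : ℝ), 0 < R →
        ∀ Ω : Set (En n), IsOpen Ω → Convex ℝ Ω →
          Metric.ball x₀ (a * R) ⊆ Ω → Ω ⊆ Metric.ball x₀ (A * R) →
          IsUniformDomain c C Ω := by
  obtain ⟨c, hc, C, hC, h⟩ := statement10_general.{0} a A ha haA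
  exact ⟨c, hc, C, hC, fun n hn => have : NeZero n := ⟨by lia⟩; h (En n)⟩
end
end

section
/- Let n ≥ 2 and let K ⊊ ℝⁿ be a nonempty closed convex set. Then every connected component Ω of ℝⁿ ∖ K is an inner uniform domain: there exist c ∈ (0,1) and C ∈ (1,∞) such that Ω is (c,C)-inner uniform. -/
open Set Metric MeasureTheory ENNReal

noncomputable section

/-- `γ : [0,1] → Ω` is a `(c,C)`-inner uniform curve in `Ω`. -/
def IsInnerUniformCurve {X : Type*} [PseudoEMetricSpace X] (c C : ℝ) (Ω : Set X)
    (γ : ℝ → X) : Prop :=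
  ContinuousOn γ (Set.Icc 0 1) ∧ Set.MapsTo γ (Set.Icc 0 1) Ω ∧
    curveLength γ ≤ ENNReal.ofReal C * innerDist Ω (γ 0) (γ 1) ∧
    ∀ t ∈ Set.Icc (0:ℝ) 1,
      ENNReal.ofReal c * min (innerDist Ω (γ 0) (γ t)) (innerDist Ω (γ t) (γ 1)) ≤
        EMetric.infEdist (γ t) Ωᶜ

/-- `Ω` is a `(c,C)`-inner uniform domain. -/
def IsInnerUniformDomain {X : Type*} [PseudoEMetricSpace X] (c C : ℝ) (Ω : Set X) : Prop :=
  IsOpen Ω ∧ IsConnected Ω ∧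
    ∀ x ∈ Ω, ∀ y ∈ Ω, ∃ γ : ℝ → X, IsInnerUniformCurve c C Ω γ ∧ γ 0 = x ∧ γ 1 = y

/-!
For `z ∉ K` let `u z` be the unit vector pointing from the nearest point of `K` towards `z`; it
depends continuously on `z`. Let `R` be twice the inner distance from `x` to `y`. Moving `x` and
`y` outwards to `x + R • u x` and `y + R • u y` gains clearance at the speed of the motion, so it
remains to connect these two points at distance at least `R` from `K` by a curve of length
comparable to `R`. If `u x` and `u y` form an angle of at most `120°`, both have inner product at
least `1 / 2` with their sum, so after a translation of length comparable to `R` in the direction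
`u x + u y` the whole segment between the two points lies deep enough in the supporting half space
at `y`. Otherwise, by connectedness, a nearly shortest curve from `x` to `y` contains a point `z`
for which `u z` makes the same angle with `u x` and `u y`, and this angle is at most `120°` because
`u x + u y` is short. Two such detours suffice.
-/

section

open scoped NNReal RealInnerProductSpace

section JoinedByLength

variable {X : Type*} [PseudoEMetricSpace X] {S T : Set X} {p q r : X} {l m : ℝ≥0∞}

/-- `p` and `q` are joined in `S` by a curve of length at most `l`. -/
def JoinedByLength (S : Set X) (p q : X) (l : ℝ≥0∞) : Prop :=
  ∃ γ : ℝ → X, IsCurveIn S p q γ ∧ curveLength γ ≤ l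

theorem JoinedByLength.mono (h : JoinedByLength S p q l) (hST : S ⊆ T) (hlm : l ≤ m) :
    JoinedByLength T p q m := by
  obtain ⟨γ, ⟨hcont, hmaps, hp, hq⟩, hlen⟩ := h
  exact ⟨γ, ⟨hcont, hmaps.mono_right hST, hp, hq⟩, hlen.trans hlm⟩

theorem JoinedByLength.of_Icc {f : ℝ → X} {a b : ℝ} (hab : a ≤ b)
    (hf : ContinuousOn f (Icc a b)) (hS : MapsTo f (Icc a b) S) :
    JoinedByLength S (f a) (f b) (eVariationOn f (Icc a b)) := by
  set φ : ℝ → ℝ := ⇑(AffineMap.lineMap (k := ℝ) a b) with hφ_def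
  have hφ : Monotone φ := fun s t hst ↦ by
    simp only [hφ_def, AffineMap.lineMap_apply_module', smul_eq_mul]
    gcongr
  have hmaps : MapsTo φ (Icc 0 1) (Icc a b) := by
    simpa [hφ_def] using hφ.mapsTo_Icc (a := 0) (b := 1)
  refine ⟨f ∘ φ, ⟨hf.comp ?_ hmaps, hS.comp hmaps, ?_, ?_⟩,
    eVariationOn.comp_le_of_monotoneOn f φ (hφ.monotoneOn _) hmaps⟩
  · exact AffineMap.lineMap_continuous.continuousOn
  · simp [hφ_def]
  · simp [hφ_def]

theorem JoinedByLength.symm (h : JoinedByLength S p q l) : JoinedByLength S q p l := by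
  obtain ⟨γ, ⟨hcont, hmaps, rfl, rfl⟩, hlen⟩ := h
  have hrev : MapsTo (fun t : ℝ ↦ 1 - t) (Icc 0 1) (Icc 0 1) := fun t ht ↦
    ⟨sub_nonneg.2 ht.2, sub_le_self 1 ht.1⟩
  refine ⟨fun t ↦ γ (1 - t), ⟨hcont.comp (by fun_prop) hrev, hmaps.comp hrev, by simp, by simp⟩,
    (eVariationOn.comp_le_of_antitoneOn γ (fun t ↦ 1 - t) ?_ hrev).trans hlen⟩
  exact fun s _ t _ hst ↦ sub_le_sub_left hst 1

theorem JoinedByLength.trans (h : JoinedByLength S p q l) (h' : JoinedByLength S q r m) :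
    JoinedByLength S p r (l + m) := by
  obtain ⟨γ, ⟨hγ, hγS, rfl, rfl⟩, hl⟩ := h
  obtain ⟨δ, ⟨hδ, hδS, hγδ, rfl⟩, hm⟩ := h'
  set f : ℝ → X := fun t ↦ if t ≤ 1 then γ t else δ (t - 1) with hf_def
  have hfγ : EqOn f γ (Icc 0 1) := fun t ht ↦ if_pos ht.2
  have hfδ : EqOn f (δ ∘ fun t ↦ t - 1) (Icc 1 2) := fun t ht ↦ by
    obtain rfl | h1t := ht.1.eq_or_lt
    · simp [hf_def, hγδ]
    · exact if_neg h1t.not_ge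
  have hshift : MapsTo (fun t : ℝ ↦ t - 1) (Icc 1 2) (Icc 0 1) := fun t ht ↦
    ⟨by linarith [ht.1], by linarith [ht.2]⟩
  have hunion : Icc (0 : ℝ) 1 ∪ Icc 1 2 = Icc 0 2 :=
    Icc_union_Icc_eq_Icc zero_le_one one_le_two
  have hcont : ContinuousOn f (Icc 0 2) := hunion ▸ (hγ.congr hfγ).union_of_isClosed
    ((hδ.comp (by fun_prop) hshift).congr hfδ) isClosed_Icc isClosed_Icc
  have hmaps : MapsTo f (Icc 0 2) S := hunion ▸
    (hγS.congr hfγ.symm).union ((hδS.comp hshift).congr hfδ.symm)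
  have hvar : eVariationOn f (Icc 0 2) ≤ l + m := by
    have hadd := eVariationOn.Icc_add_Icc f zero_le_one one_le_two (mem_univ (1 : ℝ))
    simp only [univ_inter] at hadd
    rw [← hadd, eVariationOn.congr hfγ, eVariationOn.congr hfδ]
    refine add_le_add hl ((eVariationOn.comp_le_of_monotoneOn δ _ ?_ hshift).trans hm)
    exact fun s _ t _ hst ↦ sub_le_sub_right hst 1
  have h2 : f 2 = δ 1 := by norm_num [hf_def]
  have h0 : f 0 = γ 0 := if_pos zero_le_one
  simpa only [h0, h2] using (JoinedByLength.of_Icc zero_le_two hcont hmaps).mono subset_rfl hvar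

theorem JoinedByLength.sep_joinedByLength (h : JoinedByLength S p q l) :
    JoinedByLength {z ∈ S | JoinedByLength S p z l} p q l := by
  obtain ⟨γ, ⟨hcont, hmaps, rfl, hq⟩, hlen⟩ := h
  refine ⟨γ, ⟨hcont, fun t ht ↦ ⟨hmaps ht, ?_⟩, rfl, hq⟩, hlen⟩
  have hsub : Icc 0 t ⊆ Icc 0 1 := Icc_subset_Icc_right ht.2
  exact (JoinedByLength.of_Icc ht.1 (hcont.mono hsub) (hmaps.mono_left hsub)).mono subset_rfl
    ((eVariationOn.mono γ hsub).trans hlen)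

theorem JoinedByLength.innerDist_le (h : JoinedByLength S p q l) : innerDist S p q ≤ l := by
  obtain ⟨γ, hγ, hlen⟩ := h
  exact (iInf₂_le γ hγ).trans hlen

theorem joinedByLength_of_innerDist_lt (h : innerDist S p q < l) : JoinedByLength S p q l := by
  simp only [innerDist, iInf_lt_iff] at h
  obtain ⟨γ, hγ, hlen⟩ := h
  exact ⟨γ, hγ, hlen.le⟩

theorem innerDist_le_innerDist_of_joinedByLength {p' q' : X}
    (h : ∀ l, JoinedByLength S p q l → JoinedByLength T p' q' l) :
    innerDist T p' q' ≤ innerDist S p q :=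
  le_of_forall_gt_imp_ge_of_dense fun l hl ↦ (h l (joinedByLength_of_innerDist_lt hl)).innerDist_le

theorem joinedByLength_self (hp : p ∈ S) : JoinedByLength S p p 0 :=
  ⟨fun _ ↦ p, ⟨continuousOn_const, fun _ _ ↦ hp, rfl, rfl⟩,
    (eVariationOn.constant_on (subsingleton_singleton.anti (image_subset_iff.2 fun _ _ ↦ rfl))).le⟩

theorem innerDist_comm_s11 (S : Set X) (p q : X) : innerDist S p q = innerDist S q p :=
  le_antisymm (innerDist_le_innerDist_of_joinedByLength fun _ h ↦ h.symm)
    (innerDist_le_innerDist_of_joinedByLength fun _ h ↦ h.symm)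

theorem edist_le_innerDist_s11 (S : Set X) (p q : X) : edist p q ≤ innerDist S p q := by
  refine le_iInf₂ fun γ ⟨_, _, hp, hq⟩ ↦ ?_
  rw [← hp, ← hq]
  exact eVariationOn.edist_le γ (left_mem_Icc.2 zero_le_one) (right_mem_Icc.2 zero_le_one)

end JoinedByLength

section InnerCigar

variable {X : Type*} [PseudoEMetricSpace X] {S : Set X} {x y z : X} {c : ℝ}

/-- The points `z` of `S` whose distance to the complement is at least `c` times the smaller of the
inner distances from `z` to `x` and `y`; the inner uniform curves from `x` to `y` run inside it. -/
def innerCigar (c : ℝ) (S : Set X) (x y : X) : Set X :=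
  {z ∈ S | ENNReal.ofReal c * min (innerDist S x z) (innerDist S z y) ≤ infEDist z Sᶜ}

theorem innerCigar_comm (c : ℝ) (S : Set X) (x y : X) :
    innerCigar c S x y = innerCigar c S y x := by
  ext z
  simp only [innerCigar, mem_ofPred_eq, innerDist_comm_s11 S x z, innerDist_comm_s11 S z y, min_comm]

theorem mem_innerCigar_of_joinedByLength {l : ℝ≥0∞} (hz : z ∈ S) (hl : JoinedByLength S x z l)
    (hlz : ENNReal.ofReal c * l ≤ infEDist z Sᶜ) : z ∈ innerCigar c S x y :=
  ⟨hz, (mul_le_mul_right ((min_le_left _ _).trans hl.innerDist_le) _).trans hlz⟩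

theorem left_mem_innerCigar (hx : x ∈ S) : x ∈ innerCigar c S x y :=
  mem_innerCigar_of_joinedByLength hx (joinedByLength_self hx) (by simp)

end InnerCigar

section NormedSpace

variable {E : Type*} [NormedAddCommGroup E] [NormedSpace ℝ E] {S U : Set E} {p q x y : E}

theorem JoinedByLength.of_segment_subset {l : ℝ≥0} (hS : segment ℝ p q ⊆ S) (hl : dist p q ≤ l) :
    JoinedByLength S p q l := by
  set γ : ℝ → E := ⇑(AffineMap.lineMap (k := ℝ) p q) with hγ
  have hLip : LipschitzWith (nndist p q) γ := lipschitzWith_lineMap p q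
  refine ⟨γ, ⟨hLip.continuous.continuousOn, fun t ht ↦ hS ?_, by simp [hγ], by simp [hγ]⟩, ?_⟩
  · exact segment_eq_image_lineMap ℝ p q ▸ mem_image_of_mem γ ht
  calc curveLength γ
      ≤ nndist p q * eVariationOn (id : ℝ → ℝ) (Icc 0 1) :=
        hLip.lipschitzOnWith.comp_eVariationOn_le (mapsTo_id (Icc 0 1))
    _ = nndist p q := by
        have hvar := (monotone_id.monotoneOn (Icc (0 : ℝ) 1)).eVariationOn_eq
          (left_mem_Icc.2 zero_le_one) (right_mem_Icc.2 zero_le_one)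
        rw [inter_self] at hvar
        simp [hvar]
    _ ≤ l := ENNReal.coe_le_coe.2 hl

theorem innerDist_ne_top (hU : IsOpen U) (hconn : IsPreconnected U) (hx : x ∈ U) (hy : y ∈ U) :
    innerDist U x y ≠ ⊤ := by
  let P : E → E → Prop := fun p q ↦ ∃ l : ℝ≥0, JoinedByLength U p q l
  suffices P x y by
    obtain ⟨l, hl⟩ := this
    exact ne_top_of_le_ne_top ENNReal.coe_ne_top hl.innerDist_le
  refine hconn.induction₂' P (fun p hp ↦ ?_) ?_ hx hy
  · obtain ⟨ε, hε, hball⟩ := Metric.isOpen_iff.1 hU p hp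
    filter_upwards [mem_nhdsWithin_of_mem_nhds (ball_mem_nhds p hε)] with q hq
    have hpq : JoinedByLength U p q (nndist p q) := .of_segment_subset
      (((convex_ball p ε).segment_subset (mem_ball_self hε) hq).trans hball) le_rfl
    exact ⟨⟨_, hpq⟩, _, hpq.symm⟩
  · rintro p q r - - - ⟨l, hl⟩ ⟨m, hm⟩
    exact ⟨l + m, by simpa using hl.trans hm⟩

end NormedSpace

section ConnectedComponentIn

variable {X : Type*} [PseudoEMetricSpace X] {U : Set X} {o p q : X}

theorem IsCurveIn.connectedComponentIn {γ : ℝ → X} (hγ : IsCurveIn U p q γ)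
    (hp : p ∈ connectedComponentIn U o) : IsCurveIn (connectedComponentIn U o) p q γ := by
  obtain ⟨hcont, hmaps, rfl, hq⟩ := hγ
  refine ⟨hcont, mapsTo_iff_image_subset.2 ?_, rfl, hq⟩
  rw [connectedComponentIn_eq hp]
  exact (isPreconnected_Icc.image γ hcont).subset_connectedComponentIn
    (mem_image_of_mem γ (left_mem_Icc.2 zero_le_one)) hmaps.image_subset

theorem JoinedByLength.connectedComponentIn {l : ℝ≥0∞} (h : JoinedByLength U p q l)
    (hp : p ∈ connectedComponentIn U o) : JoinedByLength (connectedComponentIn U o) p q l := by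
  obtain ⟨γ, hγ, hlen⟩ := h
  exact ⟨γ, hγ.connectedComponentIn hp, hlen⟩

theorem innerDist_connectedComponentIn (hp : p ∈ connectedComponentIn U o) (q : X) :
    innerDist (connectedComponentIn U o) p q = innerDist U p q :=
  le_antisymm (innerDist_le_innerDist_of_joinedByLength fun _ h ↦ h.connectedComponentIn hp)
    (innerDist_le_innerDist_of_joinedByLength fun _ h ↦
      h.mono (connectedComponentIn_subset U o) le_rfl)

variable {E : Type*} [NormedAddCommGroup E] [NormedSpace ℝ E] {U : Set E} {o x y z : E}

theorem infEDist_compl_le_infEDist_compl_connectedComponentIn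
    (hz : z ∈ connectedComponentIn U o) :
    infEDist z Uᶜ ≤ infEDist z (connectedComponentIn U o)ᶜ := by
  refine le_infEDist.2 fun w hw ↦ le_of_not_gt fun hlt ↦ hw ?_
  have hball : eball z (infEDist z Uᶜ) ⊆ U := fun v hv ↦ by
    by_contra hvU
    exact (infEDist_le_edist_of_mem (s := Uᶜ) hvU).not_gt (mem_eball'.1 hv)
  rw [connectedComponentIn_eq hz]
  exact isPreconnected_eball.subset_connectedComponentIn
    (mem_eball_self (bot_le.trans_lt hlt)) hball (by rwa [mem_eball'])

theorem innerCigar_inter_connectedComponentIn_subset {c : ℝ}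
    (hx : x ∈ connectedComponentIn U o) :
    innerCigar c U x y ∩ connectedComponentIn U o ⊆
      innerCigar c (connectedComponentIn U o) x y := by
  rintro z ⟨⟨-, hzc⟩, hz⟩
  refine ⟨hz, ?_⟩
  rw [innerDist_connectedComponentIn hx, innerDist_connectedComponentIn hz]
  exact hzc.trans (infEDist_compl_le_infEDist_compl_connectedComponentIn hz)

theorem isInnerUniformDomain_connectedComponentIn {c C : ℝ} (hU : IsOpen U) (ho : o ∈ U)
    (h : ∀ x ∈ connectedComponentIn U o, ∀ y ∈ connectedComponentIn U o,
      JoinedByLength (innerCigar c U x y) x y (ENNReal.ofReal C * innerDist U x y)) :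
    IsInnerUniformDomain c C (connectedComponentIn U o) := by
  refine ⟨hU.connectedComponentIn, isConnected_connectedComponentIn_iff.2 ho, fun x hx y hy ↦ ?_⟩
  obtain ⟨γ, hγ, hlen⟩ := h x hx y hy
  have hmaps : MapsTo γ (Icc 0 1) (innerCigar c (connectedComponentIn U o) x y) := fun t ht ↦ by
    have hγU : IsCurveIn U x y γ := ⟨hγ.1, fun s hs ↦ (hγ.2.1 hs).1, hγ.2.2⟩
    exact innerCigar_inter_connectedComponentIn_subset hx
      ⟨hγ.2.1 ht, (hγU.connectedComponentIn hx).2.1 ht⟩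
  obtain ⟨hcont, -, rfl, rfl⟩ := hγ
  rw [← innerDist_connectedComponentIn hx] at hlen
  exact ⟨γ, ⟨hcont, fun t ht ↦ (hmaps ht).1, hlen, fun t ht ↦ (hmaps ht).2⟩, rfl, rfl⟩

end ConnectedComponentIn

section InnerProductSpace

variable {E : Type*} [NormedAddCommGroup E] [InnerProductSpace ℝ E] {K : Set E}

/-- The points lying at depth at least `r` beyond `K` in the direction `a`: an intersection of half
spaces with normal `a`. -/
def farHalfSpace (K : Set E) (a : E) (r : ℝ) : Set E :=
  {z | ∀ k ∈ K, r ≤ ⟪a, z - k⟫}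

section FarHalfSpace

variable {a b p q z v : E} {r s : ℝ}

theorem convex_farHalfSpace (K : Set E) (a : E) (r : ℝ) : Convex ℝ (farHalfSpace K a r) := by
  intro p hp q hq s t hs ht hst k hk
  have hsplit : s • p + t • q - k = s • (p - k) + t • (q - k) := by
    rw [smul_sub, smul_sub, sub_add_sub_comm, ← add_smul, hst, one_smul]
  rw [hsplit, inner_add_right, real_inner_smul_right, real_inner_smul_right]
  calc r = s * r + t * r := by rw [← add_mul, hst, one_mul]
    _ ≤ s * ⟪a, p - k⟫ + t * ⟪a, q - k⟫ := by gcongr <;> solve_by_elim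

theorem add_mem_farHalfSpace (hz : z ∈ farHalfSpace K a r) (hs : s ≤ r + ⟪a, v⟫) :
    z + v ∈ farHalfSpace K a s := fun k hk ↦ by
  rw [add_sub_right_comm, inner_add_right]
  linarith [hz k hk]

theorem farHalfSpace_subset_compl_thickening (ha : ‖a‖ = 1) :
    farHalfSpace K a r ⊆ (thickening r K)ᶜ := fun z hz hmem ↦ by
  obtain ⟨k, hk, hlt⟩ := mem_thickening_iff.1 hmem
  have hle := (hz k hk).trans (real_inner_le_norm a (z - k))
  rw [ha, one_mul, ← dist_eq_norm] at hle
  exact hle.not_gt hlt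

theorem joinedByLength_compl_thickening_of_mem_farHalfSpace (ha : ‖a‖ = 1)
    (hp : p ∈ farHalfSpace K a r) (hq : q ∈ farHalfSpace K a r) {l : ℝ≥0} (hl : dist p q ≤ l) :
    JoinedByLength (thickening r K)ᶜ p q l :=
  .of_segment_subset (((convex_farHalfSpace K a r).segment_subset hp hq).trans
    (farHalfSpace_subset_compl_thickening ha)) hl

theorem joinedByLength_compl_thickening_of_neg_half_le_inner (ha : ‖a‖ = 1) (hb : ‖b‖ = 1)
    (hab : -1 / 2 ≤ ⟪a, b⟫) (hp : p ∈ farHalfSpace K a r) (hq : q ∈ farHalfSpace K b r)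
    {d : ℝ≥0} (hpq : dist p q ≤ d) :
    JoinedByLength (thickening r K)ᶜ p q (9 * d) := by
  -- Translating by `w` gains depth `d` in both directions, which pays for the passage from `q` to
  -- `p` in the half space of `b`.
  set w : E := (2 * d : ℝ) • (a + b) with hw
  have haw : d ≤ ⟪a, w⟫ := by
    rw [hw, real_inner_smul_right, inner_add_right, real_inner_self_eq_norm_sq, ha]
    nlinarith [d.coe_nonneg]
  have hbw : d ≤ ⟪b, w⟫ := by
    rw [hw, real_inner_smul_right, inner_add_right, real_inner_self_eq_norm_sq, hb,
      real_inner_comm]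
    nlinarith [d.coe_nonneg]
  have hw_norm : ‖w‖ ≤ (4 * d : ℝ≥0) := by
    have hab_norm : ‖a + b‖ ≤ 2 := by linarith [norm_add_le a b]
    rw [hw, norm_smul, Real.norm_of_nonneg (by positivity)]
    push_cast
    nlinarith [d.coe_nonneg]
  have hpw : p + w ∈ farHalfSpace K a r := add_mem_farHalfSpace hp (by linarith [d.coe_nonneg])
  have hqw : q + w ∈ farHalfSpace K b r := add_mem_farHalfSpace hq (by linarith [d.coe_nonneg])
  have hpw' : p + w ∈ farHalfSpace K b r := by
    have hbpq : -d ≤ ⟪b, p - q⟫ := by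
      have hle := (abs_real_inner_le_norm b (p - q)).trans_eq (by rw [hb, one_mul, ← dist_eq_norm])
      linarith [neg_abs_le ⟪b, p - q⟫]
    have hsum : p + w = q + (p - q + w) := by abel
    rw [hsum]
    exact add_mem_farHalfSpace hq (by rw [inner_add_right]; linarith)
  have houtward : JoinedByLength (thickening r K)ᶜ p (p + w) (4 * d : ℝ≥0) :=
    joinedByLength_compl_thickening_of_mem_farHalfSpace ha hp hpw (by simpa using hw_norm)
  have hacross : JoinedByLength (thickening r K)ᶜ (p + w) (q + w) d :=
    joinedByLength_compl_thickening_of_mem_farHalfSpace hb hpw' hqw (by simpa using hpq)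
  have hinward : JoinedByLength (thickening r K)ᶜ (q + w) q (4 * d : ℝ≥0) :=
    joinedByLength_compl_thickening_of_mem_farHalfSpace hb hqw hq (by simpa using hw_norm)
  refine ((houtward.trans hacross).trans hinward).mono subset_rfl (le_of_eq ?_)
  push_cast
  ring

end FarHalfSpace

/-- `a` is a unit vector and `K` lies strictly behind the hyperplane through `z` orthogonal to
`a`. -/
structure IsSeparatingNormal (K : Set E) (z a : E) : Prop where
  norm_eq_one : ‖a‖ = 1
  inner_pos : ∀ k ∈ K, 0 < ⟪a, z - k⟫

namespace IsSeparatingNormal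

variable {a b x y z : E}

theorem add_smul_mem_farHalfSpace (h : IsSeparatingNormal K z a) (r : ℝ) :
    z + r • a ∈ farHalfSpace K a r := by
  have hz : z ∈ farHalfSpace K a 0 := fun k hk ↦ (h.inner_pos k hk).le
  refine add_mem_farHalfSpace hz ?_
  simp [real_inner_smul_right, h.norm_eq_one]

theorem add_smul_notMem (h : IsSeparatingNormal K z a) {r : ℝ} (hr : 0 ≤ r) : z + r • a ∉ K :=
  fun hk ↦ by
    have hpos := h.inner_pos _ hk
    simp only [sub_add_cancel_left, inner_neg_right, real_inner_smul_right,
      real_inner_self_eq_norm_sq, h.norm_eq_one] at hpos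
    linarith

theorem joinedByLength_add_smul (h : IsSeparatingNormal K z a) (r : ℝ≥0) :
    JoinedByLength {w | ∃ s : ℝ≥0, z + (s : ℝ) • a = w} z (z + (r : ℝ) • a) r := by
  refine .of_segment_subset ?_ ?_
  · rw [segment_eq_image']
    rintro _ ⟨θ, ⟨hθ, -⟩, rfl⟩
    lift θ to ℝ≥0 using hθ
    exact ⟨θ * r, by simp [smul_smul]⟩
  · simp [norm_smul, h.norm_eq_one]

theorem joinedByLength_compl (h : IsSeparatingNormal K z a) (r : ℝ≥0) :
    JoinedByLength Kᶜ z (z + (r : ℝ) • a) r := by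
  refine (h.joinedByLength_add_smul r).mono ?_ le_rfl
  rintro _ ⟨s, rfl⟩
  exact h.add_smul_notMem s.coe_nonneg

theorem joinedByLength_innerCigar (h : IsSeparatingNormal K x a) {c : ℝ} (hc : c ≤ 1) (r : ℝ≥0) :
    JoinedByLength (innerCigar c Kᶜ x y) x (x + (r : ℝ) • a) r := by
  refine (h.joinedByLength_add_smul r).mono ?_ le_rfl
  rintro _ ⟨s, rfl⟩
  refine mem_innerCigar_of_joinedByLength (h.add_smul_notMem s.coe_nonneg)
    (h.joinedByLength_compl s) ?_
  have hfar : x + (s : ℝ) • a ∈ (thickening s K)ᶜ :=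
    farHalfSpace_subset_compl_thickening h.norm_eq_one (h.add_smul_mem_farHalfSpace s)
  rw [mem_compl_iff, mem_thickening_iff_infEDist_lt, not_lt, ENNReal.ofReal_coe_nnreal] at hfar
  rw [compl_compl]
  exact (mul_le_of_le_one_left' (ENNReal.ofReal_le_one.2 hc)).trans hfar

theorem joinedByLength_compl_thickening (hx : IsSeparatingNormal K x a)
    (hy : IsSeparatingNormal K y b) (hab : -1 / 2 ≤ ⟪a, b⟫) {r : ℝ≥0} (hxy : dist x y ≤ r) :
    JoinedByLength (thickening r K)ᶜ (x + (r : ℝ) • a) (y + (r : ℝ) • b) (9 * (3 * r : ℝ≥0)) := by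
  refine joinedByLength_compl_thickening_of_neg_half_le_inner hx.norm_eq_one hy.norm_eq_one hab
    (hx.add_smul_mem_farHalfSpace r) (hy.add_smul_mem_farHalfSpace r) ?_
  have norm_smul_eq {v : E} (hv : ‖v‖ = 1) : ‖(r : ℝ) • v‖ = r := by simp [norm_smul, hv]
  calc dist (x + (r : ℝ) • a) (y + (r : ℝ) • b)
      ≤ dist x y + dist ((r : ℝ) • a) ((r : ℝ) • b) := dist_add_add_le _ _ _ _
    _ ≤ r + (r + r) := by
        gcongr
        exact (dist_le_norm_add_norm _ _).trans_eq
          (congrArg₂ _ (norm_smul_eq hx.norm_eq_one) (norm_smul_eq hy.norm_eq_one))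
    _ = (3 * r : ℝ≥0) := by
        push_cast
        ring

end IsSeparatingNormal

theorem exists_lipschitzWith_one_inner_sub_le_zero (hne : K.Nonempty) (hK : IsComplete K)
    (hconv : Convex ℝ K) : ∃ P : E → E, LipschitzWith 1 P ∧
      ∀ x, P x ∈ K ∧ ∀ k ∈ K, ⟪x - P x, k - P x⟫ ≤ 0 := by
  choose P hPK hPmin using exists_norm_eq_iInf_of_complete_convex hne hK hconv
  have hP : ∀ x, ∀ k ∈ K, ⟪x - P x, k - P x⟫ ≤ 0 := fun x ↦
    (norm_eq_iInf_iff_real_inner_le_zero hconv (hPK x)).1 (hPmin x)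
  refine ⟨P, LipschitzWith.of_dist_le_mul fun x y ↦ ?_, fun x ↦ ⟨hPK x, hP x⟩⟩
  rw [NNReal.coe_one, one_mul, dist_eq_norm, dist_eq_norm]
  have hsq : ‖P x - P y‖ * ‖P x - P y‖ ≤ ‖x - y‖ * ‖P x - P y‖ := calc
    ‖P x - P y‖ * ‖P x - P y‖
      = ⟪x - y, P x - P y⟫ + ⟪x - P x, P y - P x⟫ + ⟪y - P y, P x - P y⟫ := by
        rw [← real_inner_self_eq_norm_mul_norm]
        simp only [inner_sub_left, inner_sub_right]
        ring
    _ ≤ ⟪x - y, P x - P y⟫ := by linarith [hP x (P y) (hPK y), hP y (P x) (hPK x)]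
    _ ≤ ‖x - y‖ * ‖P x - P y‖ := real_inner_le_norm _ _
  obtain h0 | hpos := (norm_nonneg (P x - P y)).eq_or_lt
  · exact h0 ▸ norm_nonneg _
  · exact le_of_mul_le_mul_right hsq hpos

theorem exists_continuousOn_isSeparatingNormal (hne : K.Nonempty) (hK : IsComplete K)
    (hconv : Convex ℝ K) :
    ∃ u : E → E, ContinuousOn u Kᶜ ∧ ∀ z ∈ Kᶜ, IsSeparatingNormal K z (u z) := by
  obtain ⟨P, hPlip, hP⟩ := exists_lipschitzWith_one_inner_sub_le_zero hne hK hconv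
  have hPcont : Continuous P := hPlip.continuous
  have hpos : ∀ z ∈ Kᶜ, 0 < ‖z - P z‖ := fun z hz ↦
    norm_pos_iff.2 (sub_ne_zero.2 fun h ↦ hz (h ▸ (hP z).1))
  refine ⟨fun z ↦ ‖z - P z‖⁻¹ • (z - P z), ?_, fun z hz ↦ ⟨?_, fun k hk ↦ ?_⟩⟩
  · exact ContinuousOn.smul (ContinuousOn.inv₀ (by fun_prop) fun z hz ↦ (hpos z hz).ne')
      (by fun_prop)
  · rw [norm_smul, norm_inv, norm_norm, inv_mul_cancel₀ (hpos z hz).ne']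
  · rw [real_inner_smul_left]
    refine _root_.mul_pos (inv_pos.2 (hpos z hz)) ?_
    calc 0 < ‖z - P z‖ * ‖z - P z‖ := _root_.mul_pos (hpos z hz) (hpos z hz)
      _ ≤ ‖z - P z‖ * ‖z - P z‖ - ⟪z - P z, k - P z⟫ := by linarith [(hP z).2 k hk]
      _ = ⟪z - P z, z - k⟫ := by
        rw [← real_inner_self_eq_norm_mul_norm, ← inner_sub_right, sub_sub_sub_cancel_right]

theorem exists_mem_inner_ge_neg_half_of_isPreconnected {S : Set E} (hS : IsPreconnected S)
    (hnorm : ∀ v ∈ S, ‖v‖ = 1) {a b : E} (ha : a ∈ S) (hb : b ∈ S) :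
    ∃ v ∈ S, -1 / 2 ≤ ⟪a, v⟫ ∧ -1 / 2 ≤ ⟪v, b⟫ := by
  have inner_self {v : E} (hv : v ∈ S) : ⟪v, v⟫ = 1 := by
    rw [real_inner_self_eq_norm_sq, hnorm v hv, one_pow]
  obtain hab | hab := le_or_gt (-1 / 2) ⟪a, b⟫
  · exact ⟨a, ha, (by norm_num : (-1 / 2 : ℝ) ≤ 1).trans_eq (inner_self ha).symm, hab⟩
  obtain ⟨v, hv, hvab⟩ : ∃ v ∈ S, ⟪v, a - b⟫ = 0 := by
    refine hS.intermediate_value hb ha (f := fun v ↦ ⟪v, a - b⟫) (by fun_prop) ⟨?_, ?_⟩ <;>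
      rw [inner_sub_right, inner_self ‹_›] <;> linarith [real_inner_comm a b]
  -- `⟪v, a⟫ = ⟪v, b⟫` is half of `⟪v, a + b⟫`, and `‖a + b‖² = 2 + 2 ⟪a, b⟫ < 1`.
  have hsum_norm : ‖a + b‖ ≤ 1 := by
    refine (sq_le_one_iff₀ (norm_nonneg _)).1 ?_
    rw [norm_add_sq_real, hnorm a ha, hnorm b hb]
    linarith
  have hsum : -1 ≤ ⟪v, a + b⟫ := by
    have habs := abs_real_inner_le_norm v (a + b)
    rw [hnorm v hv, one_mul] at habs
    linarith [neg_abs_le ⟪v, a + b⟫]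
  rw [inner_sub_right] at hvab
  rw [inner_add_right] at hsum
  exact ⟨v, hv, by rw [real_inner_comm]; linarith, by linarith⟩

theorem JoinedByLength.compl_thickening_add_smul {u : E → E} (hu : ContinuousOn u Kᶜ)
    (hnormal : ∀ z ∈ Kᶜ, IsSeparatingNormal K z (u z)) {x y : E} {R : ℝ≥0}
    (h : JoinedByLength Kᶜ x y R) :
    JoinedByLength (thickening R K)ᶜ (x + (R : ℝ) • u x) (y + (R : ℝ) • u y) (54 * R) := by
  obtain ⟨γ, ⟨hcont, hmaps, rfl, rfl⟩, hlen⟩ := h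
  have hstart : (0 : ℝ) ∈ Icc (0 : ℝ) 1 := left_mem_Icc.2 zero_le_one
  have hend : (1 : ℝ) ∈ Icc (0 : ℝ) 1 := right_mem_Icc.2 zero_le_one
  have hnormals : IsPreconnected ((u ∘ γ) '' Icc 0 1) :=
    isPreconnected_Icc.image _ (hu.comp hcont hmaps)
  obtain ⟨_, ⟨t, ht, rfl⟩, ht0, ht1⟩ := exists_mem_inner_ge_neg_half_of_isPreconnected hnormals
    (forall_mem_image.2 fun s hs ↦ (hnormal _ (hmaps hs)).norm_eq_one)
    (mem_image_of_mem _ hstart) (mem_image_of_mem _ hend)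
  have hop : ∀ s ∈ Icc (0 : ℝ) 1, ∀ s' ∈ Icc (0 : ℝ) 1, -1 / 2 ≤ ⟪u (γ s), u (γ s')⟫ →
      JoinedByLength (thickening R K)ᶜ (γ s + (R : ℝ) • u (γ s)) (γ s' + (R : ℝ) • u (γ s'))
        (9 * (3 * R : ℝ≥0)) := fun s hs s' hs' hangle ↦ by
    have hdist : dist (γ s) (γ s') ≤ R :=
      edist_le_coe.1 ((eVariationOn.edist_le γ hs hs').trans hlen)
    exact (hnormal _ (hmaps hs)).joinedByLength_compl_thickening (hnormal _ (hmaps hs')) hangle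
      hdist
  refine ((hop 0 hstart t ht ht0).trans (hop t ht 1 hend ht1)).mono subset_rfl (le_of_eq ?_)
  push_cast
  ring

theorem JoinedByLength.innerCigar_compl (hne : K.Nonempty) (hK : IsComplete K)
    (hconv : Convex ℝ K) {x y : E} {R : ℝ≥0} (hR : 0 < R) (h : JoinedByLength Kᶜ x y R) :
    JoinedByLength (innerCigar (1 / 55) Kᶜ x y) x y (56 * R) := by
  obtain ⟨u, hu, hnormal⟩ := exists_continuousOn_isSeparatingNormal hne hK hconv
  obtain ⟨hx, hy⟩ : x ∈ Kᶜ ∧ y ∈ Kᶜ := by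
    obtain ⟨γ, ⟨-, hmaps, rfl, rfl⟩, -⟩ := h
    exact ⟨hmaps (left_mem_Icc.2 zero_le_one), hmaps (right_mem_Icc.2 zero_le_one)⟩
  have houtward : JoinedByLength (innerCigar (1 / 55) Kᶜ x y) x (x + (R : ℝ) • u x) R :=
    (hnormal x hx).joinedByLength_innerCigar (by norm_num) R
  have hinward : JoinedByLength (innerCigar (1 / 55) Kᶜ x y) (y + (R : ℝ) • u y) y R :=
    innerCigar_comm (1 / 55) Kᶜ y x ▸
      ((hnormal y hy).joinedByLength_innerCigar (by norm_num) R).symm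
  have hdetour : JoinedByLength (innerCigar (1 / 55) Kᶜ x y)
      (x + (R : ℝ) • u x) (y + (R : ℝ) • u y) (54 * R) := by
    refine (h.compl_thickening_add_smul hu hnormal).sep_joinedByLength.mono ?_ le_rfl
    rintro z ⟨hz, hjoin⟩
    have hsub : (thickening R K)ᶜ ⊆ Kᶜ := compl_subset_compl.2 (self_subset_thickening hR K)
    refine mem_innerCigar_of_joinedByLength (hsub hz)
      (((hnormal x hx).joinedByLength_compl R).trans (hjoin.mono hsub le_rfl)) ?_
    rw [mem_compl_iff, mem_thickening_iff_infEDist_lt, not_lt, ENNReal.ofReal_coe_nnreal] at hz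
    rw [compl_compl]
    calc ENNReal.ofReal (1 / 55) * (R + 54 * R)
        = 55⁻¹ * (55 * R) := by
          rw [one_div, ENNReal.ofReal_inv_of_pos (by norm_num), ENNReal.ofReal_ofNat]
          ring
      _ = R := ENNReal.inv_mul_cancel_left (by norm_num) (by norm_num)
      _ ≤ infEDist z K := hz
  refine ((houtward.trans hdetour).trans hinward).mono subset_rfl (le_of_eq ?_)
  ring

theorem statement11_general (hne : K.Nonempty) (hK : IsComplete K) (hconv : Convex ℝ K) {o : E}
    (ho : o ∈ Kᶜ) : IsInnerUniformDomain (1 / 55) 112 (connectedComponentIn Kᶜ o) := by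
  have hopen : IsOpen Kᶜ := hK.isClosed.isOpen_compl
  refine isInnerUniformDomain_connectedComponentIn hopen ho fun x hx y hy ↦ ?_
  obtain rfl | hxy := eq_or_ne x y
  · exact (joinedByLength_self (left_mem_innerCigar (connectedComponentIn_subset _ _ hx))).mono
      subset_rfl bot_le
  have hfinite : innerDist Kᶜ x y ≠ ⊤ := innerDist_connectedComponentIn hx y ▸
    innerDist_ne_top hopen.connectedComponentIn isPreconnected_connectedComponentIn hx hy
  have hpos : 0 < innerDist Kᶜ x y := (edist_pos.2 hxy).trans_le (edist_le_innerDist_s11 _ _ _)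
  lift innerDist Kᶜ x y to ℝ≥0 using hfinite with D hD
  have hD_pos : 0 < D := ENNReal.coe_pos.1 hpos
  have hjoin : JoinedByLength Kᶜ x y (2 * D : ℝ≥0) := by
    refine joinedByLength_of_innerDist_lt ?_
    rw [← hD, ENNReal.coe_lt_coe]
    exact lt_mul_of_one_lt_left hD_pos one_lt_two
  refine (hjoin.innerCigar_compl hne hK hconv (by positivity)).mono subset_rfl (le_of_eq ?_)
  rw [ENNReal.ofReal_ofNat]
  push_cast
  ring

end InnerProductSpace

end

/-- Every connected component of the complement of a nonempty proper closed convex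
subset of `ℝⁿ`, `n ≥ 2`, is an inner uniform domain. -/
theorem statement11 (n : ℕ) (hn : 2 ≤ n) (K : Set (En n)) (hKne : K.Nonempty)
    (hKclosed : IsClosed K) (hKconv : Convex ℝ K) (hKproper : K ≠ Set.univ) :
    ∀ x ∈ Kᶜ, ∃ c ∈ Set.Ioo (0:ℝ) 1, ∃ C : ℝ, 1 < C ∧
      IsInnerUniformDomain c C (connectedComponentIn Kᶜ x) := by
  intro x hx
  exact ⟨1 / 55, by norm_num, 112, by norm_num,
    statement11_general hKne hKclosed.isComplete hKconv hx⟩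
end
end
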